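/- The sum of all cyclic numbers ≤ x is asymptotically equivalent to x² / (2 · e^γ · log log log x) as x → ∞, where γ is the Euler–Mascheroni constant. -/

import Mathlib

open Filter Asymptotics Real

/-- A positive integer `n` is *cyclic* if `gcd(n, φ(n)) = 1`. -/
def IsCyclicNum (n : ℕ) : Prop := 0 < n ∧ Nat.gcd n (Nat.totient n) = 1

instance : DecidablePred IsCyclicNum := fun n =>
  decidable_of_iff (0 < n ∧ Nat.gcd n (Nat.totient n) = 1) Iff.rfl

/-- The `n`-th cyclic number, indexed from 1: `cyclicNum 1 = 1`, `cyclicNum 2 = 2`, .... -/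
noncomputable def cyclicNum (n : ℕ) : ℕ := Nat.nth IsCyclicNum (n - 1)

/-- The number of cyclic numbers less than or equal to the real number `x`. -/
noncomputable def cyclicCount (x : ℝ) : ℕ :=
  ((Finset.range (⌊x⌋₊ + 1)).filter IsCyclicNum).card

/-- The sum of all cyclic numbers `≤ x`. -/
noncomputable def cyclicSum (x : ℝ) : ℝ :=
  ∑ n ∈ (Finset.range (⌊x⌋₊ + 1)).filter IsCyclicNum, (n : ℝ)

namespace CycNum
open Finset ArithmeticFunction in
/-- Ramanujan sum for our purposes -/
noncomputable def rs (d n : ℕ) : ℝ :=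
  ∑ e ∈ d.divisors, (ArithmeticFunction.moebius (d / e) : ℝ) * e * (if e ∣ n then 1 else 0)

open Finset in
lemma moebius_sum_dvd (d g : ℕ) (hd : d ≠ 0) :
    ∑ e ∈ d.divisors, (if g ∣ e then (ArithmeticFunction.moebius (d / e) : ℝ) else 0)
      = if g = d then 1 else 0 := by
  by_cases hg : g ∣ d
  · obtain ⟨k, rfl⟩ := hg
    have hg0 : g ≠ 0 := by rintro rfl; simp at hd
    have hk0 : k ≠ 0 := by rintro rfl; simp at hd
    have h1 : ∑ e ∈ k.divisors, (ArithmeticFunction.moebius (k / e) : ℝ) = if k = 1 then 1 else 0 := by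
      have h := Nat.sum_div_divisors k (fun x => (ArithmeticFunction.moebius x : ℝ))
      rw [h]
      have := congrArg (fun f => (f k : ℝ)) (ArithmeticFunction.coe_moebius_mul_coe_zeta (R := ℝ))
      simp only [ArithmeticFunction.coe_mul_zeta_apply, ArithmeticFunction.one_apply] at this
      simpa using this
    rw [← sum_filter]
    have h2 : (g * k).divisors.filter (fun e => g ∣ e) = k.divisors.image (fun e => g * e) := by
      ext e
      simp only [mem_filter, Nat.mem_divisors, mem_image]
      constructor
      · rintro ⟨⟨h, _⟩, ⟨f, rfl⟩⟩
        exact ⟨f, ⟨Nat.dvd_of_mul_dvd_mul_left (Nat.pos_of_ne_zero hg0) h, hk0⟩, rfl⟩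
      · rintro ⟨f, ⟨h, _⟩, rfl⟩
        exact ⟨⟨Nat.mul_dvd_mul_left g h, hd⟩, dvd_mul_right _ _⟩
    rw [h2, sum_image (by intro a _ b _ h; exact Nat.eq_of_mul_eq_mul_left (Nat.pos_of_ne_zero hg0) h)]
    simp only [Nat.mul_div_mul_left _ _ (Nat.pos_of_ne_zero hg0)]
    rw [h1]
    congr 1
    simp [hg0]
  · rw [if_neg (by rintro rfl; exact hg dvd_rfl)]
    apply sum_eq_zero
    intro e he
    rw [if_neg]
    intro h
    exact hg (h.trans (Nat.dvd_of_mem_divisors he))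

open Finset in
lemma moebius_gcd_sum (d d' : ℕ) (hd : d ≠ 0) (hd' : d' ≠ 0) :
    ∑ e ∈ d.divisors, ∑ e' ∈ d'.divisors, (ArithmeticFunction.moebius (d / e) : ℝ) *
      (ArithmeticFunction.moebius (d' / e') : ℝ) * (Nat.gcd e e' : ℝ)
      = if d = d' then (Nat.totient d : ℝ) else 0 := by
  have hg : ∀ e ∈ d.divisors, ∀ e' ∈ d'.divisors, (Nat.gcd e e' : ℝ) =
      ∑ g ∈ d.divisors, (if g ∣ e then 1 else 0) * (if g ∣ e' then 1 else 0) * (Nat.totient g : ℝ) := by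
    intro e he e' he'
    have : (Nat.gcd e e' : ℝ) = ∑ g ∈ (Nat.gcd e e').divisors, (Nat.totient g : ℝ) := by
      exact_mod_cast (Nat.sum_totient (Nat.gcd e e')).symm
    rw [this]
    have h2 : (Nat.gcd e e').divisors = d.divisors.filter (fun g => g ∣ e ∧ g ∣ e') := by
      ext g
      simp only [Nat.mem_divisors, mem_filter, Nat.dvd_gcd_iff]
      have he0 : e ≠ 0 := (Nat.pos_of_mem_divisors he).ne'
      have := Nat.dvd_of_mem_divisors he
      constructor
      · rintro ⟨⟨h1, h2⟩, _⟩
        exact ⟨⟨h1.trans this, hd⟩, h1, h2⟩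
      · rintro ⟨_, h1, h2⟩
        exact ⟨⟨h1, h2⟩, by simp [Nat.gcd_eq_zero_iff, he0]⟩
    rw [h2, sum_filter]
    apply sum_congr rfl
    intro g _
    by_cases h1 : g ∣ e <;> by_cases h2 : g ∣ e' <;> simp [h1, h2]
  have : ∑ e ∈ d.divisors, ∑ e' ∈ d'.divisors, (ArithmeticFunction.moebius (d / e) : ℝ) *
      (ArithmeticFunction.moebius (d' / e') : ℝ) * (Nat.gcd e e' : ℝ) =
      ∑ g ∈ d.divisors, (Nat.totient g : ℝ) *
        ((∑ e ∈ d.divisors, (if g ∣ e then (ArithmeticFunction.moebius (d / e) : ℝ) else 0)) *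
        (∑ e' ∈ d'.divisors, (if g ∣ e' then (ArithmeticFunction.moebius (d' / e') : ℝ) else 0))) := by
    calc _ = ∑ e ∈ d.divisors, ∑ e' ∈ d'.divisors, ∑ g ∈ d.divisors, (Nat.totient g : ℝ) *
        ((if g ∣ e then (ArithmeticFunction.moebius (d / e) : ℝ) else 0) *
        (if g ∣ e' then (ArithmeticFunction.moebius (d' / e') : ℝ) else 0)) := by
          apply sum_congr rfl; intro e he
          apply sum_congr rfl; intro e' he'
          rw [hg e he e' he', mul_sum]
          apply sum_congr rfl; intro g _
          by_cases h1 : g ∣ e <;> by_cases h2 : g ∣ e' <;> simp [h1, h2]; ring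
      _ = _ := by
          have : ∀ e ∈ d.divisors, (∑ e' ∈ d'.divisors, ∑ g ∈ d.divisors, (Nat.totient g : ℝ) *
              ((if g ∣ e then (ArithmeticFunction.moebius (d / e) : ℝ) else 0) *
              (if g ∣ e' then (ArithmeticFunction.moebius (d' / e') : ℝ) else 0))) = 
              ∑ g ∈ d.divisors, ∑ e' ∈ d'.divisors, (Nat.totient g : ℝ) *
              ((if g ∣ e then (ArithmeticFunction.moebius (d / e) : ℝ) else 0) *
              (if g ∣ e' then (ArithmeticFunction.moebius (d' / e') : ℝ) else 0)) :=
            fun e _ => sum_comm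
          rw [sum_congr rfl this, sum_comm]
          apply sum_congr rfl; intro g _
          rw [sum_mul_sum, mul_sum]
          apply sum_congr rfl; intro e _
          rw [mul_sum]
  rw [this]
  simp_rw [moebius_sum_dvd _ _ hd, moebius_sum_dvd _ _ hd']
  rw [sum_eq_single d]
  · simp
  · intro b _ hb; simp [hb]
  · intro h; simp [hd] at h

lemma count_prog (p M X l : ℕ) (hl : 0 < l) (hc : Nat.Coprime l p) :
    |(∑ m ∈ Finset.range X, (if l ∣ 1 + p * (M + m) then (1:ℝ) else 0)) - X / l| ≤ 1 := by
  obtain ⟨v, hv⟩ : ∃ v : ℕ, ∀ m : ℕ, l ∣ 1 + p * (M + m) ↔ m ≡ v [MOD l] := by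
    have : NeZero l := ⟨hl.ne'⟩
    let u : (ZMod l)ˣ := ZMod.unitOfCoprime p hc.symm
    have hu : (u : ZMod l) = p := ZMod.coe_unitOfCoprime p hc.symm
    refine ⟨(-(↑u⁻¹ : ZMod l) - M).val, fun m => ?_⟩
    rw [← ZMod.natCast_eq_zero_iff, ← ZMod.natCast_eq_natCast_iff]
    simp only [Nat.cast_add, Nat.cast_one, Nat.cast_mul, ZMod.natCast_val, ZMod.cast_id', id]
    rw [← hu]
    constructor
    · intro h
      have : (↑u⁻¹ : ZMod l) * (1 + ↑u * (M + m)) = 0 := by rw [h, mul_zero]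
      rw [mul_add, ← mul_assoc, Units.inv_mul] at this
      linear_combination this
    · intro h
      rw [h]
      have := Units.mul_inv u
      linear_combination -this
  have h1 : (∑ m ∈ Finset.range X, (if l ∣ 1 + p * (M + m) then (1:ℝ) else 0)) =
      (Nat.count (· ≡ v [MOD l]) X : ℝ) := by
    simp_rw [hv]
    rw [Finset.sum_boole, Nat.count_eq_card_filter_range]
  rw [h1, Nat.count_modEq_card _ hl]
  have h2 : (X : ℝ) / l = (X / l : ℕ) + ((X % l : ℕ) : ℝ) / l := by
    have : (X : ℝ) = l * (X / l : ℕ) + (X % l : ℕ) := by exact_mod_cast (Nat.div_add_mod X l).symm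
    have hl' : (l : ℝ) ≠ 0 := by positivity
    field_simp
    linarith
  have h3 : ((X % l : ℕ) : ℝ) / l ≤ 1 := by
    rw [div_le_one (by positivity)]
    exact_mod_cast (Nat.mod_lt _ hl).le
  have h4 : 0 ≤ ((X % l : ℕ) : ℝ) / l := by positivity
  rw [h2, abs_le]
  push_cast
  split_ifs <;> constructor <;> linarith

end CycNum

namespace CycNum
open Finset in
lemma rs_corr (p M X d d' : ℕ) (hd : d ≠ 0) (hd' : d' ≠ 0)
    (hc : Nat.Coprime d p) (hc' : Nat.Coprime d' p) :
    |(∑ m ∈ range X, rs d (1 + p * (M + m)) * rs d' (1 + p * (M + m))) -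
      X * (if d = d' then (Nat.totient d : ℝ) else 0)| ≤ (d : ℝ) ^ 2 * (d' : ℝ) ^ 2 := by
  have hmu : ∀ k : ℕ, |(ArithmeticFunction.moebius k : ℝ)| ≤ 1 := fun k => by
    exact_mod_cast ArithmeticFunction.abs_moebius_le_one
  have h1 : (∑ m ∈ range X, rs d (1 + p * (M + m)) * rs d' (1 + p * (M + m))) =
      ∑ e ∈ d.divisors, ∑ e' ∈ d'.divisors, (ArithmeticFunction.moebius (d / e) : ℝ) *
      (ArithmeticFunction.moebius (d' / e') : ℝ) * (e * e' *
        ∑ m ∈ range X, (if Nat.lcm e e' ∣ 1 + p * (M + m) then (1:ℝ) else 0)) := by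
    simp only [rs, sum_mul_sum]
    rw [sum_comm]
    apply sum_congr rfl; intro e _
    rw [sum_comm]
    apply sum_congr rfl; intro e' _
    rw [mul_sum, mul_sum]
    apply sum_congr rfl; intro m _
    simp only [Nat.lcm_dvd_iff]
    by_cases h1 : e ∣ 1 + p * (M + m) <;> by_cases h2 : e' ∣ 1 + p * (M + m) <;> simp [h1, h2]
    ring
  rw [h1, ← moebius_gcd_sum d d' hd hd', mul_sum, ← sum_sub_distrib]
  have hsq : ∀ k : ℕ, ∑ e ∈ k.divisors, (e : ℝ) ≤ (k : ℝ) ^ 2 := by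
    intro k
    calc ∑ e ∈ k.divisors, (e : ℝ) ≤ ∑ e ∈ k.divisors, (k : ℝ) := by
          apply sum_le_sum; intro e he; exact_mod_cast Nat.divisor_le he
      _ = (k.divisors.card : ℝ) * k := by simp
      _ ≤ k * k := by
          gcongr; exact Nat.card_divisors_le_self k
      _ = _ := by ring
  calc _ ≤ ∑ e ∈ d.divisors, ∑ e' ∈ d'.divisors, (e : ℝ) * e' := by
        refine (abs_sum_le_sum_abs _ _).trans (sum_le_sum fun e he => ?_)
        rw [mul_sum, ← sum_sub_distrib]
        refine (abs_sum_le_sum_abs _ _).trans (sum_le_sum fun e' he' => ?_)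
        have he0 : 0 < e := Nat.pos_of_mem_divisors he
        have he0' : 0 < e' := Nat.pos_of_mem_divisors he'
        have hl : 0 < Nat.lcm e e' := Nat.lcm_pos he0 he0'
        have hcl : Nat.Coprime (Nat.lcm e e') p := by
          apply Nat.Coprime.coprime_dvd_left (Nat.lcm_dvd_mul e e')
          exact Nat.Coprime.mul_left (hc.coprime_dvd_left (Nat.dvd_of_mem_divisors he))
            (hc'.coprime_dvd_left (Nat.dvd_of_mem_divisors he'))
        have h3 := count_prog p M X _ hl hcl
        set T := ∑ m ∈ range X, (if Nat.lcm e e' ∣ 1 + p * (M + m) then (1:ℝ) else 0)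
        have hg : (e : ℝ) * e' / (Nat.lcm e e') = Nat.gcd e e' := by
          have : (Nat.gcd e e' : ℝ) * Nat.lcm e e' = e * e' := by exact_mod_cast Nat.gcd_mul_lcm e e'
          rw [← this]; field_simp
        have h4 : (ArithmeticFunction.moebius (d / e) : ℝ) *
            (ArithmeticFunction.moebius (d' / e') : ℝ) * (e * e' * T) -
            X * ((ArithmeticFunction.moebius (d / e) : ℝ) *
            (ArithmeticFunction.moebius (d' / e') : ℝ) * (Nat.gcd e e' : ℝ)) =
            (ArithmeticFunction.moebius (d / e) : ℝ) *
            (ArithmeticFunction.moebius (d' / e') : ℝ) * (e * e' * (T - X / Nat.lcm e e')) := by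
          rw [← hg]; field_simp
        rw [h4, abs_mul, abs_mul, abs_mul, abs_of_nonneg (by positivity : (0:ℝ) ≤ e * e')]
        calc _ ≤ 1 * 1 * ((e:ℝ) * e' * 1) := by gcongr <;> apply hmu
          _ = _ := by ring
    _ = (∑ e ∈ d.divisors, (e : ℝ)) * ∑ e' ∈ d'.divisors, (e' : ℝ) := by rw [sum_mul_sum]
    _ ≤ _ := by gcongr <;> apply hsq

/-- the Selberg denominator -/
noncomputable def SS (p R : ℕ) : ℝ :=
  ∑ d ∈ (Finset.Icc 1 R).filter (fun d => Nat.Coprime d p),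
    (ArithmeticFunction.moebius d : ℝ) ^ 2 / (Nat.totient d : ℝ)

open Finset in
lemma selberg (p M X R : ℕ) :
    (((range X).filter (fun m => (1 + p * (M + m)).Prime ∧ R < 1 + p * (M + m))).card : ℝ) *
      SS p R ^ 2 ≤ X * SS p R + (R : ℝ) ^ 6 := by
  have hmu : ∀ k : ℕ, |(ArithmeticFunction.moebius k : ℝ)| ≤ 1 := fun k => by
    exact_mod_cast ArithmeticFunction.abs_moebius_le_one
  set D := (Icc 1 R).filter (fun d => Nat.Coprime d p) with hD
  set a : ℕ → ℝ := fun d => (ArithmeticFunction.moebius d : ℝ) / (Nat.totient d : ℝ) with ha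
  set F : ℕ → ℝ := fun n => ∑ d ∈ D, a d * rs d n with hF
  have hDmem : ∀ d ∈ D, d ≠ 0 ∧ d ≤ R ∧ Nat.Coprime d p := by
    intro d hd
    simp only [hD, mem_filter, mem_Icc] at hd
    exact ⟨by omega, hd.1.2, hd.2⟩
  have hFp : ∀ n : ℕ, n.Prime → R < n → F n = SS p R := by
    intro n hn hR
    simp only [hF, SS]
    apply sum_congr rfl
    intro d hd
    obtain ⟨hd0, hdR, _⟩ := hDmem d hd
    have : rs d n = ArithmeticFunction.moebius d := by
      unfold rs
      rw [sum_eq_single 1]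
      · simp
      · intro e he he1
        rw [if_neg]; · simp
        intro hen
        rcases (Nat.dvd_prime hn).1 hen with h | h
        · exact he1 h
        · have := Nat.divisor_le he; omega
      · intro h; simp [hd0] at h
    rw [this]; simp only [ha]; ring
  have hlow : (((range X).filter (fun m => (1 + p * (M + m)).Prime ∧ R < 1 + p * (M + m))).card : ℝ) *
      SS p R ^ 2 ≤ ∑ m ∈ range X, F (1 + p * (M + m)) ^ 2 := by
    calc _ = ∑ m ∈ (range X).filter (fun m => (1 + p * (M + m)).Prime ∧ R < 1 + p * (M + m)),
            F (1 + p * (M + m)) ^ 2 := by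
          rw [← nsmul_eq_mul, ← sum_const]
          apply sum_congr rfl
          intro m hm
          simp only [mem_filter] at hm
          rw [hFp _ hm.2.1 hm.2.2]
      _ ≤ _ := sum_le_sum_of_subset_of_nonneg (filter_subset _ _) (fun _ _ _ => sq_nonneg _)
  refine hlow.trans ?_
  have hexp : ∑ m ∈ range X, F (1 + p * (M + m)) ^ 2 = ∑ d ∈ D, ∑ d' ∈ D, a d * a d' *
      ∑ m ∈ range X, rs d (1 + p * (M + m)) * rs d' (1 + p * (M + m)) := by
    simp only [hF, sq, sum_mul_sum]
    rw [sum_comm]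
    apply sum_congr rfl; intro d _
    rw [sum_comm]
    apply sum_congr rfl; intro d' _
    rw [mul_sum]
    apply sum_congr rfl; intro m _
    ring
  have hmain : ∑ d ∈ D, ∑ d' ∈ D, a d * a d' * (X * (if d = d' then (Nat.totient d : ℝ) else 0))
      = X * SS p R := by
    rw [SS, mul_sum]
    apply sum_congr rfl; intro d hd
    rw [sum_eq_single d]
    · have : (Nat.totient d : ℝ) ≠ 0 := by
        have := Nat.totient_pos.2 (Nat.pos_of_ne_zero (hDmem d hd).1)
        positivity
      simp only [ha, if_true]
      field_simp
    · intro b _ hb; simp [hb.symm]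
    · intro h; exact absurd hd h
  have ha1 : ∀ d ∈ D, |a d| ≤ 1 := by
    intro d hd
    have : (1:ℝ) ≤ (Nat.totient d : ℝ) := by
      exact_mod_cast Nat.totient_pos.2 (Nat.pos_of_ne_zero (hDmem d hd).1)
    simp only [ha]
    rw [abs_div, abs_of_nonneg (by positivity : (0:ℝ) ≤ (Nat.totient d : ℝ)), div_le_one (by positivity)]
    exact (hmu d).trans this
  have hcube : ∑ d ∈ D, (d:ℝ) ^ 2 ≤ (R:ℝ) ^ 3 := by
    calc ∑ d ∈ D, (d:ℝ) ^ 2 ≤ ∑ d ∈ D, (R:ℝ)^2 := by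
          apply sum_le_sum; intro d hd
          have : (d:ℝ) ≤ R := by exact_mod_cast (hDmem d hd).2.1
          gcongr
      _ = D.card * (R:ℝ)^2 := by simp
      _ ≤ R * (R:ℝ)^2 := by
          gcongr
          calc D.card ≤ (Icc 1 R).card := card_filter_le _ _
            _ = R := by simp
      _ = _ := by ring
  have herr : |∑ m ∈ range X, F (1 + p * (M + m)) ^ 2 - X * SS p R| ≤ (R:ℝ)^6 := by
    rw [hexp, ← hmain, ← sum_sub_distrib]
    calc _ ≤ ∑ d ∈ D, ∑ d' ∈ D, (d:ℝ)^2 * (d':ℝ)^2 := by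
          refine (abs_sum_le_sum_abs _ _).trans (sum_le_sum fun d hd => ?_)
          rw [← sum_sub_distrib]
          refine (abs_sum_le_sum_abs _ _).trans (sum_le_sum fun d' hd' => ?_)
          rw [← mul_sub, abs_mul, abs_mul]
          have h := rs_corr p M X d d' (hDmem d hd).1 (hDmem d' hd').1 (hDmem d hd).2.2 (hDmem d' hd').2.2
          calc _ ≤ 1 * 1 * ((d:ℝ)^2 * (d':ℝ)^2) := by
                gcongr
                · exact ha1 d hd
                · exact ha1 d' hd'
            _ = _ := by ring
      _ = (∑ d ∈ D, (d:ℝ)^2) * ∑ d ∈ D, (d:ℝ)^2 := by rw [sum_mul_sum]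
      _ ≤ (R:ℝ)^3 * (R:ℝ)^3 := by gcongr
      _ = _ := by ring
  linarith [(abs_le.1 herr).2]
end CycNum

namespace CycNum
open Finset in
lemma SS_lower (p R : ℕ) (hp : p.Prime) : log R ≤ 4 * SS p R := by
  set D := (Icc 1 R).filter (fun d => Nat.Coprime d p) with hD
  set G := D.filter Squarefree with hG
  have h1 : ∑ d ∈ G, (d:ℝ)⁻¹ ≤ SS p R := by
    rw [SS, hG, sum_filter]
    apply sum_le_sum
    intro d hd
    have hd0 : 0 < d := by simp [hD] at hd; omega
    split_ifs with hs
    · have : (ArithmeticFunction.moebius d : ℝ) ^ 2 = 1 := by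
        have := ArithmeticFunction.moebius_sq_eq_one_of_squarefree hs
        exact_mod_cast this
      rw [this, inv_eq_one_div]
      have h2 : (0:ℝ) < Nat.totient d := by exact_mod_cast Nat.totient_pos.2 hd0
      gcongr
      exact Nat.totient_le d
    · positivity
  have hsq : ∑ k ∈ Icc 1 R, ((k:ℝ)^2)⁻¹ ≤ 2 := by
    have := sum_Ioo_inv_sq_le (α := ℝ) 0 (R+1)
    have h : Ioo 0 (R+1) = Icc 1 R := by ext; simp; omega
    rw [h] at this; simpa using this
  have h2 : ∑ n ∈ D, (n:ℝ)⁻¹ ≤ 2 * ∑ d ∈ G, (d:ℝ)⁻¹ := by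
    have hsub : D ⊆ (G ×ˢ Icc 1 R).image (fun x : ℕ × ℕ => x.2 ^ 2 * x.1) := by
      intro n hn
      simp only [hD, mem_filter, mem_Icc] at hn
      obtain ⟨a, b, hab, ha⟩ := Nat.sq_mul_squarefree n
      have ha0 : a ≠ 0 := by rintro rfl; simp at hab; omega
      have hb0 : b ≠ 0 := by rintro rfl; simp at hab; omega
      rw [mem_image]
      refine ⟨(a, b), ?_, hab⟩
      simp only [mem_product, hG, hD, mem_filter, mem_Icc]
      have haR : a ≤ n := Nat.le_of_dvd (by omega) ⟨b^2, by rw [← hab]; ring⟩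
      have hbR : b ≤ n := Nat.le_of_dvd (by omega) ⟨b * a, by rw [← hab]; ring⟩
      refine ⟨⟨⟨⟨by omega, by omega⟩, ?_⟩, ha⟩, by omega, by omega⟩
      exact hn.2.coprime_dvd_left ⟨b^2, by rw [← hab]; ring⟩
    calc ∑ n ∈ D, (n:ℝ)⁻¹ ≤ ∑ n ∈ (G ×ˢ Icc 1 R).image (fun x : ℕ × ℕ => x.2 ^ 2 * x.1), (n:ℝ)⁻¹ :=
          sum_le_sum_of_subset_of_nonneg hsub (fun _ _ _ => by positivity)
      _ ≤ ∑ x ∈ G ×ˢ Icc 1 R, ((x.2 ^ 2 * x.1 : ℕ):ℝ)⁻¹ := by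
          apply sum_image_le_of_nonneg
          intro i _; positivity
      _ = (∑ k ∈ Icc 1 R, ((k:ℝ)^2)⁻¹) * ∑ d ∈ G, (d:ℝ)⁻¹ := by
          rw [sum_product_right, sum_mul_sum]
          apply sum_congr rfl; intro k _; apply sum_congr rfl; intro d _
          push_cast; rw [mul_inv]
      _ ≤ _ := by
          gcongr
  have h3 : ∑ n ∈ Icc 1 R, (n:ℝ)⁻¹ ≤ 2 * ∑ n ∈ D, (n:ℝ)⁻¹ := by
    have hs := sum_filter_add_sum_filter_not (Icc 1 R) (fun d => Nat.Coprime d p) (fun n => (n:ℝ)⁻¹)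
    have hsub : (Icc 1 R).filter (fun d => ¬ Nat.Coprime d p) ⊆ (Icc 1 R).image (fun k : ℕ => p * k) := by
      intro n hn
      simp only [mem_filter, mem_Icc] at hn
      have : p ∣ n := by
        by_contra h
        exact hn.2 ((Nat.Prime.coprime_iff_not_dvd hp).2 h).symm
      obtain ⟨k, rfl⟩ := this
      have hk : k ≠ 0 := by rintro rfl; simp at hn
      rw [mem_image]
      have : k ≤ p * k := Nat.le_mul_of_pos_left k hp.pos
      exact ⟨k, by simp; omega, rfl⟩
    have h4 : ∑ n ∈ (Icc 1 R).filter (fun d => ¬ Nat.Coprime d p), (n:ℝ)⁻¹ ≤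
        (1/2) * ∑ n ∈ Icc 1 R, (n:ℝ)⁻¹ := by
      calc _ ≤ ∑ n ∈ (Icc 1 R).image (fun k : ℕ => p * k), (n:ℝ)⁻¹ :=
            sum_le_sum_of_subset_of_nonneg hsub (fun _ _ _ => by positivity)
        _ ≤ ∑ k ∈ Icc 1 R, ((p * k : ℕ):ℝ)⁻¹ := by
            apply sum_image_le_of_nonneg
            intro i _; positivity
        _ = (p:ℝ)⁻¹ * ∑ n ∈ Icc 1 R, (n:ℝ)⁻¹ := by
            rw [mul_sum]; apply sum_congr rfl; intro k _; push_cast; rw [mul_inv]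
        _ ≤ _ := by
            have h2p : (2:ℝ) ≤ p := by exact_mod_cast hp.two_le
            rw [one_div]
            gcongr
    linarith
  have h5 : log R ≤ ∑ n ∈ Icc 1 R, (n:ℝ)⁻¹ := by
    rcases Nat.eq_zero_or_pos R with rfl | hR
    · simp
    have := log_add_one_le_harmonic R
    rw [harmonic_eq_sum_Icc] at this
    push_cast at this
    refine le_trans ?_ this
    apply log_le_log (by positivity)
    linarith
  linarith

/-- Brun–Titchmarsh, crude form. -/
lemma BT : ∃ C : ℝ, 0 < C ∧ ∀ p M X : ℕ, p.Prime → 2 ≤ X → 0 < M → X ≤ M →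
    (((Finset.range X).filter (fun m => (1 + p * (M + m)).Prime)).card : ℝ) ≤ C * X / log X := by
  -- R = ⌊X^(1/12)⌋ + 1
  refine ⟨2^20, by norm_num, ?_⟩
  intro p M X hp hX hM hXM
  have hX0 : (2:ℝ) ≤ X := by exact_mod_cast hX
  have hlX : 0 < log X := log_pos (by linarith)
  set R : ℕ := ⌊(X:ℝ)^((1:ℝ)/12)⌋₊ + 1 with hR
  set y := (X:ℝ)^((1:ℝ)/12) with hy
  have hy1 : 1 ≤ y := one_le_rpow (by linarith) (by norm_num)
  have hyX : y ^ 12 = X := by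
    rw [hy, ← rpow_natCast, ← rpow_mul (by linarith)]; norm_num
  have hRy : y ≤ R := by rw [hR]; push_cast; exact (Nat.lt_floor_add_one y).le
  have hR2y : (R:ℝ) ≤ 2 * y := by
    rw [hR]; push_cast; have := Nat.floor_le (by linarith : 0 ≤ y); linarith
  have hRlt : ∀ m, R < 1 + p * (M + m) := by
    intro m
    have : (R:ℝ) ≤ 2 * X := by
      have : y ≤ y ^ 12 := by
        calc y = y^1 := by ring
          _ ≤ y^12 := pow_le_pow_right₀ hy1 (by norm_num)
      linarith
    have h2 : R ≤ 2 * X := by exact_mod_cast this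
    have h3 : 2 * (M + m) ≤ p * (M + m) := Nat.mul_le_mul_right _ hp.two_le
    omega
  have hs := selberg p M X R
  have hfil : (Finset.range X).filter (fun m => (1 + p * (M + m)).Prime ∧ R < 1 + p * (M + m)) =
      (Finset.range X).filter (fun m => (1 + p * (M + m)).Prime) := by
    apply Finset.filter_congr; intro m _; simp [hRlt m]
  rw [hfil] at hs
  set A : ℝ := (((Finset.range X).filter (fun m => (1 + p * (M + m)).Prime)).card : ℝ)
  have hS := SS_lower p R hp
  set S := SS p R
  have hlogR : log X / 12 ≤ log R := by
    have : log y = log X / 12 := by rw [hy, log_rpow (by linarith)]; ring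
    rw [← this]; exact log_le_log (by linarith) hRy
  have hSl : log X / 48 ≤ S := by linarith
  have hS0 : 0 < S := by linarith [div_pos hlX (by norm_num : (0:ℝ) < 48)]
  -- R^6 ≤ 64 y^6 ; log X = 12 log y ≤ 12 y
  have hR6 : (R:ℝ)^6 ≤ 64 * y^6 := by
    calc (R:ℝ)^6 ≤ (2*y)^6 := by gcongr
      _ = _ := by ring
  have hy6 : y^6 ≤ X := by
    rw [← hyX]; exact pow_le_pow_right₀ hy1 (by norm_num)
  have hl2 : 1/2 ≤ log X := by
    have := log_le_log (by norm_num) hX0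
    linarith [log_two_gt_d9]
  have hA : A ≤ X / S + R^6 / S^2 := by
    have : A ≤ (X * S + R^6) / S^2 := by rw [le_div_iff₀ (by positivity)]; exact hs
    calc A ≤ _ := this
      _ = _ := by field_simp
  have h1 : X / S ≤ 48 * X / log X := by
    rw [div_le_div_iff₀ hS0 hlX]
    nlinarith
  have h2 : (R:ℝ)^6 / S^2 ≤ 64 * 48^2 * 2 * X / log X := by
    have e1 : (log X / 48)^2 ≤ S^2 := by gcongr
    calc (R:ℝ)^6 / S^2 ≤ 64 * y^6 / (log X / 48)^2 := by gcongr
      _ ≤ 64 * X / (log X / 48)^2 := by gcongr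
      _ = 64 * 48^2 * X / (log X * log X) := by field_simp
      _ ≤ 64 * 48^2 * X / (1/2 * log X) := by gcongr
      _ = _ := by field_simp
  calc A ≤ 48 * X / log X + 64 * 48^2 * 2 * X / log X := by linarith
    _ = (48 + 64 * 48^2*2) * X / log X := by ring
    _ ≤ _ := by gcongr; norm_num
end CycNum

namespace CycNum
/-- the primes `q ≤ N` with `q ≡ 1 mod p` -/
def PA (p N : ℕ) : Finset ℕ := (Finset.range (N+1)).filter (fun q => q.Prime ∧ q % p = 1)

lemma dyadic (f : ℕ → ℝ) (K : ℕ) : ∑ m ∈ Finset.Ico 1 (2^K), f m =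
    ∑ k ∈ Finset.range K, ∑ j ∈ Finset.range (2^k), f (2^k + j) := by
  induction K with
  | zero => simp
  | succ K ih =>
    rw [Finset.sum_range_succ, ← ih, ← Finset.sum_Ico_consecutive f (Nat.one_le_two_pow (n := K))
      (Nat.pow_le_pow_right (by norm_num) (Nat.le_succ K)), Finset.sum_Ico_eq_sum_range f (2^K)]
    congr 3
    rw [pow_succ]; omega

open Finset in
lemma Tp_bound : ∃ C : ℝ, 0 < C ∧ ∀ p N : ℕ, p.Prime → 16 ≤ N →
    ∑ q ∈ PA p N, (q:ℝ)⁻¹ ≤ C * log (log N) / p := by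
  obtain ⟨C, hC, hBT⟩ := BT
  refine ⟨1 + 6 * C, by positivity, ?_⟩
  intro p N hp hN
  have hp0 : (0:ℝ) < p := by exact_mod_cast hp.pos
  have hl2 := log_two_gt_d9
  have hN' : (16:ℝ) ≤ N := by exact_mod_cast hN
  have hlogN : exp 1 ≤ log N := by
    have h1 : log 16 = 4 * log 2 := by
      rw [show (16:ℝ) = 2^4 by norm_num, log_pow]; norm_num
    have h2 := log_le_log (by norm_num) hN'
    have := exp_one_lt_d9
    linarith
  have hlog0 : 0 < log N := lt_of_lt_of_le (exp_pos 1) hlogN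
  have hL : 1 ≤ log (log N) := by
    rw [le_log_iff_exp_le hlog0]; exact hlogN
  set f : ℕ → ℝ := fun m => if (1 + p * m).Prime then ((p:ℝ) * m)⁻¹ else 0 with hf
  have hf0 : ∀ m, 0 ≤ f m := fun m => by simp only [hf]; split_ifs <;> positivity
  set K := Nat.log 2 N + 1 with hK
  have h1 : ∑ q ∈ PA p N, (q:ℝ)⁻¹ ≤ ∑ m ∈ Ico 1 (2^K), f m := by
    have hsub : PA p N ⊆ ((Ico 1 (2^K)).filter (fun m => (1 + p * m).Prime)).image (fun m => 1 + p * m) := by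
      intro q hq
      simp only [PA, mem_filter, mem_range] at hq
      obtain ⟨hqN, hqp, hq1⟩ := hq
      have hdm := Nat.div_add_mod q p
      rw [mem_image]
      refine ⟨q / p, ?_, by omega⟩
      simp only [mem_filter, mem_Ico]
      have hq2 := hqp.two_le
      have hlt : N < 2^K := Nat.lt_pow_succ_log_self (by norm_num) N
      have : q / p ≤ q := Nat.div_le_self _ _
      refine ⟨⟨?_, lt_of_le_of_lt this (by omega)⟩, ?_⟩
      · by_contra h
        have : q / p = 0 := Nat.lt_one_iff.mp (not_le.mp h)
        rw [this] at hdm; omega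
      · have : 1 + p * (q/p) = q := by omega
        rw [this]; exact hqp
    calc ∑ q ∈ PA p N, (q:ℝ)⁻¹ ≤ ∑ q ∈ ((Ico 1 (2^K)).filter (fun m => (1 + p * m).Prime)).image (fun m => 1 + p * m), (q:ℝ)⁻¹ :=
          sum_le_sum_of_subset_of_nonneg hsub (fun _ _ _ => by positivity)
      _ ≤ ∑ m ∈ (Ico 1 (2^K)).filter (fun m => (1 + p * m).Prime), ((1 + p * m : ℕ):ℝ)⁻¹ := by
          apply sum_image_le_of_nonneg
          intro i _; positivity
      _ ≤ ∑ m ∈ (Ico 1 (2^K)).filter (fun m => (1 + p * m).Prime), ((p:ℝ) * m)⁻¹ := by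
          apply sum_le_sum; intro m hm
          simp only [mem_filter, mem_Ico] at hm
          have : (0:ℝ) < m := by exact_mod_cast hm.1.1
          push_cast
          gcongr
          linarith
      _ = _ := by rw [sum_filter]
  rw [dyadic] at h1
  have h2 : ∀ k : ℕ, 1 ≤ k → ∑ j ∈ range (2^k), f (2^k + j) ≤ 2 * C / p * (k:ℝ)⁻¹ := by
    intro k hk
    have hX2 : 2 ≤ 2^k := by
      calc 2 = 2^1 := by norm_num
        _ ≤ 2^k := Nat.pow_le_pow_right (by norm_num) hk
    have hb := hBT p (2^k) (2^k) hp hX2 (by positivity) le_rfl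
    have hk0 : (0:ℝ) < k := by exact_mod_cast hk
    calc ∑ j ∈ range (2^k), f (2^k + j) ≤ ∑ j ∈ range (2^k), (if (1 + p * (2^k + j)).Prime then ((p:ℝ) * 2^k)⁻¹ else 0) := by
          apply sum_le_sum; intro j _
          simp only [hf]
          split_ifs
          · push_cast; gcongr; linarith [(Nat.cast_nonneg j : (0:ℝ) ≤ j)]
          · rfl
      _ = (((range (2^k)).filter (fun m => (1 + p * (2^k + m)).Prime)).card : ℝ) * ((p:ℝ) * 2^k)⁻¹ := by
          rw [← sum_filter, sum_const, nsmul_eq_mul]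
      _ ≤ (C * (2^k : ℕ) / log (2^k : ℕ)) * ((p:ℝ) * 2^k)⁻¹ := by gcongr
      _ = C / p * (k:ℝ)⁻¹ * (log 2)⁻¹ := by
          push_cast
          rw [log_pow]; field_simp
      _ ≤ C / p * (k:ℝ)⁻¹ * 2 := by
          gcongr
          rw [inv_le_comm₀ (by linarith) (by norm_num)]; linarith
      _ = _ := by ring
  have h3 : ∑ k ∈ range K, ∑ j ∈ range (2^k), f (2^k + j) ≤ 1 / p + ∑ k ∈ Icc 1 (Nat.log 2 N), 2 * C / p * (k:ℝ)⁻¹ := by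
    rw [hK, sum_range_succ']
    have : ∑ k ∈ range (Nat.log 2 N), ∑ j ∈ range (2^(k+1)), f (2^(k+1) + j) ≤ ∑ k ∈ Icc 1 (Nat.log 2 N), 2 * C / p * (k:ℝ)⁻¹ := by
      calc _ ≤ ∑ k ∈ range (Nat.log 2 N), 2 * C / p * ((k+1 : ℕ):ℝ)⁻¹ :=
            sum_le_sum fun k _ => h2 (k+1) (by omega)
        _ = _ := by
            rw [← Ico_add_one_right_eq_Icc, sum_Ico_eq_sum_range]
            apply sum_congr (by simp)
            intro k _; rw [add_comm k 1]
    have h0 : ∑ j ∈ range (2^0), f (2^0 + j) ≤ 1 / p := by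
      simp [hf]; split_ifs
      · rfl
      · positivity
    linarith
  have h4 : ∑ k ∈ Icc 1 (Nat.log 2 N), 2 * C / p * (k:ℝ)⁻¹ ≤ 2 * C / p * (3 * log (log N)) := by
    rw [← mul_sum]
    gcongr
    have hh := harmonic_le_one_add_log (Nat.log 2 N)
    rw [harmonic_eq_sum_Icc] at hh
    push_cast at hh
    have hlg : 0 < Nat.log 2 N := Nat.log_pos (by norm_num) (by omega)
    have hlg' : (Nat.log 2 N : ℝ) ≤ 2 * log N := by
      have : (Nat.log 2 N : ℝ) * log 2 ≤ log N := by
        rw [← log_pow]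
        apply log_le_log (by positivity)
        exact_mod_cast Nat.pow_log_le_self 2 (by omega : N ≠ 0)
      nlinarith
    have h5 : log (Nat.log 2 N : ℝ) ≤ log 2 + log (log N) := by
      rw [← log_mul (by norm_num) hlog0.ne']
      exact log_le_log (by exact_mod_cast hlg) hlg'
    have := log_two_lt_d9
    linarith
  calc _ ≤ 1 / p + 2 * C / p * (3 * log (log N)) := by linarith
    _ ≤ log (log N) / p + 2 * C / p * (3 * log (log N)) := by gcongr
    _ = _ := by ring
end CycNum

namespace CycNum
open Finset in
lemma turan (Q : Finset ℕ) (hQ : ∀ q ∈ Q, q.Prime) (M : ℕ) :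
    (#{m ∈ Ioc 0 M | ∀ q ∈ Q, ¬ q ∣ m} : ℝ) * ∑ q ∈ Q, (q:ℝ)⁻¹ ≤ M + 2 * #Q := by
  set E : ℝ := ∑ q ∈ Q, (q:ℝ)⁻¹ with hE
  have hE0 : 0 ≤ E := sum_nonneg fun _ _ => by positivity
  rcases hE0.eq_or_lt with h0 | hEp
  · rw [← h0, mul_zero]; positivity
  set w : ℕ → ℝ := fun m => ∑ q ∈ Q, if q ∣ m then 1 else 0 with hw
  have hcount : ∀ d : ℕ, ∑ m ∈ Ioc 0 M, (if d ∣ m then (1:ℝ) else 0) = (M / d : ℕ) := by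
    intro d
    rw [← sum_filter, sum_const, Nat.Ioc_filter_dvd_card_eq_div]; simp
  have h1 : (M:ℝ) * E - #Q ≤ ∑ m ∈ Ioc 0 M, w m := by
    simp only [hw]
    rw [sum_comm]
    simp only [hcount]
    rw [hE, mul_sum, card_eq_sum_ones]
    push_cast
    rw [← sum_sub_distrib]
    apply sum_le_sum
    intro q hq
    have := Nat.lt_floor_add_one ((M:ℝ)/q)
    rw [Nat.floor_div_eq_div] at this
    rw [← div_eq_mul_inv]; linarith
  have h2 : ∑ m ∈ Ioc 0 M, (w m)^2 ≤ M * E^2 + M * E := by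
    have e1 : ∀ m, (w m)^2 = ∑ q ∈ Q, ∑ r ∈ Q, (if q ∣ m then 1 else 0) * (if r ∣ m then 1 else 0) := by
      intro m; rw [sq, hw]; simp only [sum_mul_sum]
    simp only [e1]
    rw [sum_comm]
    have e2 : ∀ q ∈ Q, ∑ m ∈ Ioc 0 M, ∑ r ∈ Q, ((if q ∣ m then 1 else 0) * (if r ∣ m then 1 else 0) : ℝ)
        ≤ M * (q:ℝ)⁻¹ * E + M * (q:ℝ)⁻¹ := by
      intro q hq
      rw [sum_comm]
      have e3 : ∀ r ∈ Q, ∑ m ∈ Ioc 0 M, ((if q ∣ m then 1 else 0) * (if r ∣ m then 1 else 0) : ℝ)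
        ≤ M * (q:ℝ)⁻¹ * (r:ℝ)⁻¹ + if r = q then M * (q:ℝ)⁻¹ else 0 := by
        intro r hr
        by_cases hrq : r = q
        · subst hrq
          rw [if_pos rfl]
          have : ∀ m ∈ Ioc 0 M, ((if r ∣ m then 1 else 0) * (if r ∣ m then 1 else 0) : ℝ) = if r ∣ m then 1 else 0 := by
            intro m _; split_ifs <;> simp
          rw [sum_congr rfl this, hcount]
          have := @Nat.cast_div_le ℝ _ _ _ M r
          have h3 : (0:ℝ) ≤ M * (r:ℝ)⁻¹ * (r:ℝ)⁻¹ := by positivity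
          rw [div_eq_mul_inv] at this
          linarith
        · rw [if_neg hrq, add_zero]
          have hc : Nat.Coprime q r := (Nat.coprime_primes (hQ q hq) (hQ r hr)).2 (Ne.symm hrq)
          have : ∀ m ∈ Ioc 0 M, ((if q ∣ m then 1 else 0) * (if r ∣ m then 1 else 0) : ℝ) = if q * r ∣ m then 1 else 0 := by
            intro m _
            have : q * r ∣ m ↔ q ∣ m ∧ r ∣ m := ⟨fun h => ⟨(dvd_mul_right q r).trans h, (dvd_mul_left r q).trans h⟩, fun h => hc.mul_dvd_of_dvd_of_dvd h.1 h.2⟩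
            by_cases a : q ∣ m <;> by_cases b : r ∣ m <;> simp [a, b, this]
          rw [sum_congr rfl this, hcount]
          have := @Nat.cast_div_le ℝ _ _ _ M (q*r)
          refine this.trans (le_of_eq ?_)
          push_cast
          rw [div_eq_mul_inv, mul_inv, mul_assoc]
      refine (sum_le_sum e3).trans (le_of_eq ?_)
      rw [sum_add_distrib, ← mul_sum, sum_ite_eq' Q q, if_pos hq]
    refine (sum_le_sum e2).trans (le_of_eq ?_)
    rw [sum_add_distrib, ← sum_mul, ← mul_sum]
    rw [← hE]; ring
  have h3 : (#{m ∈ Ioc 0 M | ∀ q ∈ Q, ¬ q ∣ m} : ℝ) * E^2 ≤ ∑ m ∈ Ioc 0 M, (w m - E)^2 := by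
    calc _ = ∑ m ∈ Ioc 0 M with ∀ q ∈ Q, ¬ q ∣ m, (w m - E)^2 := by
          rw [← nsmul_eq_mul, ← sum_const]
          apply sum_congr rfl
          intro m hm
          rw [mem_filter] at hm
          have : w m = 0 := sum_eq_zero fun q hq => by rw [if_neg (hm.2 q hq)]
          rw [this]; ring
      _ ≤ _ := sum_le_sum_of_subset_of_nonneg (filter_subset _ _) fun _ _ _ => sq_nonneg _
  have h4 : ∑ m ∈ Ioc 0 M, (w m - E)^2 = ∑ m ∈ Ioc 0 M, (w m)^2 - 2 * E * ∑ m ∈ Ioc 0 M, w m + M * E^2 := by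
    have : ∀ m ∈ Ioc 0 M, (w m - E)^2 = (w m)^2 - 2 * E * w m + E^2 := fun m _ => by ring
    rw [sum_congr rfl this, sum_add_distrib, sum_sub_distrib, ← mul_sum]; simp
  refine le_of_mul_le_mul_right ?_ hEp
  nlinarith [mul_le_mul_of_nonneg_left h1 hE0]
end CycNum

namespace CycNum
lemma abel_bound (a : ℕ → ℂ) (B : ℝ) (hB : ∀ n, ‖∑ i ∈ Finset.range n, a i‖ ≤ B) (f : ℕ → ℝ)
    (hf : ∀ n, f (n+1) ≤ f n) (hf0 : ∀ n, 0 ≤ f n) (n : ℕ) :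
    ‖∑ i ∈ Finset.range n, (f i : ℂ) * a i‖ ≤ B * f 0 := by
  have key : ∀ n, ‖∑ i ∈ Finset.range n, (f i : ℂ) * a i - f n * ∑ i ∈ Finset.range n, a i‖ ≤ B * (f 0 - f n) := by
    intro n
    induction n with
    | zero => simp
    | succ n ih =>
      have e : ∑ i ∈ Finset.range (n+1), (f i : ℂ) * a i - f (n+1) * ∑ i ∈ Finset.range (n+1), a i
        = (∑ i ∈ Finset.range n, (f i : ℂ) * a i - f n * ∑ i ∈ Finset.range n, a i)
          + ((f n - f (n+1) : ℝ) : ℂ) * ∑ i ∈ Finset.range (n+1), a i := by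
        simp only [Finset.sum_range_succ]; push_cast; ring
      rw [e]
      refine (norm_add_le _ _).trans ?_
      rw [norm_mul, Complex.norm_real, Real.norm_of_nonneg (sub_nonneg.2 (hf n))]
      have := mul_le_mul_of_nonneg_left (hB (n+1)) (sub_nonneg.2 (hf n))
      linarith
  have h1 := key n
  have h2 : ‖(f n : ℂ) * ∑ i ∈ Finset.range n, a i‖ ≤ f n * B := by
    rw [norm_mul, Complex.norm_real, Real.norm_of_nonneg (hf0 n)]
    exact mul_le_mul_of_nonneg_left (hB n) (hf0 n)
  have h3 := norm_add_le (∑ i ∈ Finset.range n, (f i : ℂ) * a i - f n * ∑ i ∈ Finset.range n, a i) ((f n : ℂ) * ∑ i ∈ Finset.range n, a i)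
  rw [sub_add_cancel] at h3
  linarith

lemma char_block (p : ℕ) [NeZero p] (χ : DirichletCharacter ℂ p) (hχ : χ ≠ 1) (m : ℕ) :
    ∑ i ∈ Finset.range p, χ ((m + i : ℕ) : ZMod p) = 0 := by
  have h : ∑ i ∈ Finset.range p, χ ((m + i : ℕ) : ZMod p) = ∑ x : ZMod p, χ (m + x) := by
    apply Finset.sum_bij (fun (i:ℕ) _ => (i : ZMod p))
    · simp
    · intro a ha b hb hab
      rw [Finset.mem_range] at ha hb
      rw [ZMod.natCast_eq_natCast_iff'] at hab
      rwa [Nat.mod_eq_of_lt ha, Nat.mod_eq_of_lt hb] at hab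
    · intro b _
      exact ⟨b.val, Finset.mem_range.2 (ZMod.val_lt b), by simp⟩
    · intro i _; push_cast; rfl
  rw [h]
  refine (Equiv.sum_comp (Equiv.addLeft (m : ZMod p)) (fun x => χ x)).trans ?_
  exact MulChar.sum_eq_zero_of_ne_one hχ

lemma char_sum (p : ℕ) [NeZero p] (χ : DirichletCharacter ℂ p) (hχ : χ ≠ 1) (n : ℕ) :
    ∀ m : ℕ, ‖∑ i ∈ Finset.range n, χ ((m + i : ℕ) : ZMod p)‖ ≤ p := by
  induction n using Nat.strong_induction_on with
  | _ n ih =>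
    intro m
    by_cases h : n < p
    · calc _ ≤ ∑ i ∈ Finset.range n, ‖χ ((m + i : ℕ) : ZMod p)‖ := norm_sum_le _ _
        _ ≤ ∑ i ∈ Finset.range n, (1:ℝ) := Finset.sum_le_sum fun i _ => χ.norm_le_one _
        _ = n := by simp
        _ ≤ p := by exact_mod_cast h.le
    · push Not at h
      have hp : 0 < p := Nat.pos_of_ne_zero (NeZero.ne p)
      obtain ⟨k, rfl⟩ := Nat.exists_eq_add_of_le h
      rw [Finset.sum_range_add, char_block p χ hχ, zero_add]
      have := ih k (by omega) (m + p)
      simpa only [add_assoc] using this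

/-- Abel bound for characters -/
lemma char_abel (p : ℕ) [NeZero p] (χ : DirichletCharacter ℂ p) (hχ : χ ≠ 1) (m n : ℕ) (f : ℕ → ℝ)
    (hf : ∀ n, f (n+1) ≤ f n) (hf0 : ∀ n, 0 ≤ f n) :
    ‖∑ i ∈ Finset.range n, (f i : ℂ) * χ ((m + i : ℕ) : ZMod p)‖ ≤ p * f 0 :=
  abel_bound _ p (fun n => char_sum p χ hχ n m) f hf hf0 n

lemma hdiff_anti {s σ : ℝ} (hs : 1 ≤ s) (hsσ : s ≤ σ) :
    AntitoneOn (fun x : ℝ => x^(-s) - x^(-σ)) (Set.Ici 3) := by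
  have hd : ∀ x : ℝ, 3 ≤ x → HasDerivAt (fun x : ℝ => x^(-s) - x^(-σ)) (-s * x^(-s-1) - -σ * x^(-σ-1)) x := by
    intro x hx
    exact (Real.hasDerivAt_rpow_const (Or.inl (by linarith))).sub (Real.hasDerivAt_rpow_const (Or.inl (by linarith)))
  apply antitoneOn_of_deriv_nonpos (convex_Ici 3)
  · exact fun x hx => (hd x hx).continuousAt.continuousWithinAt
  · intro x hx
    rw [interior_Ici] at hx
    exact (hd x (le_of_lt hx)).differentiableAt.differentiableWithinAt
  · intro x hx
    rw [interior_Ici] at hx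
    have hx3 : (3:ℝ) < x := hx
    rw [(hd x hx3.le).deriv]
    have hx0 : 0 < x := by linarith
    have h1 : x^(-s-1) = x^(-σ-1) * x^(σ-s) := by rw [← rpow_add hx0]; congr 1; ring
    have hlog : 1 ≤ log x := by
      rw [le_log_iff_exp_le hx0]; linarith [exp_one_lt_d9]
    have h2 : 1 + (σ - s) ≤ x^(σ-s) := by
      rw [rpow_def_of_pos hx0]
      have := add_one_le_exp (log x * (σ - s))
      nlinarith
    have h3 : σ ≤ s * x^(σ-s) := by nlinarith
    have h4 : 0 < x^(-σ-1) := rpow_pos_of_pos hx0 _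
    rw [h1]
    nlinarith

lemma hdiff_le {s σ x : ℝ} (hs : 1 ≤ s) (hsσ : s ≤ σ) (hx : 1 ≤ x) :
    0 ≤ x^(-s) - x^(-σ) ∧ x^(-s) - x^(-σ) ≤ σ - s := by
  have hx0 : 0 < x := by linarith
  constructor
  · have := rpow_le_rpow_of_exponent_le hx (by linarith : -σ ≤ -s)
    linarith
  · have e : x^(-σ) = x^(-s) * x^(-(σ-s)) := by rw [← rpow_add hx0]; congr 1; ring
    have h1 : 1 - log x * (σ - s) ≤ x^(-(σ-s)) := by
      rw [rpow_def_of_pos hx0]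
      have := add_one_le_exp (log x * -(σ - s))
      nlinarith
    have h2 : x^(-s) ≤ x⁻¹ := by
      rw [← rpow_neg_one]
      exact rpow_le_rpow_of_exponent_le hx (by linarith)
    have h2' : 0 < x^(-s) := rpow_pos_of_pos hx0 _
    have h3 : log x ≤ x := by linarith [log_le_sub_one_of_pos hx0]
    have h4 : x^(-s) * log x ≤ 1 := by
      calc x^(-s) * log x ≤ x⁻¹ * x := by
            apply mul_le_mul h2 h3 (log_nonneg hx) (by positivity)
        _ = 1 := inv_mul_cancel₀ hx0.ne'
    rw [e]
    nlinarith [mul_le_mul_of_nonneg_left h1 h2'.le, mul_le_mul_of_nonneg_right h4 (sub_nonneg.2 hsσ)]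

/-- partial sums of `L(s,χ)` for real s -/
noncomputable def PL (p : ℕ) (χ : DirichletCharacter ℂ p) (s : ℝ) (n : ℕ) : ℂ :=
  ∑ i ∈ Finset.range n, (((i + 1 : ℕ) : ℝ) ^ (-s) : ℝ) * χ ((1 + i : ℕ) : ZMod p)

lemma PL_bound (p : ℕ) [NeZero p] (χ : DirichletCharacter ℂ p) (hχ : χ ≠ 1) {s : ℝ} (hs : 1 ≤ s) (n : ℕ) :
    ‖PL p χ s n‖ ≤ p := by
  have := char_abel p χ hχ 1 n (fun i => ((i + 1 : ℕ) : ℝ) ^ (-s)) (fun n => by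
    apply rpow_le_rpow_of_nonpos (by positivity) _ (by linarith)
    push_cast; linarith) (fun n => by positivity)
  simpa [PL] using this

lemma PL_diff (p : ℕ) [NeZero p] (χ : DirichletCharacter ℂ p) (hχ : χ ≠ 1) {s σ : ℝ} (hs : 1 ≤ s)
    (hsσ : s ≤ σ) (n : ℕ) : ‖PL p χ s (n+2) - PL p χ σ (n+2)‖ ≤ (σ - s) * (p + 2) := by
  unfold PL
  rw [← Finset.sum_sub_distrib]
  rw [Finset.sum_range_succ', Finset.sum_range_succ']
  simp only [← sub_mul, ← Complex.ofReal_sub]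
  have h1 : ‖∑ i ∈ Finset.range n, (((((i+1+1 + 1 : ℕ) : ℝ) ^ (-s) - ((i+1+1 + 1 : ℕ) : ℝ) ^ (-σ)) : ℝ) : ℂ) * χ ((1 + (i+1+1) : ℕ) : ZMod p)‖ ≤ p * (σ - s) := by
    have := char_abel p χ hχ 3 n (fun i => ((i+1+1 + 1 : ℕ) : ℝ) ^ (-s) - ((i+1+1 + 1 : ℕ) : ℝ) ^ (-σ)) (fun n => by
      apply hdiff_anti hs hsσ
      · simp only [Set.mem_Ici]; push_cast; linarith [(Nat.cast_nonneg n : (0:ℝ) ≤ n)]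
      · simp only [Set.mem_Ici]; push_cast; linarith [(Nat.cast_nonneg n : (0:ℝ) ≤ n)]
      · push_cast; linarith) (fun n => (hdiff_le hs hsσ (by push_cast; linarith [(Nat.cast_nonneg n : (0:ℝ) ≤ n)])).1)
    have h2 := (hdiff_le (x := ((0+1+1 + 1 : ℕ) : ℝ)) hs hsσ (by norm_num)).2
    refine le_trans (le_of_eq ?_) (this.trans (mul_le_mul_of_nonneg_left h2 (by positivity)))
    congr 1
    apply Finset.sum_congr rfl; intro i _
    rw [show 1 + (i+1+1) = 3 + i by ring]
  have h2 : ∀ k : ℕ, ‖(((((k + 1 : ℕ) : ℝ) ^ (-s) - ((k + 1 : ℕ) : ℝ) ^ (-σ)) : ℝ) : ℂ) * χ ((1 + k : ℕ) : ZMod p)‖ ≤ σ - s := by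
    intro k
    have h := hdiff_le (x := ((k + 1 : ℕ) : ℝ)) hs hsσ (by push_cast; linarith [(Nat.cast_nonneg k : (0:ℝ) ≤ k)])
    rw [norm_mul, Complex.norm_real, Real.norm_of_nonneg h.1]
    calc _ ≤ (σ - s) * 1 := mul_le_mul h.2 (χ.norm_le_one _) (norm_nonneg _) (by linarith)
      _ = _ := mul_one _
  refine (norm_add_le _ _).trans ?_
  have h3 := norm_add_le (∑ i ∈ Finset.range n, (((((i+1+1 + 1 : ℕ) : ℝ) ^ (-s) - ((i+1+1 + 1 : ℕ) : ℝ) ^ (-σ)) : ℝ) : ℂ) * χ ((1 + (i+1+1) : ℕ) : ZMod p))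
    ((((((0+1 + 1 : ℕ) : ℝ) ^ (-s) - ((0+1 + 1 : ℕ) : ℝ) ^ (-σ)) : ℝ) : ℂ) * χ ((1 + (0+1) : ℕ) : ZMod p))
  have := h2 0
  have := h2 (0+1)
  linarith

open scoped LSeries.notation in
lemma PL_tendsto (p : ℕ) (χ : DirichletCharacter ℂ p) {s : ℝ} (hs : 1 < s) :
    Tendsto (fun n => PL p χ s n) atTop (nhds (LSeries (fun n : ℕ => χ n) s)) := by
  have hsum : LSeriesSummable (fun n : ℕ => χ n) s := DirichletCharacter.LSeriesSummable_of_one_lt_re χ (by simpa using hs)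
  have h := hsum.hasSum.tendsto_sum_nat
  have h' := h.comp (tendsto_add_atTop_nat 1)
  refine h'.congr fun n => ?_
  simp only [Function.comp, PL]
  rw [Finset.sum_range_succ', LSeries.term_zero, add_zero]
  apply Finset.sum_congr rfl
  intro i _
  rw [LSeries.term_of_ne_zero (by omega), add_comm 1 i, div_eq_mul_inv, mul_comm]
  congr 1
  rw [Complex.ofReal_cpow (by positivity), Complex.ofReal_neg, Complex.cpow_neg]
  simp

lemma LS_bound (p : ℕ) [NeZero p] (χ : DirichletCharacter ℂ p) (hχ : χ ≠ 1) {s : ℝ} (hs : 1 < s) :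
    ‖LSeries (fun n : ℕ => χ n) s‖ ≤ p :=
  le_of_tendsto (PL_tendsto p χ hs).norm (Eventually.of_forall fun n => PL_bound p χ hχ hs.le n)

lemma LS_diff (p : ℕ) [NeZero p] (χ : DirichletCharacter ℂ p) (hχ : χ ≠ 1) {s σ : ℝ} (hs : 1 < s)
    (hsσ : s ≤ σ) : ‖LSeries (fun n : ℕ => χ n) s - LSeries (fun n : ℕ => χ n) σ‖ ≤ (σ - s) * (p + 2) := by
  have := ((PL_tendsto p χ hs).sub (PL_tendsto p χ (hs.trans_le hsσ))).norm.comp (tendsto_add_atTop_nat 2)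
  exact le_of_tendsto this (Eventually.of_forall fun n => PL_diff p χ hχ hs.le hsσ n)
end CycNum

namespace CycNum
lemma tele_up {x n : ℝ} (hx : 0 < x) (hn : 0 < n) : x * (n+1)^(-(1+x)) ≤ n^(-x) - (n+1)^(-x) := by
  have hn1 : 0 < n + 1 := by linarith
  have e1 : n^(-x) = (n+1)^(-x) * ((n+1)/n)^x := by
    rw [div_rpow hn1.le hn.le, rpow_neg hn1.le, rpow_neg hn.le]
    have := (rpow_pos_of_pos hn1 x).ne'
    field_simp
  have e2 : (n+1)^(-(1+x)) = (n+1)^(-x) * (n+1)⁻¹ := by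
    rw [← rpow_neg_one, ← rpow_add hn1]; congr 1; ring
  have h1 : 1 + x * (n+1)⁻¹ ≤ ((n+1)/n)^x := by
    have hq : 0 < (n+1)/n := by positivity
    rw [rpow_def_of_pos hq]
    have h2 := one_sub_inv_le_log_of_pos hq
    have h3 : 1 - ((n+1)/n)⁻¹ = (n+1)⁻¹ := by field_simp; ring
    have := add_one_le_exp (log ((n+1)/n) * x)
    rw [h3] at h2
    nlinarith
  have h0 : 0 < (n+1)^(-x) := rpow_pos_of_pos hn1 _
  rw [e1, e2]
  nlinarith [mul_le_mul_of_nonneg_left h1 h0.le]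

lemma tele_low {x n : ℝ} (hx : 0 < x) (hn : 0 < n) : n^(-x) - (n+1)^(-x) ≤ x * n^(-(1+x)) := by
  have hn1 : 0 < n + 1 := by linarith
  have e1 : (n+1)^(-x) = n^(-x) * ((n+1)/n)^(-x) := by
    rw [div_rpow hn1.le hn.le, rpow_neg hn1.le, rpow_neg hn.le]
    have := (rpow_pos_of_pos hn1 x).ne'
    have := (rpow_pos_of_pos hn x).ne'
    field_simp
  have e2 : n^(-(1+x)) = n^(-x) * n⁻¹ := by
    rw [← rpow_neg_one, ← rpow_add hn]; congr 1; ring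
  have h1 : 1 - x * n⁻¹ ≤ ((n+1)/n)^(-x) := by
    have hq : 0 < (n+1)/n := by positivity
    rw [rpow_def_of_pos hq]
    have h2 := log_le_sub_one_of_pos hq
    have h3 : (n+1)/n - 1 = n⁻¹ := by field_simp; ring
    have := add_one_le_exp (log ((n+1)/n) * -x)
    rw [h3] at h2
    nlinarith
  have h0 : 0 < n^(-x) := rpow_pos_of_pos hn _
  rw [e1, e2]
  nlinarith [mul_le_mul_of_nonneg_left h1 h0.le]

lemma zs_up {x : ℝ} (hx : 0 < x) (n : ℕ) : ∑ i ∈ Finset.range n, ((i+1:ℕ):ℝ)^(-(1+x)) ≤ 1 + x⁻¹ := by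
  cases n with
  | zero => simp; positivity
  | succ n =>
    rw [Finset.sum_range_succ']
    have : ∀ m : ℕ, x * ∑ i ∈ Finset.range m, ((i+1+1:ℕ):ℝ)^(-(1+x)) ≤ 1 - ((m+1:ℕ):ℝ)^(-x) := by
      intro m
      induction m with
      | zero => simp
      | succ m ih =>
        rw [Finset.sum_range_succ, mul_add]
        have := tele_up (n := (m+1:ℕ)) hx (by positivity)
        push_cast at *
        linarith
    have h := this n
    have h0 : (0:ℝ) ≤ ((n+1:ℕ):ℝ)^(-x) := by positivity
    have : ∑ i ∈ Finset.range n, ((i+1+1:ℕ):ℝ)^(-(1+x)) ≤ x⁻¹ := by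
      rw [← one_div, le_div_iff₀ hx]; linarith
    simp only [zero_add, Nat.cast_one, one_rpow]
    linarith

lemma zs_low {x : ℝ} (hx : 0 < x) (n : ℕ) :
    1 - ((n+1:ℕ):ℝ)^(-x) ≤ x * ∑ i ∈ Finset.range n, ((i+1:ℕ):ℝ)^(-(1+x)) := by
  induction n with
  | zero => simp
  | succ m ih =>
    rw [Finset.sum_range_succ, mul_add]
    have := tele_low (n := (m+1:ℕ)) hx (by positivity)
    push_cast at *
    linarith

lemma LS_one_up (p : ℕ) {x : ℝ} (hx : 0 < x) :
    ‖LSeries (fun n : ℕ => (1 : DirichletCharacter ℂ p) n) ((1 + x : ℝ) : ℂ)‖ ≤ 1 + x⁻¹ := by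
  refine le_of_tendsto (PL_tendsto p 1 (by linarith : 1 < 1 + x)).norm (Eventually.of_forall fun n => ?_)
  refine le_trans ?_ (zs_up hx n)
  refine (norm_sum_le _ _).trans (Finset.sum_le_sum fun i _ => ?_)
  rw [norm_mul, Complex.norm_real, Real.norm_of_nonneg (by positivity)]
  exact mul_le_of_le_one_right (by positivity) (DirichletCharacter.norm_le_one _ _)

lemma zeta_low {x : ℝ} (hx : 0 < x) : x⁻¹ ≤ ‖riemannZeta ((1 + x : ℝ) : ℂ)‖ := by
  have hs : 1 < 1 + x := by linarith
  have h1 := PL_tendsto 1 1 hs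
  rw [← DirichletCharacter.LFunction_eq_LSeries _ (by simpa using hx), DirichletCharacter.LFunction_modOne_eq] at h1
  have hlim : Tendsto (fun n : ℕ => x⁻¹ * (1 - ((n+1:ℕ):ℝ)^(-x))) atTop (nhds (x⁻¹ * (1 - 0))) := by
    refine Tendsto.const_mul _ (Tendsto.const_sub _ ?_)
    have := (tendsto_rpow_neg_atTop hx).comp (tendsto_natCast_atTop_atTop (R := ℝ))
    exact this.comp (tendsto_add_atTop_nat 1)
  rw [sub_zero, mul_one] at hlim
  refine le_of_tendsto_of_tendsto hlim h1.norm (Eventually.of_forall fun n => ?_)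
  have e : PL 1 1 (1+x) n = ((∑ i ∈ Finset.range n, ((i+1:ℕ):ℝ)^(-(1+x)) : ℝ) : ℂ) := by
    unfold PL; push_cast
    apply Finset.sum_congr rfl; intro i _
    rw [MulChar.one_apply (isUnit_of_subsingleton _), mul_one]
  simp only
  rw [e, Complex.norm_real, Real.norm_of_nonneg (by positivity), inv_mul_le_iff₀ hx]
  exact zs_low hx n

lemma LS_one_low (p : ℕ) (hp : p.Prime) {x : ℝ} (hx : 0 < x) :
    x⁻¹ / 2 ≤ ‖LSeries (fun n : ℕ => (1 : DirichletCharacter ℂ p) n) ((1 + x : ℝ) : ℂ)‖ := by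
  have : NeZero p := ⟨hp.ne_zero⟩
  have h := DirichletCharacter.LFunctionTrivChar_eq_mul_riemannZeta (N := p) (s := ((1 + x : ℝ) : ℂ)) (by
    intro h; have := congrArg Complex.re h; simp at this; linarith)
  rw [DirichletCharacter.LFunctionTrivChar, DirichletCharacter.LFunction_eq_LSeries _ (by simpa using hx), hp.primeFactors, Finset.prod_singleton] at h
  have hp2 : (2:ℝ) ≤ p := by exact_mod_cast hp.two_le
  rw [h, norm_mul, mul_comm, div_eq_mul_inv]
  refine mul_le_mul (zeta_low hx) ?_ (by norm_num) (norm_nonneg _)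
  have h2 : ‖(p:ℂ)^(-((1+x:ℝ):ℂ))‖ ≤ 1/2 := by
    rw [Complex.norm_natCast_cpow_of_pos hp.pos]
    simp only [Complex.neg_re, Complex.ofReal_re]
    calc (p:ℝ)^(-(1+x)) ≤ (p:ℝ)^(-1:ℝ) := rpow_le_rpow_of_exponent_le (by linarith) (by linarith)
      _ = (p:ℝ)⁻¹ := rpow_neg_one _
      _ ≤ 1/2 := by rw [inv_le_comm₀ (by linarith) (by norm_num)]; norm_num; exact hp.two_le
  have h3 := norm_sub_norm_le (1:ℂ) ((p:ℂ)^(-((1+x:ℝ):ℂ)))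
  rw [norm_one] at h3
  have e : (2:ℝ)⁻¹ = 1/2 := by norm_num
  rw [e]
  linarith

lemma LS_complex (p : ℕ) (hp : p.Prime) (χ : DirichletCharacter ℂ p) (hχ : χ^2 ≠ 1) {s : ℝ} (hs : 1 < s)
    (hs2 : s ≤ 1 + 1 / (2048 * (p:ℝ)^5)) : 1 / (1024 * (p:ℝ)^4) ≤ ‖LSeries (fun n : ℕ => χ n) s‖ := by
  have : NeZero p := ⟨hp.ne_zero⟩
  have hχ1 : χ ≠ 1 := by rintro rfl; simp at hχ
  have hp2 : (2:ℝ) ≤ p := by exact_mod_cast hp.two_le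
  set x : ℝ := 1 / (2048 * (p:ℝ)^5) with hx
  have hx0 : 0 < x := by positivity
  have hx1 : x ≤ 1 := by
    rw [hx, div_le_one (by positivity)]
    have : (1:ℝ) ≤ (p:ℝ)^5 := one_le_pow₀ (by linarith)
    linarith
  have h341 := DirichletCharacter.norm_LSeries_product_ge_one χ hx0 0
  simp only [Complex.ofReal_zero, mul_zero, add_zero] at h341
  rw [show (1 + (x:ℂ)) = ((1 + x : ℝ) : ℂ) by push_cast; rfl] at h341
  rw [norm_mul, norm_mul, norm_pow, norm_pow] at h341
  have h1 := LS_one_up p hx0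
  have h2 := LS_bound p (χ^2) hχ (by linarith : 1 < 1 + x)
  have h3 := LS_diff p χ hχ1 hs hs2
  set a := ‖LSeries (fun n : ℕ => χ n) ((1 + x : ℝ) : ℂ)‖ with ha
  have h1' : 1 + x⁻¹ ≤ 2 / x := by
    have : 1 ≤ x⁻¹ := (one_le_inv₀ hx0).2 hx1
    rw [div_eq_mul_inv]; linarith
  have h4 : 1 ≤ (2/x)^3 * a^4 * p := by
    refine (ge_iff_le.1 h341).trans ?_
    gcongr
    exact h1.trans h1'
  have h5 : 4 * x * p ≤ a := by
    by_contra hlt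
    push Not at hlt
    have h6 : a^4 < (4 * x * p)^4 := by
      apply pow_lt_pow_left₀ hlt (norm_nonneg _) (by norm_num)
    have h7 : (2/x)^3 * a^4 * p < (2/x)^3 * (4 * x * p)^4 * p := by gcongr
    have h8 : (2/x)^3 * (4 * x * p)^4 * p = 1 := by
      have : x * (2048 * (p:ℝ)^5) = 1 := by rw [hx]; field_simp
      field_simp
      linarith
    linarith
  have h9 : a - (1 + x - s) * (p+2) ≤ ‖LSeries (fun n : ℕ => χ n) s‖ := by
    have := norm_sub_norm_le (LSeries (fun n : ℕ => χ n) ((1 + x : ℝ) : ℂ)) (LSeries (fun n : ℕ => χ n) s)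
    rw [norm_sub_rev] at this
    linarith
  have h10 : (1 + x - s) * (p+2) ≤ x * (2 * p) := by
    apply mul_le_mul <;> nlinarith
  have h11 : 1 / (1024 * (p:ℝ)^4) = 2 * x * p := by rw [hx]; field_simp; norm_num
  linarith
end CycNum

namespace CycNum
lemma geom_amgm {t : ℝ} (ht : 0 ≤ t) (d : ℕ) :
    (d:ℝ) * (√t)^(d-1) ≤ ∑ i ∈ Finset.range d, t^i := by
  have h1 := Finset.sum_range_reflect (fun i => t^i) d
  have h2 : 2 * ∑ i ∈ Finset.range d, t^i = ∑ i ∈ Finset.range d, (t^i + t^(d-1-i)) := by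
    rw [Finset.sum_add_distrib, h1]; ring
  have h3 : ∑ i ∈ Finset.range d, 2 * (√t)^(d-1) ≤ ∑ i ∈ Finset.range d, (t^i + t^(d-1-i)) := by
    apply Finset.sum_le_sum
    intro i hi
    rw [Finset.mem_range] at hi
    have e1 : t^i = ((√t)^i)^2 := by rw [← pow_mul, mul_comm, pow_mul, sq_sqrt ht]
    have e2 : t^(d-1-i) = ((√t)^(d-1-i))^2 := by rw [← pow_mul, mul_comm, pow_mul, sq_sqrt ht]
    have e3 : (√t)^(d-1) = (√t)^i * (√t)^(d-1-i) := by rw [← pow_add]; congr 1; omega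
    rw [e1, e2, e3]
    nlinarith [sq_nonneg ((√t)^i - (√t)^(d-1-i))]
  rw [Finset.sum_const, Finset.card_range, nsmul_eq_mul] at h3
  linarith

lemma geomS (t : ℝ) (d : ℕ) : (1 - t) * ∑ i ∈ Finset.range d, t^i = 1 - t^d := by
  rw [mul_comm]; exact geom_sum_mul_neg t d

lemma g_anti {t : ℝ} (ht : 0 < t) (ht1 : t < 1) (d : ℕ) (hd : 0 < d) :
    ((d+1:ℕ):ℝ)⁻¹ / (1-t) - t^(d+1)/(1-t^(d+1)) ≤ (d:ℝ)⁻¹ / (1-t) - t^d/(1-t^d) := by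
  set S := ∑ i ∈ Finset.range d, t^i with hS
  set S' := ∑ i ∈ Finset.range (d+1), t^i with hS'
  have h1 : (1-t) * S = 1 - t^d := geomS t d
  have h2 : (1-t) * S' = 1 - t^(d+1) := geomS t (d+1)
  have h1t : 0 < 1 - t := by linarith
  have hr : S' = S + t^d := Finset.sum_range_succ _ _
  have hSl := geom_amgm ht.le d
  have hSl' := geom_amgm ht.le (d+1)
  rw [← hS] at hSl
  rw [← hS', Nat.add_sub_cancel] at hSl'
  have hd0 : (0:ℝ) < d := by exact_mod_cast hd
  have hq0 : 0 < √t := sqrt_pos.2 ht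
  have hq1 : √t ≤ 1 := by rw [sqrt_le_one]; exact ht1.le
  have hSl2 : (d:ℝ) * (√t)^d ≤ S := by
    refine le_trans ?_ hSl
    exact mul_le_mul_of_nonneg_left (pow_le_pow_of_le_one hq0.le hq1 (Nat.sub_le d 1)) hd0.le
  have hS0 : 0 < S := lt_of_lt_of_le (by positivity) hSl2
  have hS0' : 0 < S' := lt_of_lt_of_le (by positivity) hSl'
  have hprod : (d:ℝ) * (d+1) * t^d ≤ S * S' := by
    have : (d:ℝ) * (√t)^d * (((d+1:ℕ):ℝ) * (√t)^d) ≤ S * S' := by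
      apply mul_le_mul hSl2 hSl' (by positivity) hS0.le
    have e : t^d = (√t)^d * (√t)^d := by rw [← mul_pow, mul_self_sqrt ht.le]
    rw [e]; push_cast at this; linarith
  rw [← h1, ← h2]
  have e1 : t^d/((1-t)*S) - t^(d+1)/((1-t)*S') = t^d / (S*S') / (1-t) := by
    have : S' - t * S = 1 := by rw [hr]; linarith
    field_simp
    rw [pow_succ]
    linear_combination (t^d) * this
  have e2 : (d:ℝ)⁻¹/(1-t) - ((d+1:ℕ):ℝ)⁻¹/(1-t) = 1/(d*(d+1)) / (1-t) := by
    push_cast; field_simp; ring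
  have e3 : t^d / (S*S') / (1-t) ≤ 1/(d*(d+1)) / (1-t) := by
    refine div_le_div_of_nonneg_right ?_ h1t.le
    rw [div_le_div_iff₀ (by positivity) (by positivity)]
    linarith
  linarith

lemma g_nonneg {t : ℝ} (ht : 0 < t) (ht1 : t < 1) (d : ℕ) (hd : 0 < d) :
    0 ≤ (d:ℝ)⁻¹ / (1-t) - t^d/(1-t^d) := by
  set S := ∑ i ∈ Finset.range d, t^i with hS
  have h1 : (1-t) * S = 1 - t^d := geomS t d
  have h1t : 0 < 1 - t := by linarith
  have hd0 : (0:ℝ) < d := by exact_mod_cast hd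
  have hSl : (d:ℝ) * t^d ≤ S := by
    rw [hS, ← nsmul_eq_mul, ← Finset.card_range d, ← Finset.sum_const, Finset.card_range]
    apply Finset.sum_le_sum
    intro i hi
    exact pow_le_pow_of_le_one ht.le ht1.le (by rw [Finset.mem_range] at hi; omega)
  have hS0 : 0 < S := lt_of_lt_of_le (by positivity) hSl
  rw [← h1, sub_nonneg, inv_eq_one_div, div_div, div_le_div_iff₀ (by positivity) (by positivity)]
  nlinarith

lemma lambert_term {t : ℝ} (ht : 0 < t) (ht1 : t < 1) (d D : ℕ) (hd : 0 < d) :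
    |t^d/(1-t^d) - ∑ n ∈ (Finset.Ioc 0 D).filter (fun n => d ∣ n), t^n| ≤ t^D / (1-t) := by
  have e : (Finset.Ioc 0 D).filter (fun n => d ∣ n) = (Finset.range (D/d)).image (fun k => d*(k+1)) := by
    ext n
    simp only [Finset.mem_filter, Finset.mem_Ioc, Finset.mem_image, Finset.mem_range]
    constructor
    · rintro ⟨⟨h1, h2⟩, ⟨k, rfl⟩⟩
      refine ⟨k-1, ?_, ?_⟩
      · have : k ≤ D/d := (Nat.le_div_iff_mul_le hd).2 (by linarith [mul_comm d k])
        have : 0 < k := Nat.pos_of_mul_pos_left h1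
        omega
      · have : 0 < k := Nat.pos_of_mul_pos_left h1
        rw [Nat.sub_add_cancel this]
    · rintro ⟨k, hk, rfl⟩
      refine ⟨⟨by positivity, ?_⟩, dvd_mul_right _ _⟩
      have := (Nat.le_div_iff_mul_le hd).1 (Nat.succ_le_of_lt hk)
      rw [mul_comm]; exact this
  rw [e, Finset.sum_image (by
    intro a _ b _ h
    have := Nat.eq_of_mul_eq_mul_left hd h
    omega)]
  have htd : t^d < 1 := pow_lt_one₀ ht.le ht1 (by omega)
  have htd0 : 0 < t^d := by positivity
  have e2 : ∑ k ∈ Finset.range (D/d), t^(d*(k+1)) = t^d * ((1 - (t^d)^(D/d))/(1-t^d)) := by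
    rw [← geomS (t^d), mul_div_cancel_left₀ _ (by linarith : (1:ℝ) - t^d ≠ 0), Finset.mul_sum]
    apply Finset.sum_congr rfl; intro k _
    rw [pow_mul, pow_succ']
  have e3 : t^d/(1-t^d) - t^d * ((1 - (t^d)^(D/d))/(1-t^d)) = t^(d*(D/d+1)) / (1-t^d) := by
    rw [pow_mul, pow_succ]; field_simp; ring
  rw [e2, e3, abs_of_nonneg (div_nonneg (by positivity) (by linarith))]
  apply div_le_div₀ (by positivity) _ (by linarith) _
  · apply pow_le_pow_of_le_one ht.le ht1.le
    have := Nat.div_add_mod D d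
    have := Nat.mod_lt D hd
    rw [mul_add]; omega
  · have : t^d ≤ t := by
      calc t^d ≤ t^1 := pow_le_pow_of_le_one ht.le ht1.le hd
        _ = t := pow_one t
    linarith
end CycNum

namespace CycNum
lemma zetaMul_apply' {N : ℕ} (χ : DirichletCharacter ℂ N) (n : ℕ) (hn : n ≠ 0) :
    χ.zetaMul n = ∑ d ∈ n.divisors, χ d := by
  rw [DirichletCharacter.zetaMul, ArithmeticFunction.coe_zeta_mul_apply]
  apply Finset.sum_congr rfl
  intro d hd
  exact if_neg (Nat.pos_of_mem_divisors hd).ne'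

open scoped ComplexOrder in
lemma zetaMul_sq {N : ℕ} {χ : DirichletCharacter ℂ N} (hχ : χ ^ 2 = 1) (m : ℕ) (hm : m ≠ 0) :
    1 ≤ χ.zetaMul (m^2) := by
  rw [χ.isMultiplicative_zetaMul.multiplicative_factorization _ (pow_ne_zero 2 hm)]
  unfold Finsupp.prod
  refine Finset.prod_induction _ (fun z : ℂ => 1 ≤ z) (fun a b ha hb => one_le_mul_of_one_le_of_one_le ha hb) le_rfl ?_
  intro q hq
  have hqp : q.Prime := Nat.prime_of_mem_primeFactors hq
  rw [Nat.factorization_pow, Finsupp.smul_apply, smul_eq_mul]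
  set k := m.factorization q
  have e : χ.zetaMul (q^(2*k)) = ∑ i ∈ Finset.range (2*k+1), (χ q)^i := by
    rw [zetaMul_apply' _ _ (pow_ne_zero _ hqp.ne_zero), Nat.sum_divisors_prime_pow hqp]
    simp
  change 1 ≤ χ.zetaMul (q^(2*k))
  rw [e]
  rcases MulChar.isQuadratic_iff_sq_eq_one.mpr hχ q with h | h | h
  · rw [h, Finset.sum_range_succ']
    simp
  · rw [h]; simp
    have : (0:ℂ) ≤ 2 * k := by positivity
    exact this
  · rw [h, neg_one_geom_sum, if_neg (by simp)]

lemma lambert_low (p : ℕ) {χ : DirichletCharacter ℂ p} (hχ : χ ^ 2 = 1) {t : ℝ} (ht : 0 < t) (ht1 : t < 1)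
    (M D : ℕ) (hD : M^2 ≤ D) :
    ∑ m ∈ Finset.Ioc 0 M, t^(m^2) - D * (t^D/(1-t)) ≤
      ∑ d ∈ Finset.Ioc 0 D, (χ d).re * (t^d/(1-t^d)) := by
  have h1 : ∑ n ∈ Finset.Ioc 0 D, (χ.zetaMul n).re * t^n =
      ∑ d ∈ Finset.Ioc 0 D, (χ d).re * ∑ n ∈ (Finset.Ioc 0 D).filter (fun n => d ∣ n), t^n := by
    have : ∀ n ∈ Finset.Ioc 0 D, (χ.zetaMul n).re * t^n = ∑ d ∈ Finset.Ioc 0 D, if d ∣ n then (χ d).re * t^n else 0 := by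
      intro n hn
      rw [Finset.mem_Ioc] at hn
      rw [zetaMul_apply' χ n (by omega), Complex.re_sum, Finset.sum_mul, ← Finset.sum_filter]
      apply Finset.sum_congr _ (fun _ _ => rfl)
      ext d
      simp only [Nat.mem_divisors, Finset.mem_filter, Finset.mem_Ioc]
      constructor
      · rintro ⟨h, h'⟩
        exact ⟨⟨Nat.pos_of_dvd_of_pos h hn.1, (Nat.le_of_dvd hn.1 h).trans hn.2⟩, h⟩
      · rintro ⟨_, h⟩
        exact ⟨h, by omega⟩
    rw [Finset.sum_congr rfl this, Finset.sum_comm]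
    apply Finset.sum_congr rfl
    intro d _
    rw [← Finset.sum_filter, Finset.mul_sum]
  have h2 : ∑ m ∈ Finset.Ioc 0 M, t^(m^2) ≤ ∑ n ∈ Finset.Ioc 0 D, (χ.zetaMul n).re * t^n := by
    calc ∑ m ∈ Finset.Ioc 0 M, t^(m^2) ≤ ∑ m ∈ Finset.Ioc 0 M, (χ.zetaMul (m^2)).re * t^(m^2) := by
          apply Finset.sum_le_sum
          intro m hm
          rw [Finset.mem_Ioc] at hm
          have := (Complex.le_def.1 (zetaMul_sq hχ m (by omega))).1
          rw [Complex.one_re] at this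
          exact le_mul_of_one_le_left (by positivity) this
      _ = ∑ n ∈ (Finset.Ioc 0 M).image (fun m => m^2), (χ.zetaMul n).re * t^n := by
          rw [Finset.sum_image]
          intro a _ b _ h
          exact Nat.pow_left_injective (n := 2) (by norm_num) h
      _ ≤ _ := by
          apply Finset.sum_le_sum_of_subset_of_nonneg
          · intro n hn
            rw [Finset.mem_image] at hn
            obtain ⟨m, hm, rfl⟩ := hn
            rw [Finset.mem_Ioc] at hm ⊢
            exact ⟨by have := hm.1; positivity, le_trans (Nat.pow_le_pow_left hm.2 2) hD⟩
          · intro n _ _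
            have := (Complex.le_def.1 (DirichletCharacter.zetaMul_nonneg hχ n)).1
            rw [Complex.zero_re] at this
            positivity
  have h3 : ∑ d ∈ Finset.Ioc 0 D, (χ d).re * ∑ n ∈ (Finset.Ioc 0 D).filter (fun n => d ∣ n), t^n
      ≤ ∑ d ∈ Finset.Ioc 0 D, ((χ d).re * (t^d/(1-t^d)) + t^D/(1-t)) := by
    apply Finset.sum_le_sum
    intro d hd
    rw [Finset.mem_Ioc] at hd
    have h4 := lambert_term ht ht1 d D hd.1
    have h5 : |(χ d).re| ≤ 1 := (Complex.abs_re_le_norm _).trans (χ.norm_le_one _)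
    have h6 := mul_le_mul h5 h4 (abs_nonneg _) (by norm_num)
    rw [← abs_mul] at h6
    have h7 := (abs_le.1 h6).1
    nlinarith
  rw [Finset.sum_add_distrib, Finset.sum_const, Nat.card_Ioc, nsmul_eq_mul] at h3
  simp only [Nat.sub_zero] at h3
  linarith

lemma PL_one_low (p : ℕ) [NeZero p] {χ : DirichletCharacter ℂ p} (hχ1 : χ ≠ 1) (hχ : χ ^ 2 = 1) {t : ℝ} (ht : 0 < t) (ht1 : t < 1)
    (M D : ℕ) (hD : M^2 ≤ D) :
    ∑ m ∈ Finset.Ioc 0 M, t^(m^2) - D * (t^D/(1-t)) - p ≤ (PL p χ 1 D).re / (1-t) := by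
  have h1 := lambert_low p hχ ht ht1 M D hD
  have h1t : 0 < 1 - t := by linarith
  have h2 := char_abel p χ hχ1 1 D (fun i => ((i+1:ℕ):ℝ)⁻¹ / (1-t) - t^(i+1)/(1-t^(i+1)))
    (fun n => g_anti ht ht1 (n+1) (by omega)) (fun n => g_nonneg ht ht1 (n+1) (by omega))
  have h3 : ((0+1:ℕ):ℝ)⁻¹ / (1-t) - t^(0+1)/(1-t^(0+1)) = 1 := by
    simp; field_simp
  rw [h3, mul_one] at h2
  have h4 := (abs_le.1 ((Complex.abs_re_le_norm _).trans h2)).1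
  rw [Complex.re_sum] at h4
  simp only [Complex.re_ofReal_mul, sub_mul] at h4
  rw [Finset.sum_sub_distrib] at h4
  have e1 : ∑ i ∈ Finset.range D, (((i+1:ℕ):ℝ)⁻¹ / (1-t)) * (χ ((1+i:ℕ) : ZMod p)).re = (PL p χ 1 D).re / (1-t) := by
    unfold PL
    rw [Complex.re_sum, Finset.sum_div]
    apply Finset.sum_congr rfl; intro i _
    rw [Complex.re_ofReal_mul, rpow_neg_one]; ring
  have e2 : ∑ i ∈ Finset.range D, t^(i+1)/(1-t^(i+1)) * (χ ((1+i:ℕ) : ZMod p)).re = ∑ d ∈ Finset.Ioc 0 D, (χ d).re * (t^d/(1-t^d)) := by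
    rw [← Finset.Ico_add_one_add_one_eq_Ioc, Finset.sum_Ico_eq_sum_range]
    apply Finset.sum_congr (by simp)
    intro i _
    rw [zero_add, add_comm i 1, mul_comm]
  rw [e1, e2] at h4
  linarith

lemma LS_real (p : ℕ) (hp : p.Prime) (χ : DirichletCharacter ℂ p) (hχ1 : χ ≠ 1) (hχ : χ^2 = 1) {s : ℝ} (hs : 1 < s)
    (hs2 : s ≤ 1 + 1 / (2048 * (p:ℝ)^5)) : 1 / (1024 * (p:ℝ)^4) ≤ ‖LSeries (fun n : ℕ => χ n) s‖ := by
  have : NeZero p := ⟨hp.ne_zero⟩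
  have hp2 : (2:ℝ) ≤ p := by exact_mod_cast hp.two_le
  set M := 2 * p + 3 with hM
  have hM3 : (3:ℝ) ≤ M := by rw [hM]; push_cast; linarith
  set t : ℝ := 1 - 1 / (2 * (M:ℝ)^2) with ht
  have hx1 : 1 / (2 * (M:ℝ)^2) ≤ 1/2 := by
    rw [div_le_div_iff₀ (by positivity) (by norm_num)]
    nlinarith
  have hx0 : 0 < 1 / (2 * (M:ℝ)^2) := by positivity
  have ht0 : 0 < t := by linarith
  have ht1 : t < 1 := by linarith
  have hsum : (M:ℝ)/2 ≤ ∑ m ∈ Finset.Ioc 0 M, t^(m^2) := by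
    have h1 : 1/2 ≤ t^(M^2) := by
      have h := one_add_mul_le_pow (a := -(1 / (2 * (M:ℝ)^2))) (by linarith) (M^2)
      have e : 1 + ((M^2:ℕ):ℝ) * -(1 / (2 * (M:ℝ)^2)) = 1/2 := by push_cast; field_simp; norm_num
      rw [e] at h
      rw [ht, sub_eq_add_neg]; exact h
    calc (M:ℝ)/2 = ∑ m ∈ Finset.Ioc 0 M, (1/2:ℝ) := by simp; ring
      _ ≤ _ := by
        apply Finset.sum_le_sum
        intro m hm
        rw [Finset.mem_Ioc] at hm
        refine h1.trans (pow_le_pow_of_le_one ht0.le ht1.le (Nat.pow_le_pow_left hm.2 2))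
  have hev : ∀ᶠ D : ℕ in atTop, (D:ℝ) * (t^D/(1-t)) < 1/2 := by
    have h := (tendsto_self_mul_const_pow_of_lt_one ht0.le ht1).div_const (1-t)
    rw [zero_div] at h
    filter_upwards [h.eventually_lt_const (by norm_num : (0:ℝ) < 1/2)] with D hD
    rwa [← mul_div_assoc]
  have hD : ∀ᶠ D : ℕ in atTop, 1 / (1024 * (p:ℝ)^4) ≤ ‖PL p χ s D‖ := by
    filter_upwards [hev, eventually_ge_atTop (M^2), eventually_ge_atTop 2] with D h1 h2 h3
    have h4 := PL_one_low p hχ1 hχ ht0 ht1 M D h2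
    have h5 : 1 ≤ (PL p χ 1 D).re / (1-t) := by
      have : (M:ℝ) = 2 * p + 3 := by rw [hM]; push_cast; ring
      linarith
    rw [le_div_iff₀ (by linarith), one_mul] at h5
    have e : 1 - t = 1 / (2 * (M:ℝ)^2) := by rw [ht]; ring
    have h6 : 1 / (32 * (p:ℝ)^2) ≤ 1 / (2 * (M:ℝ)^2) := by
      apply one_div_le_one_div_of_le (by positivity)
      have : (M:ℝ) ≤ 4 * p := by rw [hM]; push_cast; linarith
      nlinarith
    obtain ⟨D', rfl⟩ := Nat.exists_eq_add_of_le' h3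
    have h7 := PL_diff p χ hχ1 le_rfl hs.le D'
    have h8 : (s - 1) * (p + 2) ≤ 1 / (1024 * (p:ℝ)^4) := by
      calc (s-1) * (p+2) ≤ 1 / (2048 * (p:ℝ)^5) * (2 * p) := by
            apply mul_le_mul <;> first | linarith | positivity
        _ = _ := by field_simp; norm_num
    have h9 : 2 * (1 / (1024 * (p:ℝ)^4)) ≤ 1 / (32 * (p:ℝ)^2) := by
      rw [← mul_div_assoc, mul_one, div_le_div_iff₀ (by positivity) (by positivity)]
      have : (4:ℝ) ≤ (p:ℝ)^2 := by nlinarith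
      have e4 : (p:ℝ)^4 = (p:ℝ)^2 * (p:ℝ)^2 := by ring
      rw [e4]; nlinarith
    have h10 := Complex.re_le_norm (PL p χ 1 (D'+2))
    have h11 := norm_sub_norm_le (PL p χ 1 (D'+2)) (PL p χ s (D'+2))
    linarith
  exact ge_of_tendsto (PL_tendsto p χ hs).norm hD

lemma LS_low (p : ℕ) (hp : p.Prime) (χ : DirichletCharacter ℂ p) (hχ1 : χ ≠ 1) {s : ℝ} (hs : 1 < s)
    (hs2 : s ≤ 1 + 1 / (2048 * (p:ℝ)^5)) : 1 / (1024 * (p:ℝ)^4) ≤ ‖LSeries (fun n : ℕ => χ n) s‖ := by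
  by_cases h : χ^2 = 1
  · exact LS_real p hp χ hχ1 h hs hs2
  · exact LS_complex p hp χ h hs hs2
end CycNum

namespace CycNum
lemma logL_le (p : ℕ) [NeZero p] (χ : DirichletCharacter ℂ p) {s : ℝ} (hs : 1 < s) :
    log ‖LSeries (fun n : ℕ => χ n) s‖ ≤ ∑' q : Nat.Primes, ((χ (q:ℕ)).re * (q:ℝ)^(-s) + (q:ℝ)^(-2:ℝ)) := by
  have hs' : 1 < ((s:ℝ):ℂ).re := by simpa using hs
  have hE := DirichletCharacter.LSeries_eulerProduct_exp_log χ hs'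
  have hsm : Summable fun q : Nat.Primes => -Complex.log (1 - χ (q:ℕ) * (q:ℂ)^(-(s:ℂ))) :=
    DirichletCharacter.summable_neg_log_one_sub_mul_prime_cpow χ hs'
  rw [← hE, Complex.norm_exp, log_exp, Complex.re_tsum hsm]
  have hsP : Summable fun q : Nat.Primes => (q:ℝ)^(-s) := Nat.Primes.summable_rpow.2 (by linarith)
  have hsP2 : Summable fun q : Nat.Primes => (q:ℝ)^(-2:ℝ) := Nat.Primes.summable_rpow.2 (by norm_num)
  have hsP3 : Summable fun q : Nat.Primes => (χ (q:ℕ)).re * (q:ℝ)^(-s) := by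
    refine Summable.of_norm_bounded hsP fun q => ?_
    rw [norm_mul, Real.norm_of_nonneg (by positivity : (0:ℝ) ≤ (q:ℝ)^(-s))]
    exact mul_le_of_le_one_left (by positivity) ((Complex.abs_re_le_norm _).trans (χ.norm_le_one _))
  refine Summable.tsum_le_tsum (fun q => ?_) (Complex.hasSum_re hsm.hasSum).summable (hsP3.add hsP2)
  set z : ℂ := χ (q:ℕ) * (q:ℂ)^(-(s:ℂ)) with hz
  have hq2 : (2:ℝ) ≤ q := by exact_mod_cast q.2.two_le
  have hqs : (q:ℝ)^(-s) ≤ (q:ℝ)⁻¹ := by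
    rw [← rpow_neg_one]; exact rpow_le_rpow_of_exponent_le (by linarith) (by linarith)
  have hcp : (q:ℂ)^(-(s:ℂ)) = (((q:ℝ)^(-s) : ℝ) : ℂ) := by
    rw [Complex.ofReal_cpow (by positivity)]; push_cast; rfl
  have hqi : (q:ℝ)⁻¹ ≤ 1/2 := by
    rw [inv_le_comm₀ (by linarith) (by norm_num)]; linarith
  have hzn : ‖z‖ ≤ (q:ℝ)⁻¹ := by
    rw [hz, norm_mul, hcp, Complex.norm_real, Real.norm_of_nonneg (by positivity)]
    exact (mul_le_of_le_one_left (by positivity) (χ.norm_le_one _)).trans hqs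
  have hz1 : ‖z‖ ≤ 1/2 := hzn.trans hqi
  have h1 := Complex.norm_log_one_sub_inv_sub_self_le (z := z) (by linarith)
  have h2 : ‖z‖ ^ 2 * (1 - ‖z‖)⁻¹ / 2 ≤ ‖z‖^2 := by
    have : (1 - ‖z‖)⁻¹ ≤ 2 := by
      rw [inv_le_comm₀ (by linarith) (by norm_num)]; linarith
    nlinarith [sq_nonneg ‖z‖]
  have h3 := (Complex.re_le_norm _).trans (h1.trans h2)
  have h4 : (-Complex.log (1 - z)).re = (Complex.log (1-z)⁻¹).re := by
    rw [Complex.neg_re, Complex.log_re, Complex.log_re, norm_inv, log_inv]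
  rw [h4]
  rw [Complex.sub_re] at h3
  have h5 : z.re = (χ (q:ℕ)).re * (q:ℝ)^(-s) := by
    rw [hz, hcp, Complex.re_mul_ofReal]
  have h6 : ‖z‖^2 ≤ (q:ℝ)^(-2:ℝ) := by
    rw [rpow_neg (by positivity), rpow_two, ← inv_pow]
    gcongr
  linarith

lemma prime_sum_low : ∃ A : ℝ, 0 ≤ A ∧ ∀ p : ℕ, p.Prime → ∀ x : ℝ, 0 < x → x ≤ 1 / (2048 * (p:ℝ)^5) →
    log (1/x) / p - A - 15 * log p ≤ ∑' q : Nat.Primes, if ((q:ℕ) : ZMod p) = 1 then (q:ℝ)^(-(1+x)) else 0 := by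
  set A0 : ℝ := ∑' q : Nat.Primes, (q:ℝ)^(-2:ℝ) with hA0
  refine ⟨A0 + 1, by positivity, ?_⟩
  intro p hp x hx hx2
  have : NeZero p := ⟨hp.ne_zero⟩
  have hp2 : (2:ℝ) ≤ p := by exact_mod_cast hp.two_le
  have hs : 1 < 1 + x := by linarith
  have hsP : Summable fun q : Nat.Primes => (q:ℝ)^(-(1+x)) := Nat.Primes.summable_rpow.2 (by linarith)
  have hsP2 : Summable fun q : Nat.Primes => (q:ℝ)^(-2:ℝ) := Nat.Primes.summable_rpow.2 (by norm_num)
  have hsP3 : ∀ χ : DirichletCharacter ℂ p, Summable fun q : Nat.Primes => (χ (q:ℕ)).re * (q:ℝ)^(-(1+x)) := by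
    intro χ
    refine Summable.of_norm_bounded hsP fun q => ?_
    rw [norm_mul, Real.norm_of_nonneg (by positivity : (0:ℝ) ≤ (q:ℝ)^(-(1+x)))]
    exact mul_le_of_le_one_left (by positivity) ((Complex.abs_re_le_norm _).trans (χ.norm_le_one _))
  set T : ℝ := ∑' q : Nat.Primes, if ((q:ℕ) : ZMod p) = 1 then (q:ℝ)^(-(1+x)) else 0 with hT
  have hT0 : 0 ≤ T := tsum_nonneg fun q => by split_ifs <;> positivity
  have hcard : (Fintype.card (DirichletCharacter ℂ p) : ℝ) = p - 1 := by
    rw [← Nat.card_eq_fintype_card, DirichletCharacter.card_eq_totient_of_hasEnoughRootsOfUnity, Nat.totient_prime hp, Nat.cast_sub hp.one_le]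
    simp
  have hup : ∑ χ : DirichletCharacter ℂ p, log ‖LSeries (fun n : ℕ => χ n) ((1 + x : ℝ) : ℂ)‖ ≤ (p-1) * T + (p-1) * A0 := by
    calc _ ≤ ∑ χ : DirichletCharacter ℂ p, ∑' q : Nat.Primes, ((χ (q:ℕ)).re * (q:ℝ)^(-(1+x)) + (q:ℝ)^(-2:ℝ)) :=
          Finset.sum_le_sum fun χ _ => logL_le p χ hs
      _ = ∑ χ : DirichletCharacter ℂ p, (∑' q : Nat.Primes, (χ (q:ℕ)).re * (q:ℝ)^(-(1+x)) + A0) :=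
          Finset.sum_congr rfl fun χ _ => (hsP3 χ).tsum_add hsP2
      _ = ∑' q : Nat.Primes, ∑ χ : DirichletCharacter ℂ p, (χ (q:ℕ)).re * (q:ℝ)^(-(1+x)) + (p-1) * A0 := by
          rw [Finset.sum_add_distrib, Finset.sum_const, Finset.card_univ, nsmul_eq_mul, hcard, Summable.tsum_finsetSum fun χ _ => hsP3 χ]
      _ = _ := by
          congr 1
          rw [hT, ← tsum_mul_left]
          apply tsum_congr
          intro q
          rw [← Finset.sum_mul, ← Complex.re_sum, DirichletCharacter.sum_characters_eq, Nat.totient_prime hp]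
          split_ifs
          · rw [Complex.natCast_re, Nat.cast_sub hp.one_le]; simp
          · simp
  have hlow : log (x⁻¹/2) - (p-1) * log (1024 * (p:ℝ)^4) ≤ ∑ χ : DirichletCharacter ℂ p, log ‖LSeries (fun n : ℕ => χ n) ((1 + x : ℝ) : ℂ)‖ := by
    classical
    rw [← Finset.add_sum_erase Finset.univ _ (Finset.mem_univ (1 : DirichletCharacter ℂ p))]
    have h1 := log_le_log (by positivity) (LS_one_low p hp hx)
    have h2 : ∑ χ ∈ Finset.univ.erase (1 : DirichletCharacter ℂ p), (-log (1024 * (p:ℝ)^4)) ≤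
        ∑ χ ∈ Finset.univ.erase (1 : DirichletCharacter ℂ p), log ‖LSeries (fun n : ℕ => χ n) ((1 + x : ℝ) : ℂ)‖ := by
      apply Finset.sum_le_sum
      intro χ hχ
      rw [← log_inv, inv_eq_one_div]
      exact log_le_log (by positivity) (LS_low p hp χ (Finset.ne_of_mem_erase hχ) hs (by linarith))
    have hL0 : 0 ≤ log (1024 * (p:ℝ)^4) := by
      apply log_nonneg
      have : (1:ℝ) ≤ (p:ℝ)^4 := one_le_pow₀ (by linarith)
      linarith
    rw [Finset.sum_const, Finset.card_erase_of_mem (Finset.mem_univ _), Finset.card_univ, nsmul_eq_mul,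
      Nat.cast_sub Fintype.card_pos, hcard] at h2
    rw [Nat.cast_one] at h2
    nlinarith
  have hlog2 := log_two_lt_d9
  have hlogp : log 2 ≤ log p := log_le_log (by norm_num) hp2
  have e1 : log (1024 * (p:ℝ)^4) = 10 * log 2 + 4 * log p := by
    rw [log_mul (by norm_num) (by positivity), log_pow, show (1024:ℝ) = 2^10 by norm_num, log_pow]; norm_num
  have e2 : log (x⁻¹/2) = log (1/x) - log 2 := by
    rw [log_div (by positivity) (by norm_num), one_div]
  rw [e1, e2] at hlow
  have hp0 : (0:ℝ) < p := by linarith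
  have hA00 : 0 ≤ A0 := tsum_nonneg fun q => by positivity
  have key : log (1/x) ≤ p * T + p * (A0 + 1) + p * (15 * log p) := by
    nlinarith [mul_le_mul_of_nonneg_left hlogp (by linarith : (0:ℝ) ≤ p - 1), log_two_gt_d9]
  have : log (1/x) / p ≤ T + (A0 + 1) + 15 * log p := by
    rw [div_le_iff₀ hp0]; nlinarith
  linarith
end CycNum

namespace CycNum
lemma Ep_low : ∃ A : ℝ, 0 ≤ A ∧ ∀ p : ℕ, p.Prime → ∀ K : ℝ, 2048 * (p:ℝ)^5 ≤ K → ∀ y : ℕ, exp (K^2) ≤ y →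
    log K / p - A - 15 * log p ≤ ∑ q ∈ PA p y, (q:ℝ)⁻¹ := by
  obtain ⟨A, hA, h⟩ := prime_sum_low
  refine ⟨A + 1, by positivity, ?_⟩
  intro p hp K hK y hy
  have hp2 : (2:ℝ) ≤ p := by exact_mod_cast hp.two_le
  have hK0 : 0 < K := lt_of_lt_of_le (by positivity) hK
  have hy0 : (0:ℝ) < y := lt_of_lt_of_le (exp_pos _) hy
  set x : ℝ := 1/K with hx
  have hx0 : 0 < x := by positivity
  have h1 := h p hp x hx0 (one_div_le_one_div_of_le (by positivity) hK)
  have e1 : 1 / x = K := by rw [hx]; field_simp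
  rw [e1] at h1
  set f : ℕ → ℝ := fun n => if n.Prime ∧ n % p = 1 then (n:ℝ)^(-(1+x)) else 0 with hf
  have hf0 : ∀ n, 0 ≤ f n := fun n => by simp only [hf]; split_ifs <;> positivity
  have e2 : (∑' q : Nat.Primes, if ((q:ℕ) : ZMod p) = 1 then (q:ℝ)^(-(1+x)) else 0) = ∑' n, f n := by
    have := tsum_subtype {n : ℕ | n.Prime} (fun n : ℕ => if ((n:ℕ) : ZMod p) = 1 then (n:ℝ)^(-(1+x)) else 0)
    refine Eq.trans this (tsum_congr fun n => ?_)
    have hz : ((n:ℕ) : ZMod p) = 1 ↔ n % p = 1 := by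
      have := ZMod.natCast_eq_natCast_iff' n 1 p
      rw [Nat.cast_one, Nat.mod_eq_of_lt hp.one_lt] at this
      exact this
    simp only [Set.indicator, Set.mem_setOf_eq, hf, hz]
    by_cases a : n.Prime <;> by_cases b : n % p = 1 <;> simp [a, b]
  have tail : ∀ m : ℕ, x * ∑ j ∈ Finset.range m, f (y+1+j) ≤ (y:ℝ)^(-x) - ((y+m:ℕ):ℝ)^(-x) := by
    intro m
    induction m with
    | zero => simp
    | succ m ih =>
      rw [Finset.sum_range_succ, mul_add]
      have h2 := tele_up (n := (y+m:ℕ)) hx0 (by push_cast; positivity)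
      have h3 : f (y+1+m) ≤ (((y+m:ℕ):ℝ)+1)^(-(1+x)) := by
        simp only [hf]; split_ifs
        · apply le_of_eq; push_cast; congr 1; ring
        · positivity
      have h4 := mul_le_mul_of_nonneg_left h3 hx0.le
      have e : ((y+(m+1):ℕ):ℝ) = ((y+m:ℕ):ℝ)+1 := by push_cast; ring
      rw [e]; linarith
  have hyx : (y:ℝ)^(-x) ≤ x := by
    have h2 : K^2 ≤ log y := (le_log_iff_exp_le hy0).2 hy
    rw [rpow_def_of_pos hy0]
    have h3 : K ≤ log y * x := by
      rw [hx, mul_one_div, le_div_iff₀ hK0]; nlinarith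
    calc exp (log y * -x) ≤ exp (-K) := exp_le_exp.2 (by linarith)
      _ = 1 / exp K := by rw [exp_neg, one_div]
      _ ≤ 1 / K := one_div_le_one_div_of_le hK0 (by linarith [add_one_le_exp K])
  have tail' : ∀ m : ℕ, ∑ j ∈ Finset.range m, f (y+1+j) ≤ 1 := by
    intro m
    have h2 := tail m
    have h3 : (0:ℝ) ≤ ((y+m:ℕ):ℝ)^(-x) := by positivity
    have h4 : x * ∑ j ∈ Finset.range m, f (y+1+j) ≤ x * 1 := by linarith
    exact le_of_mul_le_mul_left h4 hx0
  have head : ∑ n ∈ Finset.range (y+1), f n ≤ ∑ q ∈ PA p y, (q:ℝ)⁻¹ := by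
    unfold PA
    rw [← Finset.sum_filter]
    apply Finset.sum_le_sum
    intro q hq
    have hq1 : (1:ℝ) ≤ q := by exact_mod_cast (Finset.mem_filter.1 hq).2.1.one_le
    rw [← rpow_neg_one]
    exact rpow_le_rpow_of_exponent_le hq1 (by linarith)
  have hts : ∑' n, f n ≤ ∑ q ∈ PA p y, (q:ℝ)⁻¹ + 1 := by
    apply Real.tsum_le_of_sum_range_le hf0
    intro n
    calc ∑ i ∈ Finset.range n, f i ≤ ∑ i ∈ Finset.range (y+1+n), f i :=
          Finset.sum_le_sum_of_subset_of_nonneg (Finset.range_mono (by omega)) fun i _ _ => hf0 i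
      _ = ∑ i ∈ Finset.range (y+1), f i + ∑ j ∈ Finset.range n, f (y+1+j) := Finset.sum_range_add _ _ _
      _ ≤ _ := add_le_add head (tail' n)
  rw [e2] at h1
  linarith
end CycNum

namespace CycNum
open Finset in
lemma rough_count (a : ℕ) (ha : 0 < a) (n : ℕ) :
    |(#{x ∈ range n | a.Coprime x} : ℝ) - (a.totient : ℝ) / a * n| ≤ a := by
  set r : ℕ → ℕ := fun n => #{x ∈ range n | a.Coprime x} with hr
  have hmono : Monotone r := fun m n h => card_le_card (filter_subset_filter _ (range_mono h))
  have hmul : ∀ q, r (a * q) = a.totient * q := by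
    intro q
    induction q with
    | zero => simp [hr]
    | succ q ih =>
      have h1 := Nat.filter_coprime_Ico_eq_totient a (a*q)
      have h2 : r (a * (q+1)) = r (a*q) + #{x ∈ Ico (a*q) (a*q+a) | a.Coprime x} := by
        simp only [hr]
        rw [← card_union_of_disjoint]
        · rw [← filter_union]; congr 2
          rw [mul_add, mul_one]
          ext x; simp only [mem_range, mem_union, mem_Ico]; omega
        · apply disjoint_filter_filter
          rw [disjoint_left]; intro x; simp only [mem_range, mem_Ico]; omega
      rw [h2, ih, h1]; ring
  set q := n / a with hq
  have hdm : a * q + n % a = n := Nat.div_add_mod n a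
  have hlt := Nat.mod_lt n ha
  have h1 : r (a*q) ≤ r n := hmono (by omega)
  have h2 : r n ≤ r (a*(q+1)) := hmono (by rw [mul_add]; omega)
  rw [hmul] at h1 h2
  have h1' : (a.totient : ℝ) * q ≤ r n := by exact_mod_cast h1
  have h2' : (r n : ℝ) ≤ a.totient * (q+1) := by exact_mod_cast h2
  have ha0 : (0:ℝ) < a := by exact_mod_cast ha
  have h3 : (q:ℝ) ≤ n / a := Nat.cast_div_le
  have h4 : (n:ℝ) / a ≤ q + 1 := by
    rw [div_le_iff₀ ha0]
    have : n ≤ (q+1) * a := by rw [add_mul, mul_comm q a]; omega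
    exact_mod_cast this
  have h5 : (a.totient : ℝ) ≤ a := by exact_mod_cast Nat.totient_le a
  have h6 : (0:ℝ) ≤ a.totient := by positivity
  have e : (a.totient : ℝ) / a * n = a.totient * (n / a) := by ring
  rw [e, abs_le]
  constructor <;> nlinarith [mul_le_mul_of_nonneg_left h3 h6, mul_le_mul_of_nonneg_left h4 h6]

open Finset in
lemma rough_sum (a : ℕ) (ha : 0 < a) (N : ℕ) (hN : 0 < N) :
    |(∑ x ∈ range (N+1) with a.Coprime x, (x:ℝ)) - (a.totient : ℝ) / a * (N:ℝ)^2 / 2| ≤ 10 * (N:ℝ) * a := by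
  set ρ : ℝ := (a.totient : ℝ) / a with hρ
  have ha0 : (0:ℝ) < a := by exact_mod_cast ha
  have ha1 : (1:ℝ) ≤ a := by exact_mod_cast ha
  have hρ0 : 0 ≤ ρ := by positivity
  have hρ1 : ρ ≤ 1 := by
    rw [hρ, div_le_one ha0]; exact_mod_cast Nat.totient_le a
  set r : ℕ → ℝ := fun n => (#{x ∈ range n | a.Coprime x} : ℝ) with hr
  have hrs : ∀ n, r (n+1) = r n + if a.Coprime n then 1 else 0 := by
    intro n
    simp only [hr]
    rw [range_add_one, filter_insert]
    split_ifs
    · rw [card_insert_of_notMem (by simp)]; simp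
    · simp
  have hid : ∀ n : ℕ, (∑ x ∈ range n with a.Coprime x, (x:ℝ)) + (∑ k ∈ range n, r (k+1)) = n * r n := by
    intro n
    induction n with
    | zero => simp
    | succ n ih =>
      rw [sum_range_succ (fun k => r (k+1)), sum_filter, sum_range_succ, ← sum_filter]
      have h := hrs n
      push_cast
      split_ifs at h ⊢ <;> rw [h] <;> linarith
  have hb : ∀ n, |r n - ρ * n| ≤ a := fun n => rough_count a ha n
  have hS : |(∑ k ∈ range (N+1), r (k+1)) - (∑ k ∈ range (N+1), ρ * ((k+1:ℕ):ℝ))| ≤ (N+1) * a := by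
    rw [← sum_sub_distrib]
    refine (abs_sum_le_sum_abs _ _).trans ?_
    refine (sum_le_sum fun k _ => hb (k+1)).trans (le_of_eq ?_)
    simp
  have hG : ∑ k ∈ range (N+1), ρ * ((k+1:ℕ):ℝ) = ρ * ((N+1)*(N+2)/2) := by
    rw [← mul_sum]; congr 1
    have : ∀ m : ℕ, ∑ k ∈ range m, ((k+1:ℕ):ℝ) = m * (m+1)/2 := by
      intro m
      induction m with
      | zero => simp
      | succ m ih => rw [sum_range_succ, ih]; push_cast; ring
    rw [this]; push_cast; ring
  have h1 := hid (N+1)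
  have h2 := abs_le.1 (hb (N+1))
  rw [hG] at hS
  have h3 := abs_le.1 hS
  have hN1 : (1:ℝ) ≤ N := by exact_mod_cast hN
  push_cast at h1 h2
  have e : (∑ x ∈ range (N+1) with a.Coprime x, (x:ℝ)) = (N+1) * r (N+1) - ∑ k ∈ range (N+1), r (k+1) := by linarith
  rw [e]
  have h4 : (N+1:ℝ) * (r (N+1) - ρ * (N+1)) ≤ (N+1) * a := by
    apply mul_le_mul_of_nonneg_left h2.2 (by positivity)
  have h5 : -((N+1) * a) ≤ (N+1:ℝ) * (r (N+1) - ρ * (N+1)) := by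
    have := mul_le_mul_of_nonneg_left h2.1 (by positivity : (0:ℝ) ≤ N+1)
    linarith
  have h6 : (N+1:ℝ) * a ≤ 2 * N * a := by nlinarith
  have h7 : 0 ≤ ρ * N := by positivity
  have h8 : ρ * N ≤ N * a := by nlinarith
  rw [abs_le]
  constructor
  · nlinarith
  · nlinarith

open Finset in
lemma rough_iff (z n : ℕ) : (primorial z).Coprime n ↔ ∀ p, p.Prime → p ≤ z → ¬ p ∣ n := by
  unfold primorial
  rw [Nat.coprime_prod_left_iff]
  constructor
  · intro h p hp hz
    exact (hp.coprime_iff_not_dvd).1 (h p (by simp [hp]; omega))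
  · intro h p hp
    simp only [mem_filter, mem_range] at hp
    exact (hp.2.coprime_iff_not_dvd).2 (h p hp.2 (by omega))

noncomputable def V (z : ℕ) : ℝ := ∏ p ∈ (Finset.range (z+1)).filter Nat.Prime, (1 - (p:ℝ)⁻¹)

lemma totient_primorial (z : ℕ) : ((primorial z).totient : ℝ) / primorial z = V z := by
  have h := Nat.totient_eq_mul_prod_factors (primorial z)
  have hpf : (primorial z).primeFactors = (Finset.range (z+1)).filter Nat.Prime := by
    unfold primorial
    rw [Nat.primeFactors_prod]
    intro p hp; exact (Finset.mem_filter.1 hp).2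
  rw [hpf] at h
  have hpos : (0:ℝ) < primorial z := by exact_mod_cast primorial_pos z
  rw [div_eq_iff hpos.ne', V, mul_comm]
  have := congrArg (fun q : ℚ => (q:ℝ)) h
  push_cast at this
  exact this
end CycNum

namespace CycNum

noncomputable def bb (n : ℕ) : ℝ := if n.Prime then -Real.log (1 - (n:ℝ)⁻¹) else 0

lemma bb_low {p : ℕ} (hp : p.Prime) : (p:ℝ)⁻¹ ≤ bb p := by
  have h2 : (2:ℝ) ≤ p := by exact_mod_cast hp.two_le
  have h0 : (p:ℝ)⁻¹ < 1 := inv_lt_one_of_one_lt₀ (by linarith)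
  rw [bb, if_pos hp]
  have := Real.log_le_sub_one_of_pos (x := 1 - (p:ℝ)⁻¹) (by linarith)
  linarith

lemma bb_up {p : ℕ} (hp : p.Prime) : bb p ≤ ((p:ℝ)-1)⁻¹ := by
  have h2 : (2:ℝ) ≤ p := by exact_mod_cast hp.two_le
  have h0 : (p:ℝ)⁻¹ < 1 := inv_lt_one_of_one_lt₀ (by linarith)
  rw [bb, if_pos hp]
  have := Real.one_sub_inv_le_log_of_pos (x := 1 - (p:ℝ)⁻¹) (by linarith)
  have e : (1 - (p:ℝ)⁻¹)⁻¹ = 1 + ((p:ℝ)-1)⁻¹ := by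
    have : (p:ℝ) - 1 ≠ 0 := by linarith
    have : (p:ℝ) ≠ 0 := by linarith
    field_simp
    ring
  rw [e] at this
  linarith

lemma bb_nonneg (n : ℕ) : 0 ≤ bb n := by
  by_cases h : n.Prime
  · exact le_trans (by positivity) (bb_low h)
  · simp [bb, h]

lemma sum_log_quad : ∃ D : ℝ, 0 ≤ D ∧ ∀ s : Finset ℕ, (∀ p ∈ s, Nat.Prime p) →
    ∑ p ∈ s, Real.log p * (((p:ℝ)-1)⁻¹ - (p:ℝ)⁻¹) ≤ D := by
  have hs : Summable (fun n : ℕ => 4 * (1 / (n:ℝ)^(3/2:ℝ))) :=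
    (Real.summable_one_div_nat_rpow.2 (by norm_num)).mul_left 4
  refine ⟨∑' n : ℕ, 4 * (1 / (n:ℝ)^(3/2:ℝ)), tsum_nonneg fun n => by positivity, ?_⟩
  intro s hsp
  refine le_trans (Finset.sum_le_sum fun p hp => ?_) (hs.sum_le_tsum s (fun n _ => by positivity))
  have h2 : (2:ℝ) ≤ p := by exact_mod_cast (hsp p hp).two_le
  have hp0 : (0:ℝ) < p := by linarith
  have h1 : Real.log p ≤ 2 * (p:ℝ)^(1/2:ℝ) := by
    have := Real.log_le_rpow_div hp0.le (show (0:ℝ) < 1/2 by norm_num)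
    linarith
  have h3 : ((p:ℝ)-1)⁻¹ - (p:ℝ)⁻¹ ≤ 2 * ((p:ℝ)^2)⁻¹ := by
    have : (0:ℝ) < p - 1 := by linarith
    rw [inv_sub_inv this.ne' hp0.ne', div_le_iff₀ (by positivity)]
    field_simp
    nlinarith
  have h4 : (p:ℝ)^(1/2:ℝ) * ((p:ℝ)^2)⁻¹ = 1 / (p:ℝ)^(3/2:ℝ) := by
    rw [← Real.rpow_natCast, ← Real.rpow_neg hp0.le, ← Real.rpow_add hp0, one_div ((p:ℝ)^(3/2:ℝ)), ← Real.rpow_neg hp0.le]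
    norm_num
  have h0 : 0 ≤ Real.log p := Real.log_nonneg (by linarith)
  calc Real.log p * (((p:ℝ)-1)⁻¹ - (p:ℝ)⁻¹) ≤ (2 * (p:ℝ)^(1/2:ℝ)) * (2 * ((p:ℝ)^2)⁻¹) := by
        apply mul_le_mul h1 h3 _ (by positivity)
        have : ((p:ℝ))⁻¹ ≤ ((p:ℝ)-1)⁻¹ := inv_anti₀ (by linarith) (by linarith)
        linarith
    _ = 4 * (1 / (p:ℝ)^(3/2:ℝ)) := by rw [← h4]; ring

lemma log_factorial_eq (n : ℕ) : Real.log (n.factorial) =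
    ∑ p ∈ (Finset.range (n+1)).filter Nat.Prime, ((n.factorial).factorization p : ℝ) * Real.log p := by
  have h := Nat.prod_factorization_pow_eq_self (Nat.factorial_ne_zero n)
  have hsup : (n.factorial).factorization.support = (Finset.range (n+1)).filter Nat.Prime := by
    ext p
    rw [Nat.support_factorization, Nat.mem_primeFactors, Finset.mem_filter, Finset.mem_range]
    constructor
    · rintro ⟨hp, hd, -⟩
      exact ⟨by have := (hp.dvd_factorial).1 hd; omega, hp⟩
    · rintro ⟨h, hp⟩
      exact ⟨hp, (hp.dvd_factorial).2 (by omega), Nat.factorial_ne_zero n⟩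
  rw [Finsupp.prod, hsup] at h
  conv_lhs => rw [← h]
  push_cast
  rw [Real.log_prod]
  · apply Finset.sum_congr rfl; intro p _; rw [Real.log_pow]
  · intro p hp
    have := (Finset.mem_filter.1 hp).2.pos
    positivity

lemma log_fact_up (n : ℕ) : Real.log (n.factorial) ≤ n * Real.log n := by
  rw [← Real.log_pow]
  apply Real.log_le_log (by exact_mod_cast n.factorial_pos)
  exact_mod_cast Nat.factorial_le_pow n

lemma log_fact_low (n : ℕ) : n * Real.log n - n ≤ Real.log (n.factorial) := by
  rcases Nat.eq_zero_or_pos n with rfl | hn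
  · simp
  have hn0 : (0:ℝ) < n := by exact_mod_cast hn
  have h := Real.pow_div_factorial_le_exp (n:ℝ) hn0.le n
  have hf : (0:ℝ) < n.factorial := by exact_mod_cast n.factorial_pos
  have := Real.log_le_log (by positivity) h
  rw [Real.log_exp, Real.log_div (by positivity) hf.ne', Real.log_pow] at this
  linarith

lemma fact_up {p : ℕ} (hp : p.Prime) (n : ℕ) : ((n.factorial).factorization p : ℝ) ≤ n * ((p:ℝ)-1)⁻¹ := by
  have h2 : (2:ℝ) ≤ p := by exact_mod_cast hp.two_le
  have := Fact.mk hp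
  have h := sub_one_mul_padicValNat_factorial (p := p) n
  rw [← Nat.factorization_def _ hp] at h
  have h' : (p-1) * (n.factorial).factorization p ≤ n := by rw [h]; exact Nat.sub_le _ _
  have h'' : ((p:ℝ)-1) * (n.factorial).factorization p ≤ n := by
    have := hp.one_le
    exact_mod_cast h'
  rw [← div_eq_mul_inv, le_div_iff₀ (by linarith)]; linarith

lemma fact_low {p : ℕ} (hp : p.Prime) (n : ℕ) : (n:ℝ) * (p:ℝ)⁻¹ - 1 ≤ (n.factorial).factorization p := by
  have h := Nat.factorization_factorial hp (n := n) (b := Nat.log p n + 2) (by omega)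
  have h1 : n / p ≤ (n.factorial).factorization p := by
    rw [h]
    have := Finset.single_le_sum (f := fun i => n / p ^ i) (fun i _ => Nat.zero_le _)
      (show 1 ∈ Finset.Ico 1 (Nat.log p n + 2) by simp)
    simpa using this
  have h2 : (n:ℝ) / p < (n / p : ℕ) + 1 := by
    have := Nat.lt_floor_add_one ((n:ℝ)/p)
    rwa [Nat.floor_div_eq_div] at this
  have h3 : ((n/p : ℕ):ℝ) ≤ (n.factorial).factorization p := by exact_mod_cast h1
  rw [← div_eq_mul_inv]; linarith

lemma mertens1 : ∃ D : ℝ, ∀ n : ℕ, 1 ≤ n →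
    |(∑ k ∈ Finset.range (n+1), bb k * Real.log k) - Real.log n| ≤ D := by
  obtain ⟨D, hD0, hD⟩ := sum_log_quad
  refine ⟨D + Real.log 4 + 1, fun n hn => ?_⟩
  have hn0 : (0:ℝ) < n := by exact_mod_cast hn
  set P := (Finset.range (n+1)).filter Nat.Prime with hP
  have hPp : ∀ p ∈ P, Nat.Prime p := fun p hp => (Finset.mem_filter.1 hp).2
  have e : (∑ k ∈ Finset.range (n+1), bb k * Real.log k) = ∑ p ∈ P, bb p * Real.log p := by
    rw [hP, Finset.sum_filter]
    apply Finset.sum_congr rfl; intro k _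
    split_ifs with h
    · rfl
    · simp [bb, h]
  have hlog : ∀ p ∈ P, 0 ≤ Real.log p := fun p hp => Real.log_natCast_nonneg p
  have hQ := hD P hPp
  have hq2 : ∑ p ∈ P, Real.log p * (((p:ℝ)-1)⁻¹ - (p:ℝ)⁻¹) =
    ∑ p ∈ P, Real.log p * ((p:ℝ)-1)⁻¹ - ∑ p ∈ P, Real.log p * (p:ℝ)⁻¹ := by
    rw [← Finset.sum_sub_distrib]; apply Finset.sum_congr rfl; intro p _; ring
  have hl : ∑ p ∈ P, Real.log p * (p:ℝ)⁻¹ ≤ ∑ p ∈ P, bb p * Real.log p :=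
    Finset.sum_le_sum fun p hp => by
      have := mul_le_mul_of_nonneg_left (bb_low (hPp p hp)) (hlog p hp); linarith
  have hu : ∑ p ∈ P, bb p * Real.log p ≤ ∑ p ∈ P, Real.log p * ((p:ℝ)-1)⁻¹ :=
    Finset.sum_le_sum fun p hp => by
      have := mul_le_mul_of_nonneg_left (bb_up (hPp p hp)) (hlog p hp); linarith
  have hF := log_factorial_eq n
  have h1 : n * Real.log n - n ≤ n * ∑ p ∈ P, Real.log p * ((p:ℝ)-1)⁻¹ := by
    refine (log_fact_low n).trans ?_
    rw [hF, Finset.mul_sum]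
    refine Finset.sum_le_sum fun p hp => ?_
    have := mul_le_mul_of_nonneg_right (fact_up (hPp p hp) n) (hlog p hp)
    linarith
  have hθ : ∑ p ∈ P, Real.log p ≤ Real.log 4 * n := by
    have h := primorial_le_four_pow n
    have h' : ((primorial n : ℕ):ℝ) ≤ 4^n := by exact_mod_cast h
    have := Real.log_le_log (by exact_mod_cast primorial_pos n) h'
    rw [Real.log_pow] at this
    unfold primorial at this
    push_cast at this
    rw [Real.log_prod (fun p hp => by have := (hPp p hp).pos; positivity)] at this
    linarith
  have h2 : n * ∑ p ∈ P, Real.log p * (p:ℝ)⁻¹ - Real.log 4 * n ≤ n * Real.log n := by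
    refine le_trans ?_ (log_fact_up n)
    rw [hF]
    have : n * ∑ p ∈ P, Real.log p * (p:ℝ)⁻¹ - ∑ p ∈ P, Real.log p ≤
      ∑ p ∈ P, ((n.factorial).factorization p : ℝ) * Real.log p := by
      rw [Finset.mul_sum, ← Finset.sum_sub_distrib]
      refine Finset.sum_le_sum fun p hp => ?_
      have := mul_le_mul_of_nonneg_right (fact_low (hPp p hp) n) (hlog p hp)
      linarith
    linarith
  have h1' : Real.log n - 1 ≤ ∑ p ∈ P, Real.log p * ((p:ℝ)-1)⁻¹ := by
    by_contra! hc
    nlinarith [mul_lt_mul_of_pos_left hc hn0]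
  have h2' : ∑ p ∈ P, Real.log p * (p:ℝ)⁻¹ ≤ Real.log n + Real.log 4 := by
    by_contra! hc
    nlinarith [mul_lt_mul_of_pos_left hc hn0]
  have hl4 : 0 ≤ Real.log 4 := Real.log_nonneg (by norm_num)
  rw [e, abs_le]
  constructor <;> linarith
end CycNum

namespace CycNum

lemma uu_bound (n : ℕ) (hn : 2 ≤ n) :
    (Real.log (Real.log (n+1)) - Real.log (Real.log n)) * Real.log n ≤ Real.log (n+1) - Real.log n ∧
    Real.log (n+1) - Real.log n - (((n:ℝ)-1)⁻¹ - (n:ℝ)⁻¹) ≤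
      (Real.log (Real.log (n+1)) - Real.log (Real.log n)) * Real.log n := by
  have h2 : (2:ℝ) ≤ n := by exact_mod_cast hn
  have ha : 0 < Real.log n := Real.log_pos (by linarith)
  have hb1 : 1 ≤ Real.log (n+1) := by
    rw [Real.le_log_iff_exp_le (by linarith)]
    have := Real.exp_one_lt_d9
    linarith
  set a := Real.log n
  set b := Real.log (n+1) with hb
  have hl : b - a ≤ (n:ℝ)⁻¹ := by
    rw [← Real.log_div (by linarith) (by linarith)]
    refine (Real.log_le_sub_one_of_pos (by positivity)).trans (le_of_eq ?_)
    field_simp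
    ring
  have hab : a ≤ b := Real.log_le_log (by linarith) (by linarith)
  have hlog : Real.log b - Real.log a = Real.log (b/a) := by
    rw [Real.log_div (by linarith) (by linarith)]
  rw [hlog]
  constructor
  · have := Real.log_le_sub_one_of_pos (x := b/a) (by positivity)
    calc Real.log (b/a) * a ≤ (b/a - 1) * a := mul_le_mul_of_nonneg_right this ha.le
      _ = b - a := by field_simp
  · have := Real.one_sub_inv_le_log_of_pos (x := b/a) (by positivity)
    have h3 : (1 - (b/a)⁻¹) * a ≤ Real.log (b/a) * a := mul_le_mul_of_nonneg_right this ha.le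
    refine le_trans ?_ h3
    have e : (1 - (b/a)⁻¹) * a = (b - a) - (b-a)^2/b := by field_simp; ring
    rw [e]
    have h4 : (b-a)^2 / b ≤ (b-a)^2 := div_le_self (sq_nonneg _) hb1
    have h5 : (b-a)^2 ≤ ((n:ℝ)⁻¹)^2 := pow_le_pow_left₀ (by linarith) hl 2
    have h6 : ((n:ℝ)⁻¹)^2 ≤ ((n:ℝ)-1)⁻¹ - (n:ℝ)⁻¹ := by
      have : (0:ℝ) < n - 1 := by linarith
      rw [inv_sub_inv this.ne' (by linarith), inv_pow, le_div_iff₀ (by positivity)]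
      field_simp
      nlinarith
    linarith

lemma mertens2 : ∃ c : ℝ, Tendsto (fun n : ℕ => (∑ k ∈ Finset.range n, bb k) - Real.log (Real.log n))
    atTop (nhds c) := by
  obtain ⟨D, hD⟩ := mertens1
  set u : ℕ → ℝ := fun n => Real.log (Real.log (n+1)) - Real.log (Real.log n) with hu
  set f : ℕ → ℝ := fun i => (Real.log ((i+2:ℕ):ℝ))⁻¹ with hf
  set z : ℕ → ℝ := fun i => (bb (i+2) - u (i+2)) * Real.log ((i+2:ℕ):ℝ) with hz
  have hpos : ∀ i : ℕ, 0 < Real.log ((i+2:ℕ):ℝ) := fun i => Real.log_pos (by push_cast; linarith [(Nat.cast_nonneg i : (0:ℝ) ≤ i)])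
  have hfa : Antitone f := by
    intro i j hij
    apply inv_anti₀ (hpos i)
    apply Real.log_le_log (by positivity)
    exact_mod_cast (by omega : i + 2 ≤ j + 2)
  have hf0 : Tendsto f atTop (nhds 0) := by
    apply Tendsto.inv_tendsto_atTop
    apply Real.tendsto_log_atTop.comp
    exact tendsto_natCast_atTop_atTop.comp (tendsto_add_atTop_nat 2)
  have b0 : bb 0 = 0 := by simp [bb]
  have b1 : bb 1 = 0 := by simp [bb, Nat.not_prime_one]
  have hUup : ∀ n : ℕ, ∑ i ∈ Finset.range n, u (i+2) * Real.log ((i+2:ℕ):ℝ) ≤ Real.log ((n+2:ℕ):ℝ) - Real.log 2 := by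
    intro n
    induction n with
    | zero => simp
    | succ n ih =>
      rw [Finset.sum_range_succ]
      have := (uu_bound (n+2) (by omega)).1
      simp only [hu]
      have e : ((n+1+2:ℕ):ℝ) = ((n+2:ℕ):ℝ) + 1 := by push_cast; ring
      rw [e]; linarith
  have hUlow : ∀ n : ℕ, Real.log ((n+2:ℕ):ℝ) - Real.log 2 - (1 - ((n+1:ℕ):ℝ)⁻¹) ≤ ∑ i ∈ Finset.range n, u (i+2) * Real.log ((i+2:ℕ):ℝ) := by
    intro n
    induction n with
    | zero => simp
    | succ n ih =>
      rw [Finset.sum_range_succ]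
      have := (uu_bound (n+2) (by omega)).2
      simp only [hu]
      have e : ((n+1+2:ℕ):ℝ) = ((n+2:ℕ):ℝ) + 1 := by push_cast; ring
      have e2 : ((n+2:ℕ):ℝ) - 1 = ((n+1:ℕ):ℝ) := by push_cast; ring
      have e3 : ((n+1+1:ℕ):ℝ) = ((n+2:ℕ):ℝ) := by push_cast; ring
      rw [e2] at this
      rw [e, e3]; linarith
  have hzb : ∀ n, ‖∑ i ∈ Finset.range n, z i‖ ≤ D + 3 := by
    intro n
    have h1 := hUup n
    have h2 := hUlow n
    have h3 := hD (n+1) (by omega)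
    rw [Finset.sum_range_succ', Finset.sum_range_succ', zero_add, b0, b1, zero_mul, zero_mul, add_zero, add_zero, abs_le] at h3
    have e : ∑ i ∈ Finset.range n, z i = ∑ i ∈ Finset.range n, bb (i+2) * Real.log ((i+2:ℕ):ℝ) - ∑ i ∈ Finset.range n, u (i+2) * Real.log ((i+2:ℕ):ℝ) := by
      rw [← Finset.sum_sub_distrib]; apply Finset.sum_congr rfl; intro i _; simp only [hz]; ring
    have h4 : Real.log ((n+2:ℕ):ℝ) ≤ Real.log ((n+1:ℕ):ℝ) + 1 := by
      have hp : (0:ℝ) < ((n+1:ℕ):ℝ) := by positivity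
      have h := Real.log_le_sub_one_of_pos (x := ((n+2:ℕ):ℝ) / ((n+1:ℕ):ℝ)) (by positivity)
      rw [Real.log_div (by positivity) (by positivity)] at h
      have : ((n+2:ℕ):ℝ) / ((n+1:ℕ):ℝ) ≤ 2 := by
        rw [div_le_iff₀ hp]; push_cast; linarith [(Nat.cast_nonneg n : (0:ℝ) ≤ n)]
      linarith
    have h5 : Real.log ((n+1:ℕ):ℝ) ≤ Real.log ((n+2:ℕ):ℝ) := by
      apply Real.log_le_log (by positivity); push_cast; linarith
    have h6 : Real.log 2 ≤ 1 := by linarith [Real.log_two_lt_d9]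
    have h7 : (0:ℝ) ≤ ((n+1:ℕ):ℝ)⁻¹ := by positivity
    have h8 : 0 ≤ Real.log 2 := Real.log_nonneg (by norm_num)
    have e9 : ∑ k ∈ Finset.range n, bb (k+1+1) * Real.log ((k+1+1:ℕ):ℝ) = ∑ i ∈ Finset.range n, bb (i+2) * Real.log ((i+2:ℕ):ℝ) := rfl
    rw [e9] at h3
    rw [e, Real.norm_eq_abs, abs_le]
    constructor <;> linarith [h3.1, h3.2]
  obtain ⟨c, hc⟩ := cauchySeq_tendsto_of_complete (hfa.cauchySeq_series_mul_of_tendsto_zero_of_bounded hf0 hzb)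
  refine ⟨c - Real.log (Real.log 2), ?_⟩
  rw [← tendsto_add_atTop_iff_nat 2]
  refine (hc.sub_const (Real.log (Real.log 2))).congr fun n => ?_
  have : ∀ i, f i • z i = bb (i+2) - u (i+2) := by
    intro i; simp only [hf, hz, smul_eq_mul]
    have := (hpos i).ne'
    field_simp
  simp_rw [this]
  rw [Finset.sum_sub_distrib, Finset.sum_range_succ', Finset.sum_range_succ', zero_add, b0, b1, add_zero, add_zero]
  have hU : ∀ n : ℕ, ∑ i ∈ Finset.range n, u (i+2) = Real.log (Real.log ((n+2:ℕ):ℝ)) - Real.log (Real.log 2) := by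
    intro n
    induction n with
    | zero => simp
    | succ n ih =>
      rw [Finset.sum_range_succ, ih]
      simp only [hu]
      have e : ((n+1+2:ℕ):ℝ) = ((n+2:ℕ):ℝ) + 1 := by push_cast; ring
      rw [e]; ring
  rw [hU]
  ring
end CycNum

namespace CycNum

noncomputable def ww (x : ℝ) (n : ℕ) : ℝ := if n.Prime then -Real.log (1 - (n:ℝ)^(-(1+x))) else 0

lemma zeta_up {x : ℝ} (hx : 0 < x) : ‖riemannZeta ((1 + x : ℝ) : ℂ)‖ ≤ 1 + x⁻¹ := by
  have h1 := LS_one_up 1 hx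
  rwa [← DirichletCharacter.LFunction_eq_LSeries _ (by simpa using hx), DirichletCharacter.LFunction_modOne_eq] at h1

lemma pw_lt {p : ℕ} (hp : p.Prime) {x : ℝ} (hx : 0 < x) : (p:ℝ)^(-(1+x)) < 1 :=
  Real.rpow_lt_one_of_one_lt_of_neg (by exact_mod_cast hp.one_lt) (by linarith)

lemma ww_nonneg {x : ℝ} (hx : 0 < x) (n : ℕ) : 0 ≤ ww x n := by
  rw [ww]; split_ifs with h
  · have h1 := pw_lt h hx
    have h2 : 0 ≤ (n:ℝ)^(-(1+x)) := by positivity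
    have := Real.log_nonpos (x := 1 - (n:ℝ)^(-(1+x))) (by linarith) (by linarith)
    linarith
  · exact le_rfl

lemma zeta_hasSum {x : ℝ} (hx : 0 < x) : HasSum (ww x) (Real.log ‖riemannZeta ((1 + x : ℝ) : ℂ)‖) := by
  rw [hasSum_iff_tendsto_nat_of_nonneg (ww_nonneg hx)]
  have h := riemannZeta_eulerProduct (s := ((1+x:ℝ):ℂ)) (by simpa using hx)
  have hz : 0 < ‖riemannZeta ((1 + x : ℝ) : ℂ)‖ := lt_of_lt_of_le (by positivity) (zeta_low hx)
  have h2 := (h.norm).log hz.ne'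
  refine h2.congr fun n => ?_
  rw [norm_prod, Real.log_prod]
  · rw [Nat.primesBelow, Finset.sum_filter]
    apply Finset.sum_congr rfl
    intro p _
    rw [ww]
    split_ifs with hp
    · rw [norm_inv, Real.log_inv]
      congr 2
      have h3 : (1 - (p:ℂ)^(-((1+x:ℝ):ℂ))) = ((1 - (p:ℝ)^(-(1+x)) : ℝ) : ℂ) := by
        push_cast
        rw [Complex.ofReal_cpow (by positivity)]
        push_cast; rfl
      rw [h3, Complex.norm_real, Real.norm_of_nonneg]
      linarith [pw_lt hp hx]
    · rfl
  · intro p hp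
    have hp := Nat.prime_of_mem_primesBelow hp
    rw [norm_ne_zero_iff]
    apply inv_ne_zero
    intro h0
    have h3 : (1 - (p:ℂ)^(-((1+x:ℝ):ℂ))) = ((1 - (p:ℝ)^(-(1+x)) : ℝ) : ℂ) := by
      push_cast
      rw [Complex.ofReal_cpow (by positivity)]
      push_cast; rfl
    rw [h3] at h0
    have := Complex.ofReal_eq_zero.1 h0
    linarith [pw_lt hp hx]

noncomputable def qq (n : ℕ) : ℝ := 2 * (1 / (n:ℝ)^2)

lemma qq_summable : Summable qq :=
  (Real.summable_one_div_nat_pow.2 (by norm_num)).mul_left 2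

lemma bw_bound {x : ℝ} (hx : 0 < x) (n : ℕ) : |bb n * (n:ℝ)^(-x) - ww x n| ≤ qq n := by
  by_cases hp : n.Prime
  · have h2 : (2:ℝ) ≤ n := by exact_mod_cast hp.two_le
    have hn0 : (0:ℝ) < n := by linarith
    have hl := bb_low hp
    have hu := bb_up hp
    set t := (n:ℝ)^(-x) with ht
    have ht0 : 0 < t := by positivity
    have ht1 : t ≤ 1 := Real.rpow_le_one_of_one_le_of_nonpos (by linarith) (by linarith)
    have hy : (n:ℝ)^(-(1+x)) = (n:ℝ)⁻¹ * t := by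
      rw [ht, neg_add, Real.rpow_add hn0, Real.rpow_neg_one]
    have hy1 := pw_lt hp hx
    rw [ww, if_pos hp]
    rw [hy] at hy1 ⊢
    have e1 := Real.log_le_sub_one_of_pos (x := 1 - (n:ℝ)⁻¹ * t) (by linarith)
    have e2 := Real.one_sub_inv_le_log_of_pos (x := 1 - (n:ℝ)⁻¹ * t) (by linarith)
    have hn1 : (0:ℝ) < n - 1 := by linarith
    have e3 : (1 - (n:ℝ)⁻¹ * t)⁻¹ ≤ 1 + t * ((n:ℝ)-1)⁻¹ := by
      rw [inv_le_iff_one_le_mul₀ (by linarith)]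
      have : (1 + t * ((n:ℝ)-1)⁻¹) * (1 - (n:ℝ)⁻¹ * t) = 1 + t * (1-t) / (n * (n-1)) := by
        field_simp
        ring
      rw [this]
      have : 0 ≤ t * (1-t) / (n * ((n:ℝ)-1)) := by
        apply div_nonneg (mul_nonneg ht0.le (by linarith)) (by positivity)
      linarith
    have e4 : ((n:ℝ)-1)⁻¹ - (n:ℝ)⁻¹ ≤ qq n := by
      rw [qq, inv_sub_inv hn1.ne' hn0.ne', div_le_iff₀ (by positivity)]
      field_simp
      nlinarith
    have a1 := mul_le_mul_of_nonneg_right hl ht0.le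
    have a2 := mul_le_mul_of_nonneg_right hu ht0.le
    have a3 : (((n:ℝ)-1)⁻¹ - (n:ℝ)⁻¹) * t ≤ ((n:ℝ)-1)⁻¹ - (n:ℝ)⁻¹ := by
      apply mul_le_of_le_one_right _ ht1
      have : ((n:ℝ))⁻¹ ≤ ((n:ℝ)-1)⁻¹ := inv_anti₀ (by linarith) (by linarith)
      linarith
    rw [abs_le]
    constructor <;> nlinarith
  · simp [bb, ww, hp, qq]

lemma bx_summable {x : ℝ} (hx : 0 < x) : Summable (fun n : ℕ => bb n * (n:ℝ)^(-x)) := by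
  have h1 := (zeta_hasSum hx).summable
  have h2 : Summable (fun n : ℕ => bb n * (n:ℝ)^(-x) - ww x n) :=
    Summable.of_norm_bounded qq_summable (fun n => bw_bound hx n)
  simpa using h1.add h2

lemma bw_tendsto : Tendsto (fun x : ℝ => ∑' n : ℕ, (bb n * (n:ℝ)^(-x) - ww x n)) (nhdsWithin 0 (Set.Ioi 0)) (nhds 0) := by
  have := tendsto_tsum_of_dominated_convergence (𝓕 := nhdsWithin (0:ℝ) (Set.Ioi 0))
    (f := fun (x:ℝ) (n : ℕ) => bb n * (n:ℝ)^(-x) - ww x n) (g := fun _ => 0) (bound := qq) qq_summable ?_ ?_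
  · simpa using this
  · intro n
    by_cases hp : n.Prime
    · have hn0 : (0:ℝ) < n := by exact_mod_cast hp.pos
      have h1 : (n:ℝ)⁻¹ < 1 := inv_lt_one_of_one_lt₀ (by exact_mod_cast hp.one_lt)
      have hc : ContinuousAt (fun x : ℝ => bb n * (n:ℝ)^(-x) - -Real.log (1 - (n:ℝ)^(-(1+x)))) 0 := by
        have c1 : ContinuousAt (fun x : ℝ => (n:ℝ)^(-x)) 0 := by
          apply ContinuousAt.rpow continuousAt_const (by fun_prop) (Or.inl hn0.ne')
        have c2 : ContinuousAt (fun x : ℝ => (n:ℝ)^(-(1+x))) 0 := by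
          apply ContinuousAt.rpow continuousAt_const (by fun_prop) (Or.inl hn0.ne')
        refine (continuousAt_const.mul c1).sub (ContinuousAt.neg (ContinuousAt.log (continuousAt_const.sub c2) ?_))
        rw [add_zero, Real.rpow_neg_one]; linarith
      have := hc.tendsto.mono_left (nhdsWithin_le_nhds (s := Set.Ioi (0:ℝ)))
      simp only [neg_zero, Real.rpow_zero, add_zero, Real.rpow_neg_one, bb, hp, if_true, mul_one, sub_self] at this
      simp only [ww, hp, if_true, bb]
      exact this
    · simp [bb, ww, hp]
  · filter_upwards [self_mem_nhdsWithin] with x hx n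
    exact bw_bound hx n

lemma zeta_log_tendsto : Tendsto (fun x : ℝ => Real.log ‖riemannZeta ((1 + x : ℝ) : ℂ)‖ + Real.log x)
    (nhdsWithin 0 (Set.Ioi 0)) (nhds 0) := by
  have hup : Tendsto (fun x : ℝ => x) (nhdsWithin 0 (Set.Ioi 0)) (nhds 0) := tendsto_id.mono_left nhdsWithin_le_nhds
  refine tendsto_of_tendsto_of_tendsto_of_le_of_le' tendsto_const_nhds hup ?_ ?_
  · filter_upwards [self_mem_nhdsWithin] with x hx
    have hx : 0 < x := hx
    have h := Real.log_le_log (by positivity) (zeta_low hx)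
    rw [Real.log_inv] at h
    linarith
  · filter_upwards [self_mem_nhdsWithin] with x hx
    have hx : 0 < x := hx
    have hz : 0 < ‖riemannZeta ((1 + x : ℝ) : ℂ)‖ := lt_of_lt_of_le (by positivity) (zeta_low hx)
    rw [← Real.log_mul hz.ne' hx.ne']
    refine (Real.log_le_sub_one_of_pos (by positivity)).trans ?_
    have := mul_le_mul_of_nonneg_right (zeta_up hx) hx.le
    rw [add_mul, inv_mul_cancel₀ hx.ne'] at this
    linarith

/-- `Z(x) = ∑ b_n n^{-x} = -log x + o(1)` -/
lemma Z_tendsto : Tendsto (fun x : ℝ => (∑' n : ℕ, bb n * (n:ℝ)^(-x)) + Real.log x)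
    (nhdsWithin 0 (Set.Ioi 0)) (nhds 0) := by
  have := bw_tendsto.add zeta_log_tendsto
  rw [add_zero] at this
  refine this.congr' ?_
  filter_upwards [self_mem_nhdsWithin] with x hx
  have h1 := zeta_hasSum hx
  rw [(bx_summable hx).tsum_sub h1.summable, h1.tsum_eq]
  ring
end CycNum

namespace CycNum

noncomputable def Nk (k : ℕ) : ℕ := ⌈Real.exp k⌉₊

lemma Nk_zero : Nk 0 = 1 := by simp [Nk]

lemma Nk_mono : Monotone Nk := fun a b h => Nat.ceil_mono (Real.exp_le_exp.2 (by exact_mod_cast h))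

lemma Nk_low (k : ℕ) : Real.exp k ≤ Nk k := Nat.le_ceil _

lemma Nk_up (k : ℕ) : (Nk k : ℝ) ≤ Real.exp (k+1) := by
  have h := (Nat.ceil_lt_add_one (Real.exp_pos (k:ℝ)).le).le
  have h1 : 1 ≤ Real.exp (k:ℝ) := Real.one_le_exp (by positivity)
  have h2 : 2 ≤ Real.exp 1 := by linarith [Real.add_one_le_exp (1:ℝ)]
  rw [Real.exp_add]
  have h3 : (Nk k:ℝ) ≤ Real.exp k + 1 := h
  nlinarith

lemma Nk_tendsto : Tendsto Nk atTop atTop := by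
  apply tendsto_nat_ceil_atTop.comp
  exact Real.tendsto_exp_atTop.comp tendsto_natCast_atTop_atTop

lemma Nk_sum (f : ℕ → ℝ) (h0 : f 0 = 0) (n : ℕ) :
    ∑ k ∈ Finset.range n, ∑ m ∈ Finset.Ico (Nk k) (Nk (k+1)), f m = ∑ m ∈ Finset.range (Nk n), f m := by
  induction n with
  | zero => simp [Nk_zero, h0]
  | succ n ih =>
    rw [Finset.sum_range_succ, ih]
    rw [Finset.range_eq_Ico, Finset.range_eq_Ico]
    exact Finset.sum_Ico_consecutive f (Nat.zero_le _) (Nk_mono (Nat.le_succ n))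

noncomputable def cc (k : ℕ) : ℝ := ∑ m ∈ Finset.Ico (Nk k) (Nk (k+1)), bb m

lemma cc_bounds {x : ℝ} (hx : 0 < x) (k : ℕ) :
    ∑ m ∈ Finset.Ico (Nk k) (Nk (k+1)), bb m * (m:ℝ)^(-x) ≤ cc k * (Real.exp (-x))^k ∧
    cc k * (Real.exp (-x))^k ≤ Real.exp x * ∑ m ∈ Finset.Ico (Nk k) (Nk (k+1)), bb m * (m:ℝ)^(-x) := by
  rw [cc, Finset.sum_mul, Finset.mul_sum]
  have key : ∀ m ∈ Finset.Ico (Nk k) (Nk (k+1)), (m:ℝ)^(-x) ≤ (Real.exp (-x))^k ∧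
      (Real.exp (-x))^k ≤ Real.exp x * (m:ℝ)^(-x) := by
    intro m hm
    rw [Finset.mem_Ico] at hm
    have h1 : Real.exp k ≤ m := Nat.ceil_le.1 hm.1
    have h2 : (m:ℝ) < Real.exp (k+1:ℕ) := Nat.lt_ceil.1 hm.2
    have hm0 : (0:ℝ) < m := (Real.exp_pos _).trans_le h1
    have h3 : (k:ℝ) ≤ Real.log m := (Real.le_log_iff_exp_le hm0).2 h1
    have h4 : Real.log m < (k+1:ℕ) := (Real.log_lt_iff_lt_exp hm0).2 h2
    push_cast at h4
    rw [Real.rpow_def_of_pos hm0, ← Real.exp_nat_mul, ← Real.exp_add, Real.exp_le_exp, Real.exp_le_exp]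
    constructor <;> nlinarith
  constructor
  · exact Finset.sum_le_sum fun m hm => mul_le_mul_of_nonneg_left (key m hm).1 (bb_nonneg m)
  · refine Finset.sum_le_sum fun m hm => ?_
    have := mul_le_mul_of_nonneg_left (key m hm).2 (bb_nonneg m)
    linarith

lemma blk_hasSum {x : ℝ} (hx : 0 < x) :
    HasSum (fun k => ∑ m ∈ Finset.Ico (Nk k) (Nk (k+1)), bb m * (m:ℝ)^(-x)) (∑' n : ℕ, bb n * (n:ℝ)^(-x)) := by
  have hnn : ∀ n : ℕ, 0 ≤ bb n * (n:ℝ)^(-x) := fun n => mul_nonneg (bb_nonneg n) (by positivity)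
  rw [hasSum_iff_tendsto_nat_of_nonneg (fun k => Finset.sum_nonneg fun m _ => hnn m)]
  have h := (bx_summable hx).hasSum.tendsto_sum_nat.comp Nk_tendsto
  refine h.congr fun n => ?_
  rw [Nk_sum (fun m => bb m * (m:ℝ)^(-x)) (by simp [bb])]
  rfl

lemma G_bounds {x : ℝ} (hx : 0 < x) : Summable (fun k => cc k * (Real.exp (-x))^k) ∧
    (∑' n : ℕ, bb n * (n:ℝ)^(-x)) ≤ ∑' k, cc k * (Real.exp (-x))^k ∧
    ∑' k, cc k * (Real.exp (-x))^k ≤ Real.exp x * (∑' n : ℕ, bb n * (n:ℝ)^(-x)) := by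
  have h := blk_hasSum hx
  have hcn : ∀ k, 0 ≤ cc k * (Real.exp (-x))^k := fun k =>
    mul_nonneg (Finset.sum_nonneg fun m _ => bb_nonneg m) (by positivity)
  have hs : Summable (fun k => cc k * (Real.exp (-x))^k) :=
    Summable.of_nonneg_of_le hcn (fun k => (cc_bounds hx k).2) (h.summable.mul_left _)
  refine ⟨hs, ?_, ?_⟩
  · rw [← h.tsum_eq]
    exact h.summable.tsum_le_tsum (fun k => (cc_bounds hx k).1) hs
  · rw [← h.tsum_eq, ← tsum_mul_left]
    exact hs.tsum_le_tsum (fun k => (cc_bounds hx k).2) (h.summable.mul_left _)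

lemma one_sub_exp_tendsto : Tendsto (fun x : ℝ => (1 - Real.exp (-x)) / x) (nhdsWithin 0 (Set.Ioi 0)) (nhds 1) := by
  have hup : Tendsto (fun x : ℝ => 1 - x) (nhdsWithin 0 (Set.Ioi 0)) (nhds (1-0)) :=
    tendsto_const_nhds.sub (tendsto_id.mono_left nhdsWithin_le_nhds)
  rw [sub_zero] at hup
  refine tendsto_of_tendsto_of_tendsto_of_le_of_le' hup tendsto_const_nhds ?_ ?_
  · filter_upwards [Ioo_mem_nhdsGT (show (0:ℝ) < 1 by norm_num)] with x hx
    have := Real.abs_exp_sub_one_sub_id_le (x := -x) (by rw [abs_neg, abs_of_pos hx.1]; exact hx.2.le)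
    rw [abs_le] at this
    rw [le_div_iff₀ hx.1]
    nlinarith [this.2]
  · filter_upwards [self_mem_nhdsWithin] with x hx
    have hx : 0 < x := hx
    rw [div_le_one hx]
    linarith [Real.add_one_le_exp (-x)]

lemma d_tendsto0 : Tendsto (fun x : ℝ => ∑' k : ℕ, (cc k - (k:ℝ)⁻¹) * (Real.exp (-x))^k)
    (nhdsWithin 0 (Set.Ioi 0)) (nhds 0) := by
  set Z : ℝ → ℝ := fun x => ∑' n : ℕ, bb n * (n:ℝ)^(-x) with hZ
  have hid : Tendsto (fun x : ℝ => x) (nhdsWithin 0 (Set.Ioi 0)) (nhds 0) := tendsto_id.mono_left nhdsWithin_le_nhds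
  have h1 : Tendsto (fun x => Real.log ((1 - Real.exp (-x)) / x)) (nhdsWithin 0 (Set.Ioi 0)) (nhds 0) := by
    have := one_sub_exp_tendsto.log (by norm_num)
    rwa [Real.log_one] at this
  have hxl : Tendsto (fun x : ℝ => x * Real.log x) (nhdsWithin 0 (Set.Ioi 0)) (nhds 0) := by
    have := (Real.continuous_mul_log.tendsto 0).mono_left (nhdsWithin_le_nhds (s := Set.Ioi (0:ℝ)))
    simpa using this
  have hxZ : Tendsto (fun x : ℝ => 2 * (x * Z x)) (nhdsWithin 0 (Set.Ioi 0)) (nhds 0) := by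
    have := ((hid.mul Z_tendsto).sub hxl).const_mul 2
    simp only [mul_zero, sub_zero] at this
    refine this.congr fun x => ?_
    simp only [hZ]; ring
  have hlow : Tendsto (fun x : ℝ => (Z x + Real.log x) + Real.log ((1 - Real.exp (-x)) / x)) (nhdsWithin 0 (Set.Ioi 0)) (nhds 0) := by
    simpa using Z_tendsto.add h1
  have hupp := hlow.add hxZ
  rw [add_zero] at hupp
  have hmain : ∀ x : ℝ, 0 < x → ∑' k : ℕ, (cc k - (k:ℝ)⁻¹) * (Real.exp (-x))^k =
      (∑' k, cc k * (Real.exp (-x))^k) + Real.log x + Real.log ((1 - Real.exp (-x)) / x) := by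
    intro x hx
    have hr : Real.exp (-x) < 1 := by rw [Real.exp_lt_one_iff]; linarith
    have hh := Real.hasSum_pow_div_log_of_abs_lt_one (x := Real.exp (-x)) (by rw [abs_of_pos (Real.exp_pos _)]; exact hr)
    have hh2 : HasSum (fun k : ℕ => (k:ℝ)⁻¹ * (Real.exp (-x))^k) (-Real.log (1 - Real.exp (-x))) := by
      rw [← hasSum_nat_add_iff' 1]
      simp only [Finset.range_one, Finset.sum_singleton, Nat.cast_zero, inv_zero, zero_mul, sub_zero]
      refine hh.congr_fun fun k => ?_
      push_cast; ring
    have hG := (G_bounds hx).1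
    have e : ∀ k : ℕ, (cc k - (k:ℝ)⁻¹) * (Real.exp (-x))^k = cc k * (Real.exp (-x))^k - (k:ℝ)⁻¹ * (Real.exp (-x))^k := fun k => by ring
    simp_rw [e]
    rw [hG.tsum_sub hh2.summable, hh2.tsum_eq, Real.log_div (by linarith) hx.ne']
    ring
  refine tendsto_of_tendsto_of_tendsto_of_le_of_le' hlow hupp ?_ ?_
  · filter_upwards [self_mem_nhdsWithin] with x hx
    rw [hmain x hx]
    have := (G_bounds hx).2.1
    simp only [hZ]; linarith
  · filter_upwards [Ioo_mem_nhdsGT (show (0:ℝ) < 1 by norm_num)] with x hx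
    rw [hmain x hx.1]
    have h2 := (G_bounds hx.1).2.2
    have h3 := Real.abs_exp_sub_one_le (x := x) (by rw [abs_of_pos hx.1]; exact hx.2.le)
    rw [abs_of_pos hx.1] at h3
    have h4 : Real.exp x ≤ 1 + 2 * x := by linarith [le_abs_self (Real.exp x - 1)]
    have hZ0 : 0 ≤ Z x := tsum_nonneg fun n => mul_nonneg (bb_nonneg n) (by positivity)
    have h5 : Real.exp x * Z x ≤ (1 + 2*x) * Z x := mul_le_mul_of_nonneg_right h4 hZ0
    simp only [hZ] at h5 ⊢
    linarith

lemma loglogN : Tendsto (fun n : ℕ => Real.log (Real.log (Nk (n+1))) - Real.log (n+1)) atTop (nhds 0) := by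
  have hup : Tendsto (fun n : ℕ => (1:ℝ) / ((n:ℝ)+1)) atTop (nhds 0) := tendsto_one_div_add_atTop_nhds_zero_nat
  refine squeeze_zero (fun n => ?_) (fun n => ?_) hup
  · have h1 := Nk_low (n+1)
    have h2 := Real.log_le_log (Real.exp_pos _) h1
    rw [Real.log_exp] at h2
    push_cast at h2
    have := Real.log_le_log (by positivity) h2
    linarith
  · have h1 := Nk_low (n+1)
    have hN : (0:ℝ) < Nk (n+1) := (Real.exp_pos _).trans_le h1
    have h0 := Real.log_le_log (Real.exp_pos _) h1
    rw [Real.log_exp] at h0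
    have h2 := Real.log_le_log hN (Nk_up (n+1))
    rw [Real.log_exp] at h2
    push_cast at h0 h2
    have hp : (0:ℝ) < (n:ℝ)+1 := by positivity
    rw [← Real.log_div (by linarith) hp.ne']
    refine (Real.log_le_sub_one_of_pos (by apply div_pos <;> linarith)).trans ?_
    rw [div_sub_one hp.ne']
    apply div_le_div_of_nonneg_right _ hp.le
    linarith

lemma mertens_c : Tendsto (fun n : ℕ => (∑ k ∈ Finset.range n, bb k) - Real.log (Real.log n))
    atTop (nhds Real.eulerMascheroniConstant) := by
  obtain ⟨c, hc⟩ := mertens2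
  have hd : Tendsto (fun n => ∑ k ∈ Finset.range n, (cc k - (k:ℝ)⁻¹)) atTop (nhds (c - Real.eulerMascheroniConstant)) := by
    rw [← tendsto_add_atTop_iff_nat 1]
    have h1 := hc.comp (Nk_tendsto.comp (tendsto_add_atTop_nat 1))
    have h2 := (h1.add loglogN).sub Real.tendsto_harmonic_sub_log_add_one
    rw [add_zero] at h2
    refine h2.congr fun n => ?_
    rw [Finset.sum_sub_distrib]
    simp only [cc]
    rw [Nk_sum bb (by simp [bb]), Finset.sum_range_succ' (fun k : ℕ => (k:ℝ)⁻¹)]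
    have : ((harmonic n : ℚ):ℝ) = ∑ k ∈ Finset.range n, ((k+1:ℕ):ℝ)⁻¹ := by
      rw [harmonic]; push_cast; rfl
    simp only [Function.comp_apply]
    rw [this]
    simp
  have hA := Real.tendsto_tsum_powerSeries_nhdsWithin_lt hd
  have hE : Tendsto (fun x : ℝ => Real.exp (-x)) (nhdsWithin 0 (Set.Ioi 0)) (nhdsWithin 1 (Set.Iio 1)) := by
    rw [tendsto_nhdsWithin_iff]
    constructor
    · have : ContinuousAt (fun x : ℝ => Real.exp (-x)) 0 := by fun_prop
      have := this.tendsto.mono_left (nhdsWithin_le_nhds (s := Set.Ioi (0:ℝ)))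
      simpa using this
    · filter_upwards [self_mem_nhdsWithin] with x hx
      have hx : 0 < x := hx
      show Real.exp (-x) < 1
      rw [Real.exp_lt_one_iff]; linarith
  have := tendsto_nhds_unique (hA.comp hE) d_tendsto0
  have : c = Real.eulerMascheroniConstant := by linarith
  rwa [this] at hc

lemma V_eq (z : ℕ) : V z = Real.exp (-∑ k ∈ Finset.range (z+1), bb k) := by
  rw [← Finset.sum_neg_distrib, Real.exp_sum, V, Finset.prod_filter]
  apply Finset.prod_congr rfl
  intro p _
  rw [bb]
  split_ifs with hp
  · rw [neg_neg, Real.exp_log]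
    have : (p:ℝ)⁻¹ < 1 := inv_lt_one_of_one_lt₀ (by exact_mod_cast hp.one_lt)
    linarith
  · simp

lemma V_tendsto : Tendsto (fun z : ℕ => V z * Real.log (z+1)) atTop (nhds (Real.exp (-Real.eulerMascheroniConstant))) := by
  have h := (mertens_c.comp (tendsto_add_atTop_nat 1)).neg.rexp
  refine h.congr' ?_
  filter_upwards [eventually_ge_atTop 2] with z hz
  simp only [Function.comp_apply]
  rw [V_eq, neg_sub, sub_eq_add_neg, Real.exp_add, Real.exp_log, mul_comm]
  · push_cast; rfl
  · apply Real.log_pos; push_cast; have : (2:ℝ) ≤ z := by exact_mod_cast hz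
    linarith
end CycNum

namespace CycNum

lemma cyc_no {n p q : ℕ} (hc : Nat.gcd n n.totient = 1) (hp : p.Prime) (hpn : p ∣ n) (hq : q.Prime)
    (hqp : q % p = 1) : ¬ q ∣ n := by
  intro hqn
  have h1 : q.totient ∣ n.totient := Nat.totient_dvd_of_dvd hqn
  rw [Nat.totient_prime hq] at h1
  have h2 : p ∣ q - 1 := by
    rw [← hqp]; exact Nat.dvd_sub_mod q
  have h3 : p ∣ Nat.gcd n n.totient := Nat.dvd_gcd hpn (h2.trans h1)
  rw [hc] at h3
  exact hp.one_lt.ne' (Nat.dvd_one.1 h3)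

lemma noncyc {n : ℕ} (hn : 0 < n) (hc : Nat.gcd n n.totient ≠ 1) :
    ∃ p, p.Prime ∧ p ∣ n ∧ (p^2 ∣ n ∨ ∃ q, q.Prime ∧ q ∣ n ∧ q % p = 1) := by
  obtain ⟨p, hp, hpd⟩ := Nat.exists_prime_and_dvd hc
  have hpn := hpd.trans (Nat.gcd_dvd_left _ _)
  have hpt := hpd.trans (Nat.gcd_dvd_right _ _)
  refine ⟨p, hp, hpn, ?_⟩
  rw [Nat.totient_eq_prod_factorization hn.ne', Finsupp.prod, hp.prime.dvd_finsetProd_iff] at hpt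
  obtain ⟨q, hq, hd⟩ := hpt
  rw [Nat.support_factorization, Nat.mem_primeFactors] at hq
  rcases (hp.dvd_mul).1 hd with h | h
  · left
    have h1 := hp.dvd_of_dvd_pow h
    have h2 : p = q := (Nat.prime_dvd_prime_iff_eq hp hq.1).1 h1
    subst h2
    have h3 : n.factorization p - 1 ≠ 0 := by
      intro h0; rw [h0, pow_zero] at h; exact hp.one_lt.ne' (Nat.dvd_one.1 h)
    exact (hp.pow_dvd_iff_le_factorization hn.ne').2 (by omega)
  · right
    refine ⟨q, hq.1, hq.2.1, ?_⟩
    obtain ⟨t, ht⟩ := h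
    have : q = 1 + p * t := by have := hq.1.one_lt; omega
    rw [this, Nat.add_mul_mod_self_left, Nat.mod_eq_of_lt hp.one_lt]

def CS (N : ℕ) : Finset ℕ := (Finset.range (N+1)).filter (fun n => 0 < n ∧ Nat.gcd n n.totient = 1)

lemma PA_prime {p N q : ℕ} (h : q ∈ PA p N) : q.Prime ∧ q % p = 1 := (Finset.mem_filter.1 h).2

open Finset in
lemma Ap_bound (N y p : ℕ) (hp : p.Prime) :
    (#{n ∈ Ioc 0 N | p ∣ n ∧ ∀ q ∈ PA p y, ¬ q ∣ n} : ℝ) * ∑ q ∈ PA p y, (q:ℝ)⁻¹ ≤ N / p + 2 * (y + 1) := by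
  have h := turan (PA p y) (fun q hq => (PA_prime hq).1) (N/p)
  have hc : #{n ∈ Ioc 0 N | p ∣ n ∧ ∀ q ∈ PA p y, ¬ q ∣ n} ≤ #{m ∈ Ioc 0 (N/p) | ∀ q ∈ PA p y, ¬ q ∣ m} := by
    apply card_le_card_of_injOn (fun n => n / p)
    · intro n hn
      simp only [coe_filter, mem_Ioc, Set.mem_ofPred_eq] at hn ⊢
      obtain ⟨⟨h0, hN⟩, hpn, hq⟩ := hn
      refine ⟨⟨Nat.div_pos (Nat.le_of_dvd h0 hpn) hp.pos, Nat.div_le_div_right hN⟩, fun q hqq hd => ?_⟩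
      exact hq q hqq (hd.trans (Nat.div_dvd_of_dvd hpn))
    · intro a ha b hb hab
      simp only [coe_filter, mem_Ioc, Set.mem_ofPred_eq] at ha hb hab
      rw [← Nat.mul_div_cancel' ha.2.1, ← Nat.mul_div_cancel' hb.2.1, hab]
  have hc' : (#{n ∈ Ioc 0 N | p ∣ n ∧ ∀ q ∈ PA p y, ¬ q ∣ n} : ℝ) ≤ #{m ∈ Ioc 0 (N/p) | ∀ q ∈ PA p y, ¬ q ∣ m} := by exact_mod_cast hc
  have hE : 0 ≤ ∑ q ∈ PA p y, (q:ℝ)⁻¹ := sum_nonneg fun _ _ => by positivity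
  have hcard : (#(PA p y) : ℝ) ≤ y + 1 := by
    have : #(PA p y) ≤ y + 1 := (card_filter_le _ _).trans (by simp)
    exact_mod_cast this
  have hdiv : ((N / p : ℕ) : ℝ) ≤ (N:ℝ) / p := Nat.cast_div_le
  have := mul_le_mul_of_nonneg_right hc' hE
  linarith

open Finset in
lemma F_up (N y z : ℕ) (hN : 0 < N) (L : ℝ) (hL : 0 < L)
    (hE : ∀ p, p.Prime → p ≤ z → L / (8 * p) ≤ ∑ q ∈ PA p y, (q:ℝ)⁻¹)
    (hy : (2 * (y:ℝ) + 2) * z ≤ N) :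
    ∑ n ∈ CS N, (n:ℝ) ≤ V z * (N:ℝ)^2/2 + 10 * N * 4^z + 16 * z * (N:ℝ)^2 / L := by
  have hN0 : (0:ℝ) < N := by exact_mod_cast hN
  set A : ℕ → Finset ℕ := fun p => {n ∈ Ioc 0 N | p ∣ n ∧ ∀ q ∈ PA p y, ¬ q ∣ n} with hA
  set P := (range (z+1)).filter Nat.Prime with hP
  set R := (range (N+1)).filter (fun x => (primorial z).Coprime x) with hR
  have hsub : CS N ⊆ R ∪ P.biUnion A := by
    intro n hn
    obtain ⟨hnN, hn0, hc⟩ := mem_filter.1 hn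
    rw [mem_union]
    by_cases h : (primorial z).Coprime n
    · left; exact mem_filter.2 ⟨hnN, h⟩
    · right
      rw [rough_iff] at h
      push Not at h
      obtain ⟨p, hp, hpz, hpn⟩ := h
      rw [mem_biUnion]
      refine ⟨p, mem_filter.2 ⟨mem_range.2 (by omega), hp⟩, mem_filter.2 ⟨mem_Ioc.2 ⟨hn0, by have := mem_range.1 hnN; omega⟩, hpn, ?_⟩⟩
      intro q hq
      exact cyc_no hc hp hpn (PA_prime hq).1 (PA_prime hq).2
  have h1 : ∑ n ∈ CS N, (n:ℝ) ≤ ∑ n ∈ R, (n:ℝ) + ∑ n ∈ P.biUnion A, (n:ℝ) := by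
    refine (sum_le_sum_of_subset_of_nonneg hsub fun _ _ _ => by positivity).trans ?_
    rw [← sum_union_inter]
    have : 0 ≤ ∑ n ∈ R ∩ P.biUnion A, (n:ℝ) := sum_nonneg fun _ _ => by positivity
    linarith
  have h2 : ∑ n ∈ P.biUnion A, (n:ℝ) ≤ N * ∑ p ∈ P, (#(A p) : ℝ) := by
    have : ∑ n ∈ P.biUnion A, (n:ℝ) ≤ ∑ n ∈ P.biUnion A, (N:ℝ) := by
      refine sum_le_sum fun n hn => ?_
      obtain ⟨p, _, hn⟩ := mem_biUnion.1 hn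
      exact_mod_cast (mem_Ioc.1 (mem_filter.1 hn).1).2
    refine this.trans ?_
    rw [sum_const, nsmul_eq_mul, mul_comm]
    apply mul_le_mul_of_nonneg_left _ hN0.le
    exact_mod_cast card_biUnion_le
  have h3 : ∀ p ∈ P, (#(A p) : ℝ) ≤ 16 * N / L := by
    intro p hp
    have hpp := (mem_filter.1 hp).2
    have hpz : p ≤ z := by have := mem_range.1 (mem_filter.1 hp).1; omega
    have hp0 : (0:ℝ) < p := by exact_mod_cast hpp.pos
    have ha := Ap_bound N y p hpp
    have hb := mul_le_mul_of_nonneg_left (hE p hpp hpz) (Nat.cast_nonneg (α := ℝ) #(A p))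
    have hc := hb.trans ha
    have hpz' : (p:ℝ) ≤ z := by exact_mod_cast hpz
    have h4 : (2 * (y:ℝ) + 2) * p ≤ N := le_trans (mul_le_mul_of_nonneg_left hpz' (by positivity)) hy
    rw [le_div_iff₀ hL]
    have h5 := mul_le_mul_of_nonneg_right hc (by positivity : (0:ℝ) ≤ 8 * p)
    have e1 : (#(A p) : ℝ) * (L / (8 * p)) * (8 * p) = #(A p) * L := by field_simp
    have e2 : ((N:ℝ) / p + 2 * (y+1)) * (8 * p) = 8 * N + 8 * ((2 * y + 2) * p) := by field_simp
    rw [e1, e2] at h5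
    linarith
  have hPc : (#P : ℝ) ≤ z := by
    have : #P ≤ z := by
      have : P ⊆ Ioc 0 z := by
        intro p hp
        have h1 := (mem_filter.1 hp).2.pos
        have := mem_range.1 (mem_filter.1 hp).1
        exact mem_Ioc.2 ⟨h1, by omega⟩
      simpa using card_le_card this
    exact_mod_cast this
  have h4 : ∑ p ∈ P, (#(A p) : ℝ) ≤ z * (16 * N / L) := by
    refine (sum_le_sum h3).trans ?_
    rw [sum_const, nsmul_eq_mul]
    exact mul_le_mul_of_nonneg_right hPc (by positivity)
  have h5 := abs_le.1 (rough_sum (primorial z) (primorial_pos z) N hN)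
  rw [totient_primorial] at h5
  have h6 : ((primorial z : ℕ):ℝ) ≤ 4^z := by exact_mod_cast primorial_le_four_pow z
  have h7 : 10 * (N:ℝ) * (primorial z : ℕ) ≤ 10 * N * 4^z := mul_le_mul_of_nonneg_left h6 (by positivity)
  have h8 := mul_le_mul_of_nonneg_left h4 hN0.le
  have e : (N:ℝ) * (z * (16 * N / L)) = 16 * z * (N:ℝ)^2 / L := by ring
  rw [e] at h8
  linarith [h5.2]

open Finset in
lemma F_low : ∃ C : ℝ, 0 < C ∧ ∀ N z : ℕ, 16 ≤ N → 0 < z →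
    V z * (N:ℝ)^2/2 - 10 * N * 4^z - (N:ℝ)^2 * (1 + C * Real.log (Real.log N)) / z ≤ ∑ n ∈ CS N, (n:ℝ) := by
  obtain ⟨C, hC, hT⟩ := Tp_bound
  refine ⟨C, hC, fun N z hN16 hz => ?_⟩
  have hN : 0 < N := by omega
  have hN0 : (0:ℝ) < N := by exact_mod_cast hN
  have hz0 : (0:ℝ) < z := by exact_mod_cast hz
  set P := (Ioc z N).filter Nat.Prime with hP
  set R := (range (N+1)).filter (fun x => (primorial z).Coprime x) with hR
  set B1 : ℕ → Finset ℕ := fun p => {n ∈ Ioc 0 N | p^2 ∣ n} with hB1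
  set B2 : ℕ → Finset ℕ := fun p => (PA p N).biUnion fun q => {n ∈ Ioc 0 N | p * q ∣ n} with hB2
  set B := P.biUnion fun p => B1 p ∪ B2 p with hB
  have hLL : 0 ≤ Real.log (Real.log N) := by
    apply Real.log_nonneg
    rw [Real.le_log_iff_exp_le hN0]
    have : (16:ℝ) ≤ N := by exact_mod_cast hN16
    linarith [Real.exp_one_lt_d9]
  have hsub : R ⊆ insert 0 (CS N ∪ B) := by
    intro n hn
    obtain ⟨hnN, hc⟩ := mem_filter.1 hn
    rw [rough_iff] at hc
    rw [mem_insert, mem_union]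
    by_contra! hcon
    obtain ⟨h0, h1, h2⟩ := hcon
    have hn0 : 0 < n := by omega
    have hnN' : n ≤ N := by have := mem_range.1 hnN; omega
    have hg : Nat.gcd n n.totient ≠ 1 := fun h => h1 (mem_filter.2 ⟨hnN, hn0, h⟩)
    obtain ⟨p, hp, hpn, hor⟩ := noncyc hn0 hg
    have hpz : z < p := by
      by_contra! hle
      exact hc p hp hle hpn
    apply h2
    rw [hB, mem_biUnion]
    refine ⟨p, mem_filter.2 ⟨mem_Ioc.2 ⟨hpz, (Nat.le_of_dvd hn0 hpn).trans hnN'⟩, hp⟩, ?_⟩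
    rw [mem_union]
    rcases hor with h | ⟨q, hq, hqn, hqp⟩
    · left; exact mem_filter.2 ⟨mem_Ioc.2 ⟨hn0, hnN'⟩, h⟩
    · right
      rw [hB2, mem_biUnion]
      refine ⟨q, mem_filter.2 ⟨mem_range.2 ?_, hq, hqp⟩, mem_filter.2 ⟨mem_Ioc.2 ⟨hn0, hnN'⟩, ?_⟩⟩
      · have := (Nat.le_of_dvd hn0 hqn); omega
      · have hne : p ≠ q := by
          rintro rfl; rw [Nat.mod_self] at hqp; exact absurd hqp (by norm_num)
        exact Nat.Coprime.mul_dvd_of_dvd_of_dvd ((Nat.coprime_primes hp hq).2 hne) hpn hqn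
  have h1 : ∑ n ∈ R, (n:ℝ) ≤ ∑ n ∈ CS N, (n:ℝ) + ∑ n ∈ B, (n:ℝ) := by
    refine (sum_le_sum_of_subset_of_nonneg hsub fun _ _ _ => by positivity).trans ?_
    rw [sum_insert_zero (by simp), ← sum_union_inter]
    have : 0 ≤ ∑ n ∈ CS N ∩ B, (n:ℝ) := sum_nonneg fun _ _ => by positivity
    linarith
  have hcard : ∀ d : ℕ, ((#{n ∈ Ioc 0 N | d ∣ n} : ℕ) : ℝ) ≤ N * (d:ℝ)⁻¹ := by
    intro d
    rw [Nat.Ioc_filter_dvd_card_eq_div, ← div_eq_mul_inv]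
    exact Nat.cast_div_le
  have h3 : ∀ p ∈ P, ((#(B1 p ∪ B2 p) : ℕ) : ℝ) ≤ N * (1 + C * Real.log (Real.log N)) * ((p:ℝ)^2)⁻¹ := by
    intro p hp
    have hpp := (mem_filter.1 hp).2
    have hp0 : (0:ℝ) < p := by exact_mod_cast hpp.pos
    have a1 : ((#(B1 p ∪ B2 p) : ℕ) : ℝ) ≤ #(B1 p) + #(B2 p) := by exact_mod_cast card_union_le _ _
    have a2 : (#(B1 p) : ℝ) ≤ N * ((p:ℝ)^2)⁻¹ := by
      have := hcard (p^2)
      rw [Nat.cast_pow] at this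
      exact this
    have a3 : (#(B2 p) : ℝ) ≤ ∑ q ∈ PA p N, (N:ℝ) * (p:ℝ)⁻¹ * (q:ℝ)⁻¹ := by
      have : (#(B2 p) : ℝ) ≤ ∑ q ∈ PA p N, ((#{n ∈ Ioc 0 N | p * q ∣ n} : ℕ) : ℝ) := by
        exact_mod_cast card_biUnion_le
      refine this.trans (sum_le_sum fun q _ => (hcard (p*q)).trans (le_of_eq ?_))
      push_cast
      rw [mul_inv]; ring
    rw [← mul_sum] at a3
    have a4 := mul_le_mul_of_nonneg_left (hT p N hpp hN16) (by positivity : (0:ℝ) ≤ N * (p:ℝ)⁻¹)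
    have e : (N:ℝ) * (p:ℝ)⁻¹ * (C * Real.log (Real.log N) / p) = N * (C * Real.log (Real.log N)) * ((p:ℝ)^2)⁻¹ := by
      field_simp
    rw [e] at a4
    calc _ ≤ N * ((p:ℝ)^2)⁻¹ + N * (C * Real.log (Real.log N)) * ((p:ℝ)^2)⁻¹ := by linarith
      _ = _ := by ring
  have h4 : (#B : ℝ) ≤ N * (1 + C * Real.log (Real.log N)) * (z:ℝ)⁻¹ := by
    have b1 : (#B : ℝ) ≤ ∑ p ∈ P, ((#(B1 p ∪ B2 p) : ℕ) : ℝ) := by exact_mod_cast card_biUnion_le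
    refine b1.trans ((sum_le_sum h3).trans ?_)
    rw [← mul_sum]
    apply mul_le_mul_of_nonneg_left _ (by positivity)
    have b2 : ∑ p ∈ P, ((p:ℝ)^2)⁻¹ ≤ ∑ p ∈ Ioc z N, ((p:ℝ)^2)⁻¹ :=
      sum_le_sum_of_subset_of_nonneg (filter_subset _ _) fun _ _ _ => by positivity
    rcases le_total z N with h | h
    · have b3 := sum_Ioc_inv_sq_le_sub (α := ℝ) hz.ne' h
      have : (0:ℝ) ≤ (N:ℝ)⁻¹ := by positivity
      linarith
    · rw [Ioc_eq_empty_of_le h, sum_empty] at b2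
      exact b2.trans (by positivity)
  have h2 : ∑ n ∈ B, (n:ℝ) ≤ N * (#B : ℝ) := by
    have : ∑ n ∈ B, (n:ℝ) ≤ ∑ n ∈ B, (N:ℝ) := by
      refine sum_le_sum fun n hn => ?_
      obtain ⟨p, _, hn⟩ := mem_biUnion.1 hn
      rcases mem_union.1 hn with hn | hn
      · exact_mod_cast (mem_Ioc.1 (mem_filter.1 hn).1).2
      · obtain ⟨q, _, hn⟩ := mem_biUnion.1 hn
        exact_mod_cast (mem_Ioc.1 (mem_filter.1 hn).1).2
    refine this.trans ?_
    rw [sum_const, nsmul_eq_mul, mul_comm]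
  have h5 := abs_le.1 (rough_sum (primorial z) (primorial_pos z) N hN)
  rw [totient_primorial] at h5
  have h6 : ((primorial z : ℕ):ℝ) ≤ 4^z := by exact_mod_cast primorial_le_four_pow z
  have h7 : 10 * (N:ℝ) * (primorial z : ℕ) ≤ 10 * N * 4^z := mul_le_mul_of_nonneg_left h6 (by positivity)
  have h8 := mul_le_mul_of_nonneg_left h4 hN0.le
  have e : (N:ℝ) * (N * (1 + C * Real.log (Real.log N)) * (z:ℝ)⁻¹) = (N:ℝ)^2 * (1 + C * Real.log (Real.log N)) / z := by ring
  rw [e] at h8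
  linarith [h5.1]
end CycNum

namespace CycNum

noncomputable def zm (L : ℝ) : ℕ := ⌊L / (Real.log L)^2⌋₊
noncomputable def zp (L : ℝ) : ℕ := ⌈L * (Real.log L)^2⌉₊

lemma ev_log (c : ℝ) : ∀ᶠ L : ℝ in atTop, c ≤ Real.log L := Real.tendsto_log_atTop.eventually_ge_atTop c

lemma ev_pow (n : ℕ) : ∀ᶠ L : ℝ in atTop, L^n ≤ Real.exp L := by
  have := (isLittleO_pow_exp_atTop (n := n)).bound (show (0:ℝ) < 1 by norm_num)
  filter_upwards [this, eventually_ge_atTop 0] with L h h0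
  rw [one_mul, Real.norm_of_nonneg (by positivity), Real.norm_of_nonneg (Real.exp_pos _).le] at h
  exact h

lemma logdiv : Tendsto (fun u : ℝ => Real.log u / u) atTop (nhds 0) :=
  Real.isLittleO_log_id_atTop.tendsto_div_nhds_zero

lemma V_z (z : ℝ → ℕ) (h1 : ∀ᶠ L : ℝ in atTop, Real.log L - 2 * Real.log (Real.log L) ≤ Real.log (z L + 1))
    (h2 : ∀ᶠ L : ℝ in atTop, Real.log (z L + 1) ≤ Real.log L + 2 * Real.log (Real.log L) + 2) :
    Tendsto (fun L => V (z L) * Real.log L) atTop (nhds (Real.exp (-Real.eulerMascheroniConstant))) := by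
  have hr0 := (logdiv.comp Real.tendsto_log_atTop).const_mul 2
  have hi := (Real.tendsto_log_atTop.inv_tendsto_atTop).const_mul 2
  have hratio : Tendsto (fun L => Real.log (z L + 1) / Real.log L) atTop (nhds 1) := by
    have ha := hr0.const_sub 1
    have hb := (hr0.add hi).const_add 1
    simp only [mul_zero, sub_zero, add_zero] at ha hb
    refine tendsto_of_tendsto_of_tendsto_of_le_of_le' ha hb ?_ ?_
    · filter_upwards [h1, ev_log 1] with L h hu
      have hu0 : 0 < Real.log L := by linarith
      rw [le_div_iff₀ hu0]
      simp only [Function.comp_apply]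
      refine le_trans (le_of_eq ?_) h
      field_simp
    · filter_upwards [h2, ev_log 1] with L h hu
      have hu0 : 0 < Real.log L := by linarith
      rw [div_le_iff₀ hu0]
      simp only [Function.comp_apply, Pi.inv_apply]
      refine le_trans h (le_of_eq ?_)
      field_simp
      ring
  have hlog : Tendsto (fun L => Real.log (z L + 1)) atTop atTop := by
    have := hratio.pos_mul_atTop one_pos Real.tendsto_log_atTop
    refine this.congr' ?_
    filter_upwards [ev_log 1] with L hu
    have hu0 : Real.log L ≠ 0 := by linarith
    field_simp
  have hz : Tendsto z atTop atTop := by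
    rw [← tendsto_natCast_atTop_iff (R := ℝ)]
    refine tendsto_atTop_mono (fun L => ?_) hlog
    have := Real.log_le_sub_one_of_pos (x := (z L:ℝ) + 1) (by positivity)
    linarith
  have := (V_tendsto.comp hz).div hratio (by norm_num)
  rw [div_one] at this
  refine this.congr' ?_
  filter_upwards [ev_log 1, hlog.eventually_ge_atTop 1] with L hu hl
  have hu0 : Real.log L ≠ 0 := by linarith
  have hl0 : Real.log (z L + 1) ≠ 0 := by linarith
  simp only [Function.comp_apply, Pi.div_apply]
  field_simp

lemma zm_le {L : ℝ} (hL : 0 < L) (hu : 1 ≤ Real.log L) : (zm L : ℝ) ≤ L / (Real.log L)^2 ∧ (zm L : ℝ) ≤ L := by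
  have h : (zm L : ℝ) ≤ L / (Real.log L)^2 := Nat.floor_le (by positivity)
  exact ⟨h, h.trans (div_le_self hL.le (by nlinarith))⟩

lemma V_zm : Tendsto (fun L => V (zm L) * Real.log L) atTop (nhds (Real.exp (-Real.eulerMascheroniConstant))) := by
  apply V_z
  · filter_upwards [ev_log 1, eventually_gt_atTop 0] with L hu hL
    have hu0 : 0 < Real.log L := by linarith
    have h := (Nat.lt_floor_add_one (L / (Real.log L)^2)).le
    have := Real.log_le_log (by positivity) h
    rw [Real.log_div (by positivity) (by positivity), Real.log_pow] at this
    push_cast at this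
    exact this
  · filter_upwards [ev_log 1, eventually_ge_atTop 1] with L hu hL
    have h := (zm_le (by linarith) hu).2
    have h2 : Real.log (zm L + 1) ≤ Real.log (2 * L) := Real.log_le_log (by positivity) (by linarith)
    rw [Real.log_mul (by norm_num) (by linarith)] at h2
    have := Real.log_nonneg hu
    linarith [Real.log_two_lt_d9]

lemma zp_le {L : ℝ} (hL : 1 ≤ L) (hu : 1 ≤ Real.log L) : L * (Real.log L)^2 ≤ zp L ∧ (zp L : ℝ) ≤ L * (Real.log L)^2 + 1 :=
  ⟨Nat.le_ceil _, (Nat.ceil_lt_add_one (by positivity)).le⟩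

lemma V_zp : Tendsto (fun L => V (zp L) * Real.log L) atTop (nhds (Real.exp (-Real.eulerMascheroniConstant))) := by
  apply V_z
  · filter_upwards [ev_log 1, eventually_ge_atTop 1] with L hu hL
    have hu0 : 0 < Real.log L := by linarith
    have h := (zp_le hL hu).1
    have := Real.log_nonneg hu
    have hu2 : 1 ≤ (Real.log L)^2 := by nlinarith
    have h4 : L ≤ L * (Real.log L)^2 := le_mul_of_one_le_right (by linarith) hu2
    have h3 : Real.log L ≤ Real.log (zp L + 1) := Real.log_le_log (by linarith) (by linarith)
    linarith
  · filter_upwards [ev_log 1, eventually_ge_atTop 1] with L hu hL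
    have h := (zp_le hL hu).2
    have hu0 : 0 < Real.log L := by linarith
    have hu2 : 1 ≤ (Real.log L)^2 := by nlinarith
    have h1 : 1 ≤ L * (Real.log L)^2 := by nlinarith
    have h2 : Real.log (zp L + 1) ≤ Real.log (3 * (L * (Real.log L)^2)) := Real.log_le_log (by positivity) (by linarith)
    rw [Real.log_mul (by norm_num) (by positivity), Real.log_mul (by linarith) (by positivity), Real.log_pow] at h2
    have h3 : Real.log 3 ≤ 2 := by
      have := Real.log_le_sub_one_of_pos (x := 3) (by norm_num); linarith
    push_cast at h2
    linarith

lemma four_term (z : ℝ → ℕ) (hz : ∀ᶠ L : ℝ in atTop, (z L : ℝ) ≤ L^3 + 1) :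
    Tendsto (fun L => 10 * 4^(z L) * Real.log L / Real.exp (Real.exp L)) atTop (nhds 0) := by
  have hb : Tendsto (fun L : ℝ => 10 * Real.exp (-L)) atTop (nhds 0) := by
    simpa using (Real.tendsto_exp_neg_atTop_nhds_zero).const_mul 10
  refine tendsto_of_tendsto_of_tendsto_of_le_of_le' tendsto_const_nhds hb ?_ ?_
  · filter_upwards [ev_log 1] with L hu
    positivity
  · filter_upwards [hz, ev_log 1, ev_pow 4, eventually_ge_atTop 4] with L hz hu h4 hL
    have h1 : (4:ℝ)^(z L) ≤ Real.exp (2 * L^3 + 2) := by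
      have h4e : (4:ℝ) ≤ Real.exp 2 := by
        have := Real.add_one_le_exp (1:ℝ)
        have e : Real.exp 2 = Real.exp 1 * Real.exp 1 := by rw [← Real.exp_add]; norm_num
        rw [e]; nlinarith
      calc (4:ℝ)^(z L) ≤ (Real.exp 2)^(z L) := pow_le_pow_left₀ (by norm_num) h4e _
        _ = Real.exp (z L * 2) := by rw [← Real.exp_nat_mul]
        _ ≤ _ := Real.exp_le_exp.2 (by linarith)
    have h2 : Real.log L ≤ Real.exp L := by
      have := Real.log_le_sub_one_of_pos (x := L) (by linarith)
      have := Real.add_one_le_exp L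
      linarith
    rw [div_le_iff₀ (Real.exp_pos _)]
    have h3 : (4:ℝ)^(z L) * Real.log L ≤ Real.exp (2 * L^3 + 2) * Real.exp L :=
      mul_le_mul h1 h2 (by linarith) (Real.exp_pos _).le
    have h5 : Real.exp (2 * L^3 + 2) * Real.exp L ≤ Real.exp (-L) * Real.exp (Real.exp L) := by
      rw [← Real.exp_add, ← Real.exp_add, Real.exp_le_exp]
      have : L^4 = L * L^3 := by ring
      have h3 : 0 ≤ L^3 := by positivity
      have h16 : 16 ≤ L^2 := by nlinarith
      have e3 : L^3 = L^2*L := by ring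
      have : 16 * L ≤ L^3 := by rw [e3]; exact mul_le_mul_of_nonneg_right h16 (by linarith)
      nlinarith
    linarith

lemma cond_up (A : ℝ) (hA : 0 ≤ A) : ∀ᶠ L : ℝ in atTop,
    (∀ p : ℕ, p.Prime → p ≤ zm L → 2048 * (p:ℝ)^5 ≤ Real.exp (L/4) ∧
      L / (8 * p) ≤ L / 4 / p - A - 15 * Real.log p) ∧
    (2 * ((⌈Real.exp (Real.exp (L/4) ^ 2)⌉₊ : ℕ):ℝ) + 2) * zm L ≤ Real.exp (Real.exp L) := by
  have hdiv4 : Tendsto (fun L : ℝ => L / 4) atTop atTop := tendsto_id.atTop_div_const (by norm_num)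
  have hdiv2 : Tendsto (fun L : ℝ => L / 2) atTop atTop := tendsto_id.atTop_div_const (by norm_num)
  filter_upwards [ev_log 1, ev_log (8 * (A+15)), hdiv4.eventually (ev_pow 6), hdiv2.eventually (ev_pow 2),
    eventually_ge_atTop (2048*4096)] with L hu huA h6 h2 hL
  have hL0 : 0 < L := by linarith
  have hz := zm_le hL0 hu
  constructor
  · intro p hp hpz
    have hp0 : (0:ℝ) < p := by exact_mod_cast hp.pos
    have hpz' : (p:ℝ) ≤ zm L := by exact_mod_cast hpz
    have hpL : (p:ℝ) ≤ L := hpz'.trans hz.2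
    constructor
    · refine le_trans ?_ h6
      have : (p:ℝ)^5 ≤ L^5 := pow_le_pow_left₀ hp0.le hpL 5
      have e : (L/4)^6 = L * L^5 / 4096 := by ring
      rw [e, le_div_iff₀ (by norm_num)]
      have : 0 ≤ L^5 := by positivity
      nlinarith
    · have h1 : Real.log p ≤ Real.log L := Real.log_le_log hp0 hpL
      have h3 : (Real.log L)^2 ≤ L / p := by
        have := hpz'.trans hz.1
        rw [le_div_iff₀ (by positivity)] at this
        rw [le_div_iff₀ hp0]; linarith
      have e1 : L / (8 * p) = (L/p) / 8 := by field_simp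
      have e2 : L / 4 / p = (L/p) / 4 := by field_simp
      rw [e1, e2]
      nlinarith
  · have e : Real.exp (L/4)^2 = Real.exp (L/2) := by rw [← Real.exp_nat_mul]; congr 1; push_cast; ring
    rw [e]
    set t := Real.exp (L/2) with ht
    have et : Real.exp L = t * t := by rw [ht, ← Real.exp_add]; congr 1; ring
    have hL2 : L ≤ t := by nlinarith
    have hc := (Nat.ceil_lt_add_one (Real.exp_pos t).le).le
    have ht1 : 1 ≤ Real.exp t := Real.one_le_exp (by linarith)
    have h3 : (2 * ((⌈Real.exp t⌉₊ : ℕ):ℝ) + 2) ≤ 6 * Real.exp t := by linarith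
    have hzt : (zm L : ℝ) ≤ Real.exp t := by
      have := Real.add_one_le_exp t
      linarith [hz.2]
    have h7 : (6:ℝ) ≤ Real.exp t := by
      have := Real.add_one_le_exp t
      linarith
    calc _ ≤ (6 * Real.exp t) * Real.exp t := mul_le_mul h3 hzt (by positivity) (by positivity)
      _ ≤ Real.exp t * Real.exp t * Real.exp t := by
        apply mul_le_mul_of_nonneg_right _ (by positivity)
        exact mul_le_mul_of_nonneg_right h7 (by positivity)
      _ = Real.exp (t + t + t) := by rw [Real.exp_add, Real.exp_add]
      _ ≤ Real.exp (Real.exp L) := by rw [Real.exp_le_exp, et]; nlinarith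
end CycNum

namespace CycNum

lemma zm_cube : ∀ᶠ L : ℝ in atTop, (zm L : ℝ) ≤ L^3 + 1 := by
  filter_upwards [ev_log 1, eventually_ge_atTop 1] with L hu hL
  have h := (zm_le (by linarith) hu).2
  have h1 : 1 ≤ L^2 := by nlinarith
  have e3 : L^3 = L^2*L := by ring
  have : L ≤ L^2 * L := le_mul_of_one_le_left (by linarith) h1
  linarith

lemma zp_cube : ∀ᶠ L : ℝ in atTop, (zp L : ℝ) ≤ L^3 + 1 := by
  filter_upwards [ev_log 1, eventually_ge_atTop 1] with L hu hL
  have h := (zp_le hL hu).2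
  have hl := Real.log_le_sub_one_of_pos (x := L) (by linarith)
  have h1 : (Real.log L)^2 ≤ L^2 := pow_le_pow_left₀ (by linarith) (by linarith) 2
  have e3 : L^3 = L*L^2 := by ring
  have : L * (Real.log L)^2 ≤ L * L^2 := mul_le_mul_of_nonneg_left h1 (by linarith)
  linarith

lemma up_bound : ∀ᶠ N : ℕ in atTop, (∑ n ∈ CS N, (n:ℝ)) * Real.log (Real.log (Real.log N)) / (N:ℝ)^2 ≤
    (fun L : ℝ => V (zm L) * Real.log L / 2 + 10 * 4^(zm L) * Real.log L / Real.exp (Real.exp L)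
      + 16 * (Real.log L)⁻¹) (Real.log (Real.log N)) := by
  obtain ⟨A, hA, hE⟩ := Ep_low
  have hLL : Tendsto (fun N : ℕ => Real.log (Real.log (N:ℝ))) atTop atTop :=
    Real.tendsto_log_atTop.comp (Real.tendsto_log_atTop.comp tendsto_natCast_atTop_atTop)
  have hL1 : Tendsto (fun N : ℕ => Real.log (N:ℝ)) atTop atTop :=
    Real.tendsto_log_atTop.comp tendsto_natCast_atTop_atTop
  filter_upwards [hLL.eventually (cond_up A hA), hLL.eventually (ev_log 1), hLL.eventually_ge_atTop 1,
    hL1.eventually_ge_atTop 1, eventually_gt_atTop 0] with N hc hu hL hl hN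
  have hNr : (0:ℝ) < N := by exact_mod_cast hN
  set L := Real.log (Real.log (N:ℝ)) with hLdef
  have hexp : Real.exp (Real.exp L) = N := by
    rw [hLdef, Real.exp_log (by linarith), Real.exp_log hNr]
  have hz := (zm_le (by linarith) hu).1
  rw [hexp] at hc
  have hF := F_up N ⌈Real.exp (Real.exp (L/4) ^ 2)⌉₊ (zm L) hN L (by linarith) (by
    intro p hp hpz
    have h1 := hc.1 p hp hpz
    have h2 := hE p hp (Real.exp (L/4)) h1.1 _ (Nat.le_ceil _)
    rw [Real.log_exp] at h2
    linarith [h1.2]) hc.2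
  rw [hexp]
  have hu0 : 0 < Real.log L := by linarith
  have hL0 : 0 < L := by linarith
  rw [div_le_iff₀ (by positivity)]
  refine (mul_le_mul_of_nonneg_right hF hu0.le).trans ?_
  have hk : 16 * (zm L:ℝ) * (N:ℝ)^2 / L * Real.log L ≤ 16 * (Real.log L)⁻¹ * (N:ℝ)^2 := by
    have h5 : (zm L:ℝ) / L * Real.log L ≤ (Real.log L)⁻¹ := by
      rw [le_div_iff₀ (by positivity)] at hz
      rw [div_mul_eq_mul_div, div_le_iff₀ hL0, inv_mul_eq_div, le_div_iff₀ hu0]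
      linarith
    calc 16 * (zm L:ℝ) * (N:ℝ)^2 / L * Real.log L = 16 * (N:ℝ)^2 * ((zm L:ℝ) / L * Real.log L) := by ring
      _ ≤ 16 * (N:ℝ)^2 * (Real.log L)⁻¹ := mul_le_mul_of_nonneg_left h5 (by positivity)
      _ = _ := by ring
  have e : (V (zm L) * Real.log L / 2 + 10 * 4 ^ zm L * Real.log L / N + 16 * (Real.log L)⁻¹) * (N:ℝ)^2
     = (V (zm L) * (N:ℝ)^2/2 + 10 * N * 4^(zm L)) * Real.log L + 16 * (Real.log L)⁻¹ * (N:ℝ)^2 := by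
    have : 10 * 4 ^ zm L * Real.log L / N * (N:ℝ)^2 = 10 * N * 4^(zm L) * Real.log L := by
      field_simp
    linear_combination this
  rw [e]
  linarith

lemma low_bound : ∃ C : ℝ, 0 < C ∧ ∀ᶠ N : ℕ in atTop, 
    (fun L : ℝ => V (zp L) * Real.log L / 2 - 10 * 4^(zp L) * Real.log L / Real.exp (Real.exp L)
      - (1 + C) * (Real.log L)⁻¹) (Real.log (Real.log N)) ≤
    (∑ n ∈ CS N, (n:ℝ)) * Real.log (Real.log (Real.log N)) / (N:ℝ)^2 := by
  obtain ⟨C, hC, hF⟩ := F_low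
  refine ⟨C, hC, ?_⟩
  have hLL : Tendsto (fun N : ℕ => Real.log (Real.log (N:ℝ))) atTop atTop :=
    Real.tendsto_log_atTop.comp (Real.tendsto_log_atTop.comp tendsto_natCast_atTop_atTop)
  have hL1 : Tendsto (fun N : ℕ => Real.log (N:ℝ)) atTop atTop :=
    Real.tendsto_log_atTop.comp tendsto_natCast_atTop_atTop
  filter_upwards [hLL.eventually (ev_log 1), hLL.eventually_ge_atTop 1,
    hL1.eventually_ge_atTop 1, eventually_ge_atTop 16] with N hu hL hl hN
  have hNr : (0:ℝ) < N := by exact_mod_cast (by omega : 0 < N)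
  have hF := hF N (zp (Real.log (Real.log (N:ℝ)))) hN
  set L := Real.log (Real.log (N:ℝ)) with hLdef
  have hexp : Real.exp (Real.exp L) = N := by
    rw [hLdef, Real.exp_log (by linarith), Real.exp_log hNr]
  have hz := (zp_le hL hu).1
  have hu0 : 0 < Real.log L := by linarith
  have hL0 : 0 < L := by linarith
  have hzp : (0:ℝ) < zp L := lt_of_lt_of_le (by positivity) hz
  have hF := hF (by exact_mod_cast hzp)
  rw [hexp]
  rw [le_div_iff₀ (by positivity)]
  refine le_trans ?_ (mul_le_mul_of_nonneg_right hF hu0.le)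
  have hk : (N:ℝ)^2 * (1 + C * L) / zp L * Real.log L ≤ (1 + C) * (Real.log L)⁻¹ * (N:ℝ)^2 := by
    have h5 : (1 + C * L) / zp L * Real.log L ≤ (1 + C) * (Real.log L)⁻¹ := by
      rw [div_mul_eq_mul_div, div_le_iff₀ hzp, ← div_eq_mul_inv, div_mul_eq_mul_div, le_div_iff₀ hu0]
      calc (1 + C * L) * Real.log L * Real.log L = (1 + C * L) * (Real.log L)^2 := by ring
        _ ≤ ((1 + C) * L) * (Real.log L)^2 := mul_le_mul_of_nonneg_right (by nlinarith) (by positivity)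
        _ = (1 + C) * (L * (Real.log L)^2) := by ring
        _ ≤ _ := mul_le_mul_of_nonneg_left hz (by positivity)
    calc (N:ℝ)^2 * (1 + C * L) / zp L * Real.log L = (N:ℝ)^2 * ((1 + C * L) / zp L * Real.log L) := by ring
      _ ≤ (N:ℝ)^2 * ((1 + C) * (Real.log L)⁻¹) := mul_le_mul_of_nonneg_left h5 (by positivity)
      _ = _ := by ring
  have e : (V (zp L) * Real.log L / 2 - 10 * 4 ^ zp L * Real.log L / N - (1 + C) * (Real.log L)⁻¹) * (N:ℝ)^2
     = (V (zp L) * (N:ℝ)^2/2 - 10 * N * 4^(zp L)) * Real.log L - (1 + C) * (Real.log L)⁻¹ * (N:ℝ)^2 := by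
    have : 10 * 4 ^ zp L * Real.log L / N * (N:ℝ)^2 = 10 * N * 4^(zp L) * Real.log L := by
      field_simp
    linear_combination -this
  rw [e]
  linarith

lemma nat_limit : Tendsto (fun N : ℕ => (∑ n ∈ CS N, (n:ℝ)) * Real.log (Real.log (Real.log N)) / (N:ℝ)^2) atTop
    (nhds (Real.exp (-Real.eulerMascheroniConstant) / 2)) := by
  obtain ⟨C, hC, hlow⟩ := low_bound
  have hLL : Tendsto (fun N : ℕ => Real.log (Real.log (N:ℝ))) atTop atTop :=
    Real.tendsto_log_atTop.comp (Real.tendsto_log_atTop.comp tendsto_natCast_atTop_atTop)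
  have hi : Tendsto (fun L : ℝ => (Real.log L)⁻¹) atTop (nhds 0) := Real.tendsto_log_atTop.inv_tendsto_atTop
  have h1 := ((V_zp.div_const 2).sub (four_term zp zp_cube)).sub (hi.const_mul (1 + C))
  have h2 := ((V_zm.div_const 2).add (four_term zm zm_cube)).add (hi.const_mul 16)
  simp only [mul_zero, sub_zero, add_zero] at h1 h2
  exact tendsto_of_tendsto_of_tendsto_of_le_of_le' (h1.comp hLL) (h2.comp hLL) hlow up_bound

lemma real_equiv : (fun x : ℝ => ∑ n ∈ CS ⌊x⌋₊, (n:ℝ)) ~[atTop] (fun x : ℝ => x ^ 2 / (2 * Real.exp Real.eulerMascheroniConstant * Real.log (Real.log (Real.log x)))) := by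
  have hfl : (fun x : ℝ => ((⌊x⌋₊:ℕ):ℝ)) ~[atTop] (fun x : ℝ => x) := by
    rw [isEquivalent_iff_tendsto_one (eventually_ne_atTop 0)]
    exact tendsto_nat_floor_div_atTop
  have ht1 := Real.tendsto_log_atTop
  have ht2 := ht1.comp ht1
  have ht3 := ht1.comp ht2
  have hl3 := ((hfl.log tendsto_id).log ht1).log ht2
  have hN := nat_limit.comp (tendsto_nat_floor_atTop (α := ℝ))
  have hc : Real.exp (-Real.eulerMascheroniConstant) / 2 ≠ 0 := by positivity
  have hN' := (isEquivalent_const_iff_tendsto hc).2 hN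
  have hfl3 : ∀ᶠ x : ℝ in atTop, Real.log (Real.log (Real.log ((⌊x⌋₊:ℕ):ℝ))) ≠ 0 :=
    (hl3.symm.tendsto_atTop ht3).eventually_ne_atTop 0
  have key := hN'.mul ((hfl.pow 2).div hl3)
  refine (key.congr_left ?_).congr_right ?_
  · filter_upwards [hfl3, eventually_ge_atTop 1] with x h3 hx
    have : ((⌊x⌋₊:ℕ):ℝ) ≠ 0 := by
      have := Nat.floor_pos.2 hx
      positivity
    simp only [Function.comp_apply, Pi.mul_apply, Pi.div_apply, Pi.pow_apply]
    field_simp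
  · filter_upwards [] with x
    simp only [Pi.mul_apply, Pi.inv_apply, Pi.pow_apply, Real.exp_neg, Function.const_apply, div_eq_mul_inv, mul_inv]
    ring
end CycNum


theorem cyclicSum_isEquivalent :
    (fun x : ℝ => cyclicSum x) ~[atTop]
      (fun x : ℝ => x ^ 2 /
        (2 * Real.exp Real.eulerMascheroniConstant *
          Real.log (Real.log (Real.log x)))) := by
  refine CycNum.real_equiv.congr_left (Filter.Eventually.of_forall fun x => ?_)
  unfold cyclicSum CycNum.CS
  refine Finset.sum_congr (Finset.filter_congr fun n _ => ?_) fun _ _ => rfl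
  rfl
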